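/- arXiv:1712.08371 — 2 statements merged into one kernel-verified Lean document; each statement's English description precedes it below -/
import Mathlib

section
/- Let a, b be real numbers with a not an integer, b not a nonpositive integer, and b − a not a nonpositive integer. For x > 0 set m₀(x) := ⌊x + 2a − b⌋ and α(x) := m₀(x) − x − 2a + b ∈ (−1, 0]. Then as x → +∞, the optimally truncated remainder F(x) := (1/Γ(b)) · ₁F₁(a; b; x) − (x^{a−b} e^x / Γ(a)) ∑_{j=0}^{m₀(x)−1} (b−a)_j (1−a)_j / (j! x^j) satisfies F(x) = (x^{−a}/Γ(b−a)) · [ cos(πa) + (2 sin(πa)/√(2πx)) · (2/3 − α(x)) ] + O(x^{−a−1}). -/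
open Complex Filter Asymptotics

/-- The Kummer confluent hypergeometric function `₁F₁(a; b; z)`,
defined by its everywhere convergent power series. -/
noncomputable def kummer (a b z : ℂ) : ℂ :=
  ∑' n : ℕ, ((ascPochhammer ℂ n).eval a / (ascPochhammer ℂ n).eval b) * z ^ n / n.factorial

/-!
For `b = a + 1` the truncated remainder `R(a, b; N, x)` is `x ^ (-a)` times
`cos πa + (sin πa / π) T(N - a, x)` for an explicit terminant `T`. Stirling's formula
controls `∂T/∂x (s, x) = T(s, x) - T(s + 1, x)`. Hence the error of the approximation
`T(s, x) ≈ √(2π/x) (x - s - 1/3)` changes by `O(x⁻²)` from `(s, x)` to `(s + 1, x + 1)`, and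
telescopes to `O(1/x)`, uniformly for bounded `x - s`.

If `a > 0`, then `R(a, a + 1 - μ; N, x)` is, up to Gamma factors, the Mellin transform at `μ` of
`v ↦ exp (-v) R(a, a + 1; N, x + v)`: for `0 < Re μ < 1` by Fubini, and for all `Re μ > 0` by
analytic continuation. Integrating the expansion for `b = a + 1` settles every `b < a + 1`.

The remaining parameters are reached by lowering `a` with the contiguous relation
`(b - a) R(a - 1, b; N) = R(a, b - 1; N + 2) - x R(a, b; N + 2) + (1 - a) R(a, b; N + 1)`,
whose middle term dominates. Since it shifts `N`, the expansion is proved for every truncation index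
within bounded distance of `x`.
-/

namespace KummerStokes

open Finset MeasureTheory Topology

/-! ### Ratios of factorials -/

/-- `m! m ^ j / (m + j)!`, the size of the `j`-th term after the largest term of the series of
`exp m`, relative to that largest term. -/
noncomputable def risingRatio (m j : ℕ) : ℝ := (m : ℝ) ^ j / (m + 1).ascFactorial j

/-- `m! / ((m - j)! m ^ j)`, the size of the `j`-th term before the largest term of the series of
`exp m`, relative to that largest term; it vanishes for `m < j`. -/
noncomputable def fallingRatio (m j : ℕ) : ℝ := m.descFactorial j / (m : ℝ) ^ j

lemma risingRatio_succ (m j : ℕ) :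
    risingRatio m (j + 1) = risingRatio m j * (m / (m + j + 1)) := by
  simp only [risingRatio, Nat.ascFactorial_succ]
  push_cast
  field_simp
  ring

lemma fallingRatio_succ {m : ℕ} (hm : m ≠ 0) (j : ℕ) :
    fallingRatio m (j + 1) = fallingRatio m j * (1 - j / m) := by
  rcases le_or_gt j m with hjm | hmj
  · simp only [fallingRatio, Nat.descFactorial_succ]
    push_cast [hjm]
    field_simp
    ring
  · simp [fallingRatio, Nat.descFactorial_of_lt hmj]

lemma risingRatio_nonneg (m j : ℕ) : 0 ≤ risingRatio m j := by unfold risingRatio; positivity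

lemma fallingRatio_nonneg (m j : ℕ) : 0 ≤ fallingRatio m j := by unfold fallingRatio; positivity

lemma fallingRatio_le_one (m j : ℕ) : fallingRatio m j ≤ 1 :=
  div_le_one_of_le₀ (by exact_mod_cast Nat.descFactorial_le_pow m j) (by positivity)

lemma tendsto_risingRatio (j : ℕ) : Tendsto (risingRatio · j) atTop (𝓝 1) := by
  induction j with
  | zero => simp [risingRatio]
  | succ j ih =>
    have hfactor : Tendsto (fun m : ℕ => (m : ℝ) / (m + (j + 1))) atTop (𝓝 1) :=
      tendsto_natCast_div_add_atTop _
    simpa only [risingRatio_succ, add_assoc, one_mul] using ih.mul hfactor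

lemma tendsto_fallingRatio (j : ℕ) : Tendsto (fallingRatio · j) atTop (𝓝 1) := by
  induction j with
  | zero => simp [fallingRatio]
  | succ j ih =>
    have hfactor : Tendsto (fun m : ℕ => 1 - (j : ℝ) / m) atTop (𝓝 1) := by
      simpa using tendsto_const_nhds.sub (tendsto_const_div_atTop_nhds_zero_nat (j : ℝ))
    refine Tendsto.congr' ?_ (by simpa only [one_mul] using ih.mul hfactor)
    filter_upwards [eventually_ne_atTop 0] with m hm
    exact (fallingRatio_succ hm j).symm

lemma risingRatio_mul_sq_le_one {m : ℕ} (hm : m ≠ 0) (j : ℕ) :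
    risingRatio m j * (1 + j ^ 2 / (4 * m)) ^ 2 ≤ 1 := by
  induction j with
  | zero => simp [risingRatio]
  | succ j ih =>
    have hm' : (1 : ℝ) ≤ m := by exact_mod_cast Nat.one_le_iff_ne_zero.2 hm
    have hstep : (m / (m + j + 1) : ℝ) * (1 + ((j + 1 : ℕ) : ℝ) ^ 2 / (4 * m)) ^ 2
        ≤ (1 + j ^ 2 / (4 * m)) ^ 2 := by
      have hcubic : 0 ≤ (8 * m + (4 * j ^ 3 + 2 * j ^ 2 - 4 * j - 1) : ℝ) := by
        nlinarith [mul_nonneg (Nat.cast_nonneg (α := ℝ) j) (sq_nonneg ((j : ℝ) - 1))]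
      rw [div_mul_eq_mul_div, div_le_iff₀ (by positivity)]
      push_cast
      field_simp
      nlinarith [mul_nonneg (Nat.cast_nonneg (α := ℝ) m) hcubic,
        (by positivity : 0 ≤ ((j : ℝ) + 1) * j ^ 4)]
    calc risingRatio m (j + 1) * (1 + ((j + 1 : ℕ) : ℝ) ^ 2 / (4 * m)) ^ 2
        = risingRatio m j * ((m / (m + j + 1)) * (1 + ((j + 1 : ℕ) : ℝ) ^ 2 / (4 * m)) ^ 2) := by
          rw [risingRatio_succ, mul_assoc]
      _ ≤ risingRatio m j * (1 + j ^ 2 / (4 * m)) ^ 2 :=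
          mul_le_mul_of_nonneg_left hstep (risingRatio_nonneg m j)
      _ ≤ 1 := ih

lemma fallingRatio_succ_le_risingRatio {m : ℕ} (hm : m ≠ 0) (j : ℕ) :
    fallingRatio m (j + 1) ≤ risingRatio m j := by
  induction j with
  | zero => simp [fallingRatio, risingRatio, hm]
  | succ j ih =>
    have hm' : (0 : ℝ) < m := by exact_mod_cast Nat.pos_of_ne_zero hm
    have hfactor : (1 - (j + 1 : ℕ) / m : ℝ) ≤ m / (m + j + 1) := by
      rw [le_div_iff₀ (by positivity)]
      push_cast
      field_simp
      nlinarith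
    calc fallingRatio m (j + 2) = fallingRatio m (j + 1) * (1 - (j + 1 : ℕ) / m) :=
          fallingRatio_succ hm (j + 1)
      _ ≤ fallingRatio m (j + 1) * (m / (m + j + 1)) :=
          mul_le_mul_of_nonneg_left hfactor (fallingRatio_nonneg m _)
      _ ≤ risingRatio m j * (m / (m + j + 1)) := by gcongr
      _ = risingRatio m (j + 1) := (risingRatio_succ m j).symm

lemma risingRatio_mul_le_fallingRatio_succ {m : ℕ} (hm : m ≠ 0) (j : ℕ) :
    risingRatio m j * (1 - j ^ 3 / m ^ 2) ≤ fallingRatio m (j + 1) := by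
  induction j with
  | zero => simp [fallingRatio, risingRatio, hm]
  | succ j ih =>
    have hm' : (0 : ℝ) < m := by exact_mod_cast Nat.pos_of_ne_zero hm
    rcases lt_or_ge m (j + 1) with hlt | hle
    · have hlt' : (m : ℝ) ≤ (j + 1 : ℕ) := by exact_mod_cast hlt.le
      have hcube : (m : ℝ) ^ 2 ≤ ((j + 1 : ℕ) : ℝ) ^ 3 := by
        calc (m : ℝ) ^ 2 ≤ ((j + 1 : ℕ) : ℝ) ^ 2 := by gcongr
          _ ≤ ((j + 1 : ℕ) : ℝ) ^ 3 := pow_le_pow_right₀ (by simp) (by norm_num)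
      exact (mul_nonpos_of_nonneg_of_nonpos (risingRatio_nonneg m _)
        (sub_nonpos.2 ((one_le_div (by positivity)).2 hcube))).trans (fallingRatio_nonneg m _)
    · have hle' : ((j + 1 : ℕ) : ℝ) / m ≤ 1 := (div_le_one hm').2 (by exact_mod_cast hle)
      have hfactor : (m / (m + j + 1) : ℝ) * (1 - ((j + 1 : ℕ) : ℝ) ^ 3 / m ^ 2)
          ≤ (1 - j ^ 3 / m ^ 2) * (1 - (j + 1 : ℕ) / m) := by
        rw [div_mul_eq_mul_div, div_le_iff₀ (by positivity)]
        push_cast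
        field_simp
        nlinarith [(by positivity : 0 ≤ (m : ℝ) ^ 2 * (2 * j ^ 2 + j)),
          (by positivity : 0 ≤ (j : ℝ) ^ 3 * (j + 1) ^ 2)]
      calc risingRatio m (j + 1) * (1 - ((j + 1 : ℕ) : ℝ) ^ 3 / m ^ 2)
          = risingRatio m j * ((m / (m + j + 1)) * (1 - ((j + 1 : ℕ) : ℝ) ^ 3 / m ^ 2)) := by
            rw [risingRatio_succ, mul_assoc]
        _ ≤ risingRatio m j * ((1 - j ^ 3 / m ^ 2) * (1 - (j + 1 : ℕ) / m)) :=
            mul_le_mul_of_nonneg_left hfactor (risingRatio_nonneg m j)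
        _ = (risingRatio m j * (1 - j ^ 3 / m ^ 2)) * (1 - (j + 1 : ℕ) / m) := by rw [mul_assoc]
        _ ≤ fallingRatio m (j + 1) * (1 - (j + 1 : ℕ) / m) :=
            mul_le_mul_of_nonneg_right ih (sub_nonneg.2 hle')
        _ = fallingRatio m (j + 2) := (fallingRatio_succ hm (j + 1)).symm

lemma abs_risingRatio_sub_fallingRatio_le {m : ℕ} (hm : m ≠ 0) (j : ℕ) :
    |risingRatio m (j + 1) - fallingRatio m (j + 1)| ≤ 40 / (j + 1) := by
  have hm' : (1 : ℝ) ≤ m := by exact_mod_cast Nat.one_le_iff_ne_zero.2 hm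
  have hupper := fallingRatio_succ_le_risingRatio hm j
  have hlower := risingRatio_mul_le_fallingRatio_succ hm j
  have hdrop : risingRatio m j - risingRatio m (j + 1) ≤ risingRatio m j * ((j + 1) / m) := by
    rw [risingRatio_succ, ← mul_one_sub]
    refine mul_le_mul_of_nonneg_left ?_ (risingRatio_nonneg m j)
    rw [one_sub_div (by positivity), add_assoc, add_sub_cancel_left]
    gcongr
    linarith [Nat.cast_nonneg (α := ℝ) j]
  have hmono : risingRatio m (j + 1) ≤ risingRatio m j := by
    rw [risingRatio_succ]
    exact mul_le_of_le_one_right (risingRatio_nonneg m j)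
      (div_le_one_of_le₀ (by linarith [Nat.cast_nonneg (α := ℝ) j]) (by positivity))
  have hsum : |risingRatio m (j + 1) - fallingRatio m (j + 1)|
      ≤ risingRatio m j * (j ^ 3 / m ^ 2 + (j + 1) / m) := by
    rw [abs_le, mul_add]
    have hcubic : 0 ≤ risingRatio m j * (j ^ 3 / m ^ 2) :=
      mul_nonneg (risingRatio_nonneg m j) (by positivity)
    rw [mul_one_sub] at hlower
    constructor <;> linarith
  have hweight : (j ^ 3 / m ^ 2 + (j + 1) / m : ℝ) * (j + 1) ≤ 40 * (1 + j ^ 2 / (4 * m)) ^ 2 := by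
    have hpow : (j : ℝ) ^ 3 ≤ j ^ 4 := by
      rcases j.eq_zero_or_pos with rfl | hj
      · simp
      · exact pow_le_pow_right₀ (by exact_mod_cast hj) (by norm_num)
    field_simp
    nlinarith [mul_nonneg (sub_nonneg.2 hm') (zero_le_one.trans hm'),
      mul_nonneg (sq_nonneg ((j : ℝ) - 1)) (zero_le_one.trans hm')]
  rw [le_div_iff₀ (by positivity)]
  calc |risingRatio m (j + 1) - fallingRatio m (j + 1)| * (j + 1)
      ≤ risingRatio m j * (j ^ 3 / m ^ 2 + (j + 1) / m) * (j + 1) := by gcongr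
    _ = risingRatio m j * ((j ^ 3 / m ^ 2 + (j + 1) / m) * (j + 1)) := mul_assoc _ _ _
    _ ≤ risingRatio m j * (40 * (1 + j ^ 2 / (4 * m)) ^ 2) :=
        mul_le_mul_of_nonneg_left hweight (risingRatio_nonneg m j)
    _ = 40 * (risingRatio m j * (1 + j ^ 2 / (4 * m)) ^ 2) := by ring
    _ ≤ 40 := by linarith [risingRatio_mul_sq_le_one hm j]

/-! ### The terminant -/

/-- `∑ yᵏ / (k! (k - s))`, an incomplete gamma function up to elementary factors. At `s ∈ ℕ` the
singular term is dropped. -/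
noncomputable def shiftedExpSeries (s y : ℝ) : ℝ := ∑' k : ℕ, y ^ k / (k.factorial * (k - s))

lemma hasSum_real_exp (y : ℝ) : HasSum (fun k : ℕ => y ^ k / k.factorial) (Real.exp y) := by
  simpa only [← Real.exp_eq_exp_ℝ] using NormedSpace.expSeries_div_hasSum_exp y

lemma exists_forall_abs_natCast_div_sub_le (s : ℝ) : ∃ C, ∀ k : ℕ, |k / (k - s)| ≤ C := by
  have hlim : Tendsto (fun k : ℕ => (k : ℝ) / (k - s)) atTop (𝓝 1) := by
    simpa only [sub_eq_add_neg] using tendsto_natCast_div_add_atTop (-s)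
  obtain ⟨C, hC⟩ := hlim.abs.bddAbove_range
  exact ⟨C, fun k => hC ⟨k, rfl⟩⟩

lemma summable_shiftedExpSeries (s y : ℝ) :
    Summable fun k : ℕ => y ^ k / (k.factorial * (k - s)) := by
  have hlim : Tendsto (fun k : ℕ => ((k : ℝ) - s)⁻¹) atTop (𝓝 0) :=
    tendsto_inv_atTop_zero.comp
      (tendsto_atTop_add_const_right _ (-s) tendsto_natCast_atTop_atTop)
  refine summable_of_isBigO_nat (Real.summable_pow_div_factorial y) ?_
  simpa only [mul_one, ← div_eq_mul_inv, div_div] using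
    (isBigO_refl (fun k : ℕ => y ^ k / k.factorial) atTop).mul (hlim.isBigO_one ℝ)

lemma tsum_natCast_mul_shiftedExpSeries {s : ℝ} (hs : ∀ k : ℕ, s ≠ k) (y : ℝ) :
    ∑' k : ℕ, k * (y ^ k / (k.factorial * (k - s))) = Real.exp y + s * shiftedExpSeries s y := by
  refine (((hasSum_real_exp y).add
    ((summable_shiftedExpSeries s y).hasSum.mul_left s)).congr_fun fun k => ?_).tsum_eq
  have hks : (k : ℝ) - s ≠ 0 := sub_ne_zero.2 (hs k).symm
  field_simp
  ring

lemma hasDerivAt_shiftedExpSeries {s : ℝ} (hs : ∀ k : ℕ, s ≠ k) {y : ℝ} (hy : y ≠ 0) :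
    HasDerivAt (shiftedExpSeries s) ((Real.exp y + s * shiftedExpSeries s y) / y) y := by
  obtain ⟨C, hC⟩ := exists_forall_abs_natCast_div_sub_le s
  have hderiv := hasDerivAt_tsum_of_isPreconnected
    (g := fun (k : ℕ) (t : ℝ) => t ^ k / (k.factorial * (k - s)))
    (g' := fun (k : ℕ) (t : ℝ) => k * t ^ (k - 1) / (k.factorial * (k - s)))
    ((Real.summable_pow_div_factorial (|y| + 1)).mul_right C) Metric.isOpen_ball
    (convex_ball (0 : ℝ) (|y| + 1)).isPreconnected
    (fun k t _ => (hasDerivAt_pow k t).div_const _) (fun k t ht => ?_)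
    (Metric.mem_ball_self (by positivity)) (summable_shiftedExpSeries s 0)
    (show y ∈ Metric.ball 0 (|y| + 1) by simp)
  · refine hderiv.congr_deriv (Eq.symm ?_)
    rw [div_eq_iff hy, ← tsum_natCast_mul_shiftedExpSeries hs, ← tsum_mul_right]
    refine tsum_congr fun k => ?_
    cases k with
    | zero => simp
    | succ k =>
      simp only [Nat.cast_add, Nat.cast_one, pow_succ, Nat.add_sub_cancel]
      ring
  · have ht' : |t| ≤ |y| + 1 := by simpa using (Metric.mem_ball.1 ht).le
    calc ‖k * t ^ (k - 1) / (k.factorial * (k - s))‖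
        = |t| ^ (k - 1) / k.factorial * |k / (k - s)| := by
          simp only [Real.norm_eq_abs, abs_div, abs_mul, abs_pow, Nat.abs_cast]; ring
      _ ≤ (|y| + 1) ^ k / k.factorial * C := by
          gcongr
          · exact (pow_le_pow_left₀ (abs_nonneg t) ht' _).trans
              (pow_le_pow_right₀ (by linarith [abs_nonneg y]) (Nat.sub_le k 1))
          · exact hC k

lemma add_one_mul_shiftedExpSeries_add_one {s : ℝ} (hs : ∀ k : ℕ, s + 1 ≠ k) (y : ℝ) :
    (s + 1) * shiftedExpSeries (s + 1) y = y * shiftedExpSeries s y - Real.exp y := by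
  have hshift : HasSum (fun k : ℕ => k * (y ^ k / (k.factorial * (k - (s + 1)))))
      (y * shiftedExpSeries s y) := by
    rw [← hasSum_nat_add_iff' 1]
    simp only [sum_range_one, Nat.cast_zero, zero_mul, sub_zero]
    refine ((summable_shiftedExpSeries s y).hasSum.mul_left y).congr_fun fun k => ?_
    rw [Nat.factorial_succ]
    push_cast
    rw [add_sub_add_right_eq_sub, pow_succ]
    field_simp
  linarith [hshift.tsum_eq, tsum_natCast_mul_shiftedExpSeries hs y]

/-- The terminant of the divergent tail: for non-integer `s > -1` and `y > 0` this is the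
principal value of `∫₀^∞ e^{y(1-u)} uˢ / (1 - u) du`. -/
noncomputable def terminant (s y : ℝ) : ℝ :=
  Real.Gamma (s + 1) * y ^ (-s) * shiftedExpSeries s y + Real.pi * Real.cot (Real.pi * s)

/-- The derivative of the terminant in `y`, which is also `terminant s y - terminant (s + 1) y`. -/
noncomputable def terminantSlope (s y : ℝ) : ℝ :=
  Real.exp y * Real.Gamma (s + 1) * y ^ (-s - 1)

lemma hasDerivAt_terminant {s : ℝ} (hs : ∀ k : ℕ, s ≠ k) {y : ℝ} (hy : 0 < y) :
    HasDerivAt (terminant s) (terminantSlope s y) y := by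
  have hpow : HasDerivAt (fun t : ℝ => Real.Gamma (s + 1) * t ^ (-s))
      (Real.Gamma (s + 1) * (-s * y ^ (-s - 1))) y :=
    (Real.hasDerivAt_rpow_const (Or.inl hy.ne')).const_mul _
  refine ((hpow.mul (hasDerivAt_shiftedExpSeries hs hy.ne')).add_const _).congr_deriv ?_
  rw [terminantSlope, Real.rpow_sub_one hy.ne']
  field_simp
  ring

lemma periodic_cot_pi_mul : Function.Periodic (fun s : ℝ => Real.cot (Real.pi * s)) 1 := fun s => by
  simp only [mul_add, mul_one, Real.cot_eq_cos_div_sin, Real.cos_add_pi, Real.sin_add_pi,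
    neg_div_neg_eq]

lemma terminant_sub_terminant_add_one {s : ℝ} (hs : ∀ k : ℤ, s ≠ k) {y : ℝ} (hy : 0 < y) :
    terminant s y - terminant (s + 1) y = terminantSlope s y := by
  have hs1 : s + 1 ≠ 0 := fun h => hs (-1) (by push_cast; linarith)
  have hcot : Real.cot (Real.pi * (s + 1)) = Real.cot (Real.pi * s) := periodic_cot_pi_mul s
  have hseries := add_one_mul_shiftedExpSeries_add_one (s := s)
    (fun k h => hs (k - 1) (by push_cast; linarith)) y
  rw [terminant, terminant, terminantSlope, hcot, Real.Gamma_add_one hs1, neg_add',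
    Real.rpow_sub_one hy.ne']
  field_simp
  linear_combination -(Real.Gamma (s + 1) * y ^ (-s)) * hseries

lemma factorial_div_mul_shiftedExpSeries_term_add {m : ℕ} (hm : m ≠ 0) (θ : ℝ) (j : ℕ) :
    (m.factorial / (m : ℝ) ^ m)
        * ((m : ℝ) ^ (j + m) / ((j + m).factorial * ((j + m : ℕ) - (θ + m))))
      = risingRatio m j / (j - θ) := by
  have hfactorial : ((j + m).factorial : ℝ) = m.factorial * (m + 1).ascFactorial j := by
    rw [add_comm j m, ← Nat.factorial_mul_ascFactorial]; push_cast; rfl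
  rw [hfactorial, risingRatio, pow_add]
  push_cast
  rw [add_sub_add_right_eq_sub]
  have : (m : ℝ) ≠ 0 := by exact_mod_cast hm
  field_simp

lemma factorial_div_mul_shiftedExpSeries_term_sub {m i : ℕ} (hi : i < m) (θ : ℝ) :
    (m.factorial / (m : ℝ) ^ m) * ((m : ℝ) ^ (m - 1 - i) /
        ((m - 1 - i).factorial * ((m - 1 - i : ℕ) - (θ + m))))
      = -(fallingRatio m (i + 1) / (i + 1 + θ)) := by
  obtain ⟨k, rfl⟩ : ∃ k, m = k + (i + 1) := ⟨m - (i + 1), by omega⟩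
  have hk : k + (i + 1) - 1 - i = k := by omega
  have hfactorial : ((k + (i + 1)).factorial : ℝ)
      = k.factorial * (k + (i + 1)).descFactorial (i + 1) := by
    rw [← Nat.factorial_mul_descFactorial (Nat.le_add_left (i + 1) k), Nat.add_sub_cancel]
    push_cast; rfl
  have hdenom : (k - (θ + (k + (i + 1) : ℕ)) : ℝ) = -(i + 1 + θ) := by push_cast; ring
  rw [hk, hfactorial, hdenom, fallingRatio, pow_add _ k]
  have : ((k + (i + 1) : ℕ) : ℝ) ≠ 0 := by positivity
  field_simp

lemma factorial_div_mul_shiftedExpSeries_natCast {m : ℕ} (hm : m ≠ 0) (θ : ℝ) :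
    (m.factorial / (m : ℝ) ^ m) * shiftedExpSeries (θ + m) m
      = -(1 / θ) + ∑' i : ℕ, (risingRatio m (i + 1) / (i + 1 - θ)
          - fallingRatio m (i + 1) / (i + 1 + θ)) := by
  have hsummable := (summable_shiftedExpSeries (θ + m) m).mul_left (m.factorial / (m : ℝ) ^ m)
  have hrising : Summable fun j : ℕ => risingRatio m j / (j - θ) := by
    simpa only [factorial_div_mul_shiftedExpSeries_term_add hm]
      using (summable_nat_add_iff m).2 hsummable
  have hfalling : HasSum (fun i : ℕ => fallingRatio m (i + 1) / (i + 1 + θ))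
      (∑ i ∈ range m, fallingRatio m (i + 1) / (i + 1 + θ)) :=
    hasSum_sum_of_ne_finset_zero fun i hi => by
      rw [fallingRatio, Nat.descFactorial_of_lt (by simpa [Nat.lt_succ_iff] using hi)]; simp
  have hrising' : Summable fun i : ℕ => risingRatio m (i + 1) / (i + 1 - θ) := by
    simpa using (summable_nat_add_iff 1).2 hrising
  rw [hrising'.tsum_sub hfalling.summable, hfalling.tsum_eq, shiftedExpSeries, ← tsum_mul_left,
    ← hsummable.sum_add_tsum_nat_add m, ← sum_range_reflect,
    sum_congr rfl fun i hi => factorial_div_mul_shiftedExpSeries_term_sub (mem_range.1 hi) θ]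
  simp only [factorial_div_mul_shiftedExpSeries_term_add hm]
  rw [hrising.tsum_eq_zero_add, sum_neg_distrib]
  simp only [risingRatio, pow_zero, Nat.ascFactorial_zero, Nat.cast_one, div_one, Nat.cast_zero,
    zero_sub, one_div, inv_neg, Nat.cast_add]
  ring

lemma exists_forall_abs_ratio_difference_le {θ : ℝ} (hθ : ∀ k : ℤ, θ ≠ k) :
    ∃ C, ∀ m : ℕ, m ≠ 0 → ∀ i : ℕ, |risingRatio m (i + 1) / (i + 1 - θ)
          - fallingRatio m (i + 1) / (i + 1 + θ)| ≤ C / (i + 1) ^ 2 := by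
  obtain ⟨A, hA⟩ := exists_forall_abs_natCast_div_sub_le θ
  obtain ⟨B, hB⟩ := exists_forall_abs_natCast_div_sub_le (-θ)
  refine ⟨40 * A + A * (B * (2 * |θ|)), fun m hm i => ?_⟩
  have hminus : |(i + 1) / (i + 1 - θ)| ≤ A := by simpa using hA (i + 1)
  have hplus : |(i + 1) / (i + 1 + θ)| ≤ B := by simpa using hB (i + 1)
  have hminus_ne : (i + 1 - θ : ℝ) ≠ 0 := fun h => hθ (i + 1) (by push_cast; linarith)
  have hplus_ne : (i + 1 + θ : ℝ) ≠ 0 := fun h => hθ (-(i + 1)) (by push_cast; linarith)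
  have hdiff := abs_risingRatio_sub_fallingRatio_le hm i
  rw [le_div_iff₀ (by positivity)] at hdiff
  rw [le_div_iff₀ (by positivity)]
  have hi : |(i + 1 : ℝ)| = i + 1 := abs_of_nonneg (by positivity)
  have hfall : |fallingRatio m (i + 1)| ≤ 1 := by
    rw [abs_of_nonneg (fallingRatio_nonneg m _)]; exact fallingRatio_le_one m _
  calc |risingRatio m (i + 1) / (i + 1 - θ) - fallingRatio m (i + 1) / (i + 1 + θ)| * (i + 1) ^ 2
      = |(risingRatio m (i + 1) - fallingRatio m (i + 1)) * (i + 1) * ((i + 1) / (i + 1 - θ))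
          + fallingRatio m (i + 1) *
            ((i + 1) / (i + 1 - θ) * ((i + 1) / (i + 1 + θ) * (2 * θ)))| := by
        rw [← abs_sq ((i : ℝ) + 1), ← abs_mul]
        congr 1
        field_simp
        ring
    _ ≤ |risingRatio m (i + 1) - fallingRatio m (i + 1)| * (i + 1) * |(i + 1) / (i + 1 - θ)|
          + |fallingRatio m (i + 1)| *
            (|(i + 1) / (i + 1 - θ)| * (|(i + 1) / (i + 1 + θ)| * (2 * |θ|))) := by
        refine (abs_add_le _ _).trans_eq ?_
        simp only [abs_mul, hi, abs_two]
    _ ≤ 40 * A + 1 * (A * (B * (2 * |θ|))) := by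
        gcongr
        exact (abs_nonneg _).trans hminus
    _ = 40 * A + A * (B * (2 * |θ|)) := by rw [one_mul]

lemma inv_add_tsum_eq_pi_mul_cot {θ : ℝ} (hθ : ∀ k : ℤ, θ ≠ k) :
    1 / θ + ∑' i : ℕ, (1 / (θ - (i + 1)) + 1 / (θ + (i + 1))) =
      Real.pi * Real.cot (Real.pi * θ) := by
  have hcompl : (θ : ℂ) ∈ integerComplement :=
    Complex.mem_integerComplement_iff.2 fun ⟨k, hk⟩ => hθ k (by exact_mod_cast hk.symm)
  have hcot := cot_series_rep' hcompl
  rw [sub_eq_iff_eq_add'] at hcot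
  exact_mod_cast hcot.symm

lemma tendsto_factorial_div_mul_shiftedExpSeries {θ : ℝ} (hθ : ∀ k : ℤ, θ ≠ k) :
    Tendsto (fun m : ℕ => (m.factorial / (m : ℝ) ^ m) * shiftedExpSeries (θ + m) m) atTop
      (𝓝 (-(Real.pi * Real.cot (Real.pi * θ)))) := by
  obtain ⟨C, hC⟩ := exists_forall_abs_ratio_difference_le hθ
  have hsummable : Summable fun i : ℕ => C / ((i : ℝ) + 1) ^ 2 := by
    simpa [div_eq_mul_inv] using
      (((summable_nat_add_iff 1).2 (Real.summable_nat_pow_inv.2 one_lt_two)).mul_left C)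
  have hlim : Tendsto (fun m : ℕ => ∑' i : ℕ, (risingRatio m (i + 1) / (i + 1 - θ)
      - fallingRatio m (i + 1) / (i + 1 + θ))) atTop
      (𝓝 (∑' i : ℕ, (1 / (i + 1 - θ) - 1 / (i + 1 + θ)))) :=
    tendsto_tsum_of_dominated_convergence hsummable
      (fun i => ((tendsto_risingRatio _).div_const _).sub ((tendsto_fallingRatio _).div_const _))
      (by filter_upwards [eventually_ne_atTop 0] with m hm i using hC m hm i)
  have hvalue : -(1 / θ) + ∑' i : ℕ, (1 / (i + 1 - θ) - 1 / (i + 1 + θ))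
      = -(Real.pi * Real.cot (Real.pi * θ)) := by
    rw [← inv_add_tsum_eq_pi_mul_cot hθ, neg_add, ← tsum_neg]
    congr! 3 with i
    rw [neg_add, ← sub_eq_add_neg, ← div_neg, neg_sub, add_comm θ]
  rw [← hvalue]
  refine (hlim.const_add _).congr' ?_
  filter_upwards [eventually_ne_atTop 0] with m hm
  exact (factorial_div_mul_shiftedExpSeries_natCast hm θ).symm

lemma tendsto_Gamma_add_natCast_div {s : ℝ} (hs : ∀ k : ℕ, s ≠ -k) :
    Tendsto (fun m : ℕ => Real.Gamma (s + m + 1) / (m.factorial * (m : ℝ) ^ s)) atTop (𝓝 1) := by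
  have hGamma : Real.Gamma s ≠ 0 := Real.Gamma_ne_zero hs
  have hprod (m : ℕ) : Real.Gamma (s + m + 1)
      = Real.Gamma s * ∏ j ∈ range (m + 1), (s + j) := by
    induction m with
    | zero => simp [Real.Gamma_add_one (by simpa using hs 0), mul_comm]
    | succ m ih =>
      have hne : s + m + 1 ≠ 0 := fun h => hs (m + 1) (by push_cast; linarith)
      rw [prod_range_succ, ← mul_assoc, ← ih]
      push_cast
      rw [← add_assoc, Real.Gamma_add_one hne, mul_comm]
  have hlim := ((Real.GammaSeq_tendsto_Gamma s).div_const (Real.Gamma s)).inv₀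
    (by rw [div_self hGamma]; exact one_ne_zero)
  rw [div_self hGamma, inv_one] at hlim
  refine hlim.congr fun m => ?_
  rw [Real.GammaSeq, hprod, div_div, inv_div]
  ring

lemma tendsto_terminant_add_natCast {θ : ℝ} (hθ : ∀ k : ℤ, θ ≠ k) :
    Tendsto (fun m : ℕ => terminant (θ + m) m) atTop (𝓝 0) := by
  have hlim := ((tendsto_Gamma_add_natCast_div
    (fun k h => hθ (-k) (by push_cast; exact h))).mul
      (tendsto_factorial_div_mul_shiftedExpSeries hθ)).add_const
        (Real.pi * Real.cot (Real.pi * θ))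
  rw [one_mul, neg_add_cancel] at hlim
  refine hlim.congr' ?_
  filter_upwards [eventually_ne_atTop 0] with m hm
  have hm' : (0 : ℝ) < m := by exact_mod_cast Nat.pos_of_ne_zero hm
  have hcot : Real.cot (Real.pi * (θ + m)) = Real.cot (Real.pi * θ) := by
    simpa using periodic_cot_pi_mul.nat_mul m θ
  rw [terminant, hcot, neg_add, Real.rpow_add hm', Real.rpow_neg hm'.le, Real.rpow_neg hm'.le,
    Real.rpow_natCast]
  field_simp

/-! ### Uniform asymptotics by telescoping -/

lemma abs_le_of_tendsto_zero_of_abs_sub_succ_le {u : ℕ → ℝ} {C x : ℝ} (hx : 1 ≤ x)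
    (hlim : Tendsto u atTop (𝓝 0)) (hdiff : ∀ m, |u m - u (m + 1)| ≤ C / (x + m) ^ 2) :
    |u 0| ≤ 2 * C / x := by
  have hC : 0 ≤ C := by
    have hfirst := (abs_nonneg _).trans (hdiff 0)
    rwa [le_div_iff₀ (by positivity), zero_mul] at hfirst
  have hpartial (n : ℕ) : |u 0 - u n| ≤ 2 * C / x - 2 * C / (x + n) := by
    induction n with
    | zero => simp
    | succ n ih =>
      have hstep : C / (x + n) ^ 2 ≤ 2 * C / (x + n) - 2 * C / (x + n + 1) := by
        have hxn : 1 ≤ x + n := by linarith [Nat.cast_nonneg (α := ℝ) n]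
        rw [div_sub_div _ _ (by positivity) (by positivity), div_le_div_iff₀ (by positivity)
          (by positivity)]
        nlinarith [mul_nonneg hC (mul_nonneg (sub_nonneg.2 hxn) (zero_le_one.trans hxn))]
      push_cast
      rw [← add_assoc]
      linarith [abs_sub_le (u 0) (u n) (u (n + 1)), hdiff n]
  have hle : ∀ n, |u 0 - u n| ≤ 2 * C / x := fun n =>
    (hpartial n).trans (sub_le_self _ (by positivity))
  simpa using le_of_tendsto' (hlim.const_sub (u 0)).abs hle

lemma eventually_forall_abs_le_div_of_telescoping {f : ℝ → ℝ → ℝ} {S : Set ℝ} {K C : ℝ}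
    (hS : ∀ s ∈ S, s + 1 ∈ S)
    (hlim : ∀ s ∈ S, ∀ x, Tendsto (fun m : ℕ => f (s + m) (x + m)) atTop (𝓝 0))
    (hdiff : ∀ᶠ x in atTop, ∀ s ∈ S, |x - s| ≤ K → |f s x - f (s + 1) (x + 1)| ≤ C / x ^ 2) :
    ∀ᶠ x in atTop, ∀ s ∈ S, |x - s| ≤ K → |f s x| ≤ 2 * C / x := by
  filter_upwards [eventually_forall_ge_atTop.2 hdiff, eventually_ge_atTop 1]
    with x hdiff hx s hs hsx
  have hmem (m : ℕ) : s + m ∈ S := by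
    induction m with
    | zero => simpa using hs
    | succ m ih => simpa [add_assoc] using hS _ ih
  have htelescope := abs_le_of_tendsto_zero_of_abs_sub_succ_le (u := fun m : ℕ => f (s + m) (x + m))
    hx (hlim s hs x) fun m => by
      simpa [add_assoc] using hdiff (x + m) (by simp) (s + m) (hmem m) (by simpa using hsx)
  simpa using htelescope

/-! ### Stirling's formula for the slope of the terminant -/

/-- The logarithm of `terminantSlope s x` relative to its leading behaviour `√(2π / x)`. -/
noncomputable def logSlopeDefect (s x : ℝ) : ℝ :=
  Real.log (terminantSlope s x * √(x / (2 * Real.pi)))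

lemma logSlopeDefect_eq {s x : ℝ} (hs : 0 < s) (hx : 0 < x) :
    logSlopeDefect s x = Real.log (Real.Gamma (s + 1)) + x - (s + 1 / 2) * Real.log x
      - Real.log (2 * Real.pi) / 2 := by
  have : 0 < Real.Gamma (s + 1) := Real.Gamma_pos_of_pos (by linarith)
  rw [logSlopeDefect, terminantSlope, Real.log_mul (by positivity) (by positivity),
    Real.log_mul (by positivity) (by positivity), Real.log_mul (by positivity) (by positivity),
    Real.log_exp, Real.log_rpow hx, Real.log_sqrt (by positivity),
    Real.log_div (by positivity) (by positivity)]
  ring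

lemma terminantSlope_eq_sqrt_mul_exp {s x : ℝ} (hs : 0 < s) (hx : 0 < x) :
    terminantSlope s x = √(2 * Real.pi / x) * Real.exp (logSlopeDefect s x) := by
  have : 0 < Real.Gamma (s + 1) := Real.Gamma_pos_of_pos (by linarith)
  have hpos : 0 < terminantSlope s x * √(x / (2 * Real.pi)) := by
    unfold terminantSlope; positivity
  rw [logSlopeDefect, Real.exp_log hpos, mul_left_comm, ← Real.sqrt_mul (by positivity),
    show 2 * Real.pi / x * (x / (2 * Real.pi)) = 1 by field_simp, Real.sqrt_one, mul_one]

lemma terminantSlope_mul_sqrt_eq {m : ℕ} {s x : ℝ} (hm : 0 < (m : ℝ)) (hmx : 0 < m + x) :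
    terminantSlope (s + m) (x + m) * √((x + m) / (2 * Real.pi))
      = Real.Gamma (s + m + 1) / (m.factorial * (m : ℝ) ^ s)
        * (m.factorial / (√(2 * m * Real.pi) * (m / Real.exp 1) ^ m))
        * (m / (m + x)) ^ (s + 1 / 2) * (Real.exp x / (1 + x / m) ^ m) := by
  have hexp : Real.exp m = Real.exp 1 ^ m := by rw [← Real.exp_nat_mul, mul_one]
  have hsqrt : √(2 * m * Real.pi) = √m * √(2 * Real.pi) := by
    rw [← Real.sqrt_mul hm.le]; congr 1; ring
  have hbase : 1 + x / m = (m + x) / m := by field_simp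
  have hpow : (m + x) ^ (-(s + m) - 1) = ((m + x) ^ s * (m + x) ^ m * (√(m + x) * √(m + x)))⁻¹ := by
    rw [Real.mul_self_sqrt hmx.le, ← neg_add', Real.rpow_neg hmx.le, Real.rpow_add_one hmx.ne',
      Real.rpow_add hmx, Real.rpow_natCast]
  rw [terminantSlope, add_comm x, Real.exp_add, hexp, hpow, hsqrt, hbase,
    div_pow, div_pow, Real.div_rpow hm.le hmx.le, Real.rpow_add hm, Real.rpow_add hmx,
    ← Real.sqrt_eq_rpow, ← Real.sqrt_eq_rpow, Real.sqrt_div hmx.le]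
  field_simp

lemma tendsto_terminantSlope_mul_sqrt {s : ℝ} (hs : 0 < s) (x : ℝ) :
    Tendsto (fun m : ℕ => terminantSlope (s + m) (x + m) * √((x + m) / (2 * Real.pi))) atTop
      (𝓝 1) := by
  have hratio : Tendsto (fun m : ℕ => (m : ℝ) / (m + x)) atTop (𝓝 1) :=
    tendsto_natCast_div_add_atTop x
  have hGamma := tendsto_Gamma_add_natCast_div (s := s) fun k => by
    linarith [Nat.cast_nonneg (α := ℝ) k]
  have hStirling : Tendsto (fun m : ℕ => (m.factorial : ℝ) / (√(2 * m * Real.pi)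
      * (m / Real.exp 1) ^ m)) atTop (𝓝 1) :=
    (isEquivalent_iff_tendsto_one (by
      filter_upwards [eventually_gt_atTop 0] with m hm using by positivity)).1
      Stirling.factorial_isEquivalent_stirling
  have hpow : Tendsto (fun m : ℕ => ((m : ℝ) / (m + x)) ^ (s + 1 / 2)) atTop (𝓝 1) := by
    simpa using hratio.rpow_const (p := s + 1 / 2) (Or.inl one_ne_zero)
  have hexp : Tendsto (fun m : ℕ => Real.exp x / (1 + x / m) ^ m) atTop (𝓝 1) := by
    have hdiv := (tendsto_const_nhds (x := Real.exp x)).div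
      (Real.tendsto_one_add_div_pow_exp x) (Real.exp_pos x).ne'
    rwa [div_self (Real.exp_pos x).ne'] at hdiv
  have hlim := ((hGamma.mul hStirling).mul hpow).mul hexp
  simp only [mul_one] at hlim
  refine hlim.congr' ?_
  filter_upwards [eventually_gt_atTop 0,
    tendsto_natCast_atTop_atTop.eventually_gt_atTop (-x)] with m hm hmx
  have hm' : (0 : ℝ) < m := by exact_mod_cast hm
  have hmx' : (0 : ℝ) < m + x := by linarith
  exact (terminantSlope_mul_sqrt_eq hm' hmx').symm

lemma tendsto_logSlopeDefect {s : ℝ} (hs : 0 < s) (x : ℝ) :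
    Tendsto (fun m : ℕ => logSlopeDefect (s + m) (x + m)) atTop (𝓝 0) := by
  simpa [logSlopeDefect] using (tendsto_terminantSlope_mul_sqrt hs x).log one_ne_zero

lemma logSlopeDefect_sub_eq {s x : ℝ} (hs : 0 < s) (hx : 0 < x) :
    logSlopeDefect s x - logSlopeDefect (s + 1) (x + 1)
      = (s + 1 / 2) * Real.log (1 + 1 / x) - 1 - Real.log (1 - (x - s) / (x + 1)) := by
  rw [logSlopeDefect_eq hs hx, logSlopeDefect_eq (by positivity) (by positivity),
    Real.Gamma_add_one (by positivity : s + 1 ≠ 0),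
    Real.log_mul (by positivity) (Real.Gamma_pos_of_pos (by positivity)).ne',
    show 1 + 1 / x = (x + 1) / x by field_simp,
    show 1 - (x - s) / (x + 1) = (s + 1) / (x + 1) by field_simp; ring,
    Real.log_div (by positivity) (by positivity), Real.log_div (by positivity) (by positivity)]
  ring

lemma abs_log_one_sub_add_le {u : ℝ} (hu : |u| ≤ 1 / 2) : |Real.log (1 - u) + u| ≤ 2 * u ^ 2 := by
  have hlog := Real.abs_log_sub_add_sum_range_le (hu.trans_lt (by norm_num)) 1
  rw [le_div_iff₀ (by linarith)] at hlog
  norm_num at hlog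
  rw [add_comm]
  nlinarith [abs_nonneg (u + Real.log (1 - u)), sq_abs u]

lemma abs_log_one_add_sub_le {u : ℝ} (hu : |u| ≤ 1 / 2) :
    |Real.log (1 + u) - (u - u ^ 2 / 2)| ≤ 2 * |u| ^ 3 := by
  have hlog := Real.abs_log_sub_add_sum_range_le (x := -u) (by rw [abs_neg]; linarith) 2
  rw [abs_neg, le_div_iff₀ (by linarith)] at hlog
  norm_num [sum_range_succ] at hlog
  rw [show Real.log (1 + u) - (u - u ^ 2 / 2) = -u + u ^ 2 / 2 + Real.log (1 + u) by ring]
  nlinarith [abs_nonneg (-u + u ^ 2 / 2 + Real.log (1 + u))]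

lemma abs_logSlopeDefect_sub_main_le {K s x : ℝ} (hx : 0 < x) (hsx : |x - s| ≤ K) :
    |(s + 1 / 2) * (1 / x - (1 / x) ^ 2 / 2) - 1 + (x - s) / (x + 1)|
      ≤ (K + K / 2 + 1 / 4) / x ^ 2 := by
  rw [show (s + 1 / 2) * (1 / x - (1 / x) ^ 2 / 2) - 1 + (x - s) / (x + 1)
    = (-(x - s) * (x / (x + 1)) + (x - s) / 2 - 1 / 4) / x ^ 2 by field_simp; ring,
    abs_div, abs_of_pos (by positivity : 0 < x ^ 2)]
  gcongr
  have hratio : x / (x + 1) ≤ 1 := (div_le_one (by positivity)).2 (by linarith)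
  have hratio_nonneg : 0 ≤ x / (x + 1) := by positivity
  obtain ⟨hlower, hupper⟩ := abs_le.1 hsx
  rw [abs_le]
  constructor <;> nlinarith

lemma abs_logSlopeDefect_sub_le {K s x : ℝ} (hs : 0 < s) (hx : 2 * K + 2 ≤ x) (hsx : |x - s| ≤ K) :
    |logSlopeDefect s x - logSlopeDefect (s + 1) (x + 1)| ≤ (2 * K ^ 2 + 4 * K + 4) / x ^ 2 := by
  have hK : 0 ≤ K := (abs_nonneg _).trans hsx
  have hx2 : 2 ≤ x := by linarith
  have hu : |(x - s) / (x + 1)| ≤ 1 / 2 := by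
    rw [abs_div, abs_of_pos (by positivity : 0 < x + 1), div_le_iff₀ (by positivity)]; linarith
  have hlog_sub : |Real.log (1 - (x - s) / (x + 1)) + (x - s) / (x + 1)| ≤ 2 * K ^ 2 / x ^ 2 := by
    refine (abs_log_one_sub_add_le hu).trans ?_
    rw [← mul_div_assoc', ← sq_abs, abs_div, abs_of_pos (by positivity : 0 < x + 1), div_pow]
    gcongr
    linarith
  have hlog_add : |Real.log (1 + 1 / x) - (1 / x - (1 / x) ^ 2 / 2)| ≤ 2 / x ^ 3 := by
    refine (abs_log_one_add_sub_le ?_).trans_eq ?_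
    · rw [abs_of_pos (by positivity)]; gcongr
    · rw [abs_of_pos (by positivity)]; ring
  have hs_le : |s + 1 / 2| ≤ x + (K + 1 / 2) := by
    rw [abs_of_pos (by positivity)]; linarith [neg_abs_le (x - s)]
  have hmain := abs_logSlopeDefect_sub_main_le (by positivity) hsx
  have hthird : |s + 1 / 2| * (2 / x ^ 3) ≤ (2 * K + 3) / x ^ 2 := by
    calc |s + 1 / 2| * (2 / x ^ 3) ≤ (x + (K + 1 / 2)) * (2 / x ^ 3) := by gcongr
      _ ≤ (2 * K + 3) / x ^ 2 := by
        field_simp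
        nlinarith
  calc |logSlopeDefect s x - logSlopeDefect (s + 1) (x + 1)|
      = |(s + 1 / 2) * (Real.log (1 + 1 / x) - (1 / x - (1 / x) ^ 2 / 2))
          + ((s + 1 / 2) * (1 / x - (1 / x) ^ 2 / 2) - 1 + (x - s) / (x + 1))
          - (Real.log (1 - (x - s) / (x + 1)) + (x - s) / (x + 1))| := by
        rw [logSlopeDefect_sub_eq hs (by positivity)]; congr 1; ring
    _ ≤ |s + 1 / 2| * (2 / x ^ 3) + (K + K / 2 + 1 / 4) / x ^ 2 + 2 * K ^ 2 / x ^ 2 := by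
        refine (abs_sub _ _).trans
          (add_le_add ((abs_add_le _ _).trans (add_le_add ?_ hmain)) hlog_sub)
        rw [abs_mul]
        gcongr
    _ ≤ (2 * K + 3) / x ^ 2 + (K + K / 2 + 1 / 4) / x ^ 2 + 2 * K ^ 2 / x ^ 2 := by gcongr
    _ ≤ (2 * K ^ 2 + 4 * K + 4) / x ^ 2 := by
        rw [← add_div, ← add_div]
        exact div_le_div_of_nonneg_right (by linarith) (by positivity)

lemma exists_eventually_abs_logSlopeDefect_le (K : ℝ) :
    ∃ C, ∀ᶠ x in atTop, ∀ s, |x - s| ≤ K → |logSlopeDefect s x| ≤ C / x := by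
  have htelescope := eventually_forall_abs_le_div_of_telescoping (K := K) (S := Set.Ioi 0)
    (fun s hs => Set.mem_Ioi.2 (add_pos hs one_pos)) (fun s hs x => tendsto_logSlopeDefect hs x)
    ((eventually_ge_atTop (2 * K + 2)).mono fun x hx s hs hsx =>
      abs_logSlopeDefect_sub_le hs hx hsx)
  refine ⟨2 * (2 * K ^ 2 + 4 * K + 4), ?_⟩
  filter_upwards [htelescope, eventually_gt_atTop K] with x hx hKx s hsx
  exact hx s (by simp only [Set.mem_Ioi]; linarith [le_abs_self (x - s)]) hsx

lemma sqrt_two_pi_div_le {x : ℝ} (hx : 1 ≤ x) : √(2 * Real.pi / x) ≤ 3 := by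
  rw [Real.sqrt_le_left (by norm_num), div_le_iff₀ (by positivity)]
  linarith [Real.pi_lt_d2]

lemma exists_eventually_abs_terminantSlope_sub_le (K : ℝ) :
    ∃ C, ∀ᶠ x in atTop, ∀ s, |x - s| ≤ K → |terminantSlope s x - √(2 * Real.pi / x)| ≤ C / x := by
  obtain ⟨C, hC⟩ := exists_eventually_abs_logSlopeDefect_le K
  refine ⟨6 * C, ?_⟩
  filter_upwards [hC, eventually_gt_atTop K, eventually_ge_atTop 1, eventually_ge_atTop C]
    with x hdefect hKx hx hCx s hsx
  have hs : 0 < s := by linarith [le_abs_self (x - s)]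
  have hdefect_one : |logSlopeDefect s x| ≤ 1 :=
    (hdefect s hsx).trans ((div_le_one (by positivity)).2 hCx)
  calc |terminantSlope s x - √(2 * Real.pi / x)|
      = √(2 * Real.pi / x) * |Real.exp (logSlopeDefect s x) - 1| := by
        rw [terminantSlope_eq_sqrt_mul_exp hs (by positivity), ← mul_sub_one, abs_mul,
          abs_of_nonneg (Real.sqrt_nonneg _)]
    _ ≤ 3 * (2 * (C / x)) := by
        gcongr
        · exact sqrt_two_pi_div_le hx
        · exact (Real.abs_exp_sub_one_le hdefect_one).trans (by gcongr; exact hdefect s hsx)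
    _ = 6 * C / x := by ring

/-! ### Uniform expansion of the terminant -/

lemma eventually_forall_abs_terminantSlope_le (K : ℝ) {ε : ℝ} (hε : 0 < ε) :
    ∀ᶠ x in atTop, ∀ s, |x - s| ≤ K → |terminantSlope s x| ≤ ε := by
  obtain ⟨C, hC⟩ := exists_eventually_abs_terminantSlope_sub_le K
  have hlim : Tendsto (fun x : ℝ => √(2 * Real.pi / x) + C / x) atTop (𝓝 0) := by
    simpa using (tendsto_const_nhds.div_atTop tendsto_id).sqrt.add
      (tendsto_const_nhds.div_atTop tendsto_id)
  filter_upwards [hC, hlim.eventually_le_const hε] with x hslope hx s hsx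
  linarith [abs_sub_abs_le_abs_sub (terminantSlope s x) √(2 * Real.pi / x), hslope s hsx,
    abs_of_nonneg (Real.sqrt_nonneg (2 * Real.pi / x))]

lemma abs_terminant_sub_terminant_le {s ε x y : ℝ} (hs : ∀ k : ℕ, s ≠ k)
    (hpos : ∀ t ∈ Set.uIcc x y, 0 < t) (hslope : ∀ t ∈ Set.uIcc x y, |terminantSlope s t| ≤ ε) :
    |terminant s y - terminant s x| ≤ ε * |y - x| :=
  (convex_uIcc x y).norm_image_sub_le_of_norm_hasDerivWithin_le
    (fun t ht => (hasDerivAt_terminant hs (hpos t ht)).hasDerivWithinAt) hslope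
    Set.left_mem_uIcc Set.right_mem_uIcc

lemma tendsto_terminant_add_natCast_add_natCast {s : ℝ} (hs : ∀ k : ℤ, s ≠ k) (x : ℝ) :
    Tendsto (fun m : ℕ => terminant (s + m) (x + m)) atTop (𝓝 0) := by
  have hdiff : Tendsto (fun m : ℕ => terminant (s + m) (x + m) - terminant (s + m) m) atTop
      (𝓝 0) := by
    refine Metric.tendsto_nhds.2 fun ε hε => ?_
    have hslope := eventually_forall_ge_atTop.2 (eventually_forall_abs_terminantSlope_le (|x| + |s|)
      (div_pos hε (by positivity : 0 < |x| + 1)))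
    filter_upwards [(tendsto_atTop_add_const_right _ (-|x|) tendsto_natCast_atTop_atTop).eventually
      (hslope.and (eventually_gt_atTop 0))] with m ⟨hslope, hm⟩
    have hwindow (t : ℝ) (ht : t ∈ Set.uIcc (m : ℝ) (x + m)) : |t - m| ≤ |x| := by
      simpa using Set.abs_sub_left_of_mem_uIcc ht
    have hmean := abs_terminant_sub_terminant_le (s := s + m) (x := m) (y := x + m)
      (ε := ε / (|x| + 1)) (fun k h => hs (k - m) (by push_cast; linarith))
      (fun t ht => by linarith [neg_abs_le (t - m), hwindow t ht])
      (fun t ht => hslope t (by linarith [neg_abs_le (t - m), hwindow t ht]) _ (by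
        rw [add_comm s, ← sub_sub]
        exact (abs_sub _ _).trans (add_le_add (hwindow t ht) le_rfl)))
    rw [dist_zero_right, Real.norm_eq_abs]
    refine hmean.trans_lt ?_
    rw [add_sub_cancel_right, div_mul_eq_mul_div, div_lt_iff₀ (by positivity)]
    linarith
  simpa using hdiff.add (tendsto_terminant_add_natCast hs)

lemma hasDerivAt_terminantSlope (s : ℝ) {x : ℝ} (hx : 0 < x) :
    HasDerivAt (terminantSlope s) (terminantSlope s x * (x - s - 1) / x) x := by
  have hderiv := ((Real.hasDerivAt_exp x).mul_const (Real.Gamma (s + 1))).mul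
    (Real.hasDerivAt_rpow_const (p := -s - 1) (Or.inl hx.ne'))
  refine hderiv.congr_deriv ?_
  rw [Real.rpow_sub_one hx.ne' (-s - 1), terminantSlope]
  field_simp
  ring

lemma hasDerivAt_sqrt_two_pi_div {x : ℝ} (hx : 0 < x) :
    HasDerivAt (fun t => √(2 * Real.pi / t)) (-(√(2 * Real.pi / x) / (2 * x))) x := by
  have hderiv := ((hasDerivAt_inv hx.ne').const_mul (2 * Real.pi)).sqrt (by positivity)
  refine hderiv.congr_deriv ?_
  rw [← div_eq_mul_inv]
  have : 0 < √(2 * Real.pi / x) := by positivity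
  have hsq : √(2 * Real.pi / x) ^ 2 = 2 * Real.pi / x := Real.sq_sqrt (by positivity)
  field_simp at hsq ⊢
  linarith

lemma abs_sqrt_two_pi_div_div_sub_le {x τ : ℝ} (hx : 1 ≤ x) (hτ : 0 ≤ τ) (hτ' : τ ≤ 1) :
    |√(2 * Real.pi / (x + τ)) / (x + τ) - √(2 * Real.pi / x) / x| ≤ 6 / x ^ 2 := by
  have hanti : √(2 * Real.pi / (x + τ)) ≤ √(2 * Real.pi / x) := by
    gcongr
    linarith
  have hlower : √(2 * Real.pi / x) * (x / (x + τ)) ≤ √(2 * Real.pi / (x + τ)) := by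
    refine Real.le_sqrt_of_sq_le ?_
    rw [mul_pow, Real.sq_sqrt (by positivity)]
    field_simp
    nlinarith [Real.pi_pos]
  have hquot : √(2 * Real.pi / (x + τ)) / (x + τ) ≤ √(2 * Real.pi / x) / x := by
    gcongr
    linarith
  rw [abs_sub_comm, abs_of_nonneg (sub_nonneg.2 hquot)]
  calc √(2 * Real.pi / x) / x - √(2 * Real.pi / (x + τ)) / (x + τ)
      ≤ √(2 * Real.pi / x) / x - √(2 * Real.pi / x) * (x / (x + τ)) / (x + τ) := by gcongr
    _ = √(2 * Real.pi / x) * (τ * (2 * x + τ) / (x * (x + τ) ^ 2)) := by field_simp; ring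
    _ ≤ 3 * (2 / x ^ 2) := by
        refine mul_le_mul (sqrt_two_pi_div_le hx) ?_ (by positivity) (by norm_num)
        rw [div_le_div_iff₀ (by positivity) (by positivity)]
        calc τ * (2 * x + τ) * x ^ 2 ≤ 1 * (2 * (x + τ)) * (x * (x + τ)) := by gcongr <;> nlinarith
          _ = 2 * (x * (x + τ) ^ 2) := by ring
    _ = 6 / x ^ 2 := by ring

lemma exists_eventually_abs_terminantSlope_div_sub_le (K : ℝ) :
    ∃ C, ∀ᶠ x in atTop, ∀ s, |x - s| ≤ K → ∀ τ ∈ Set.Icc (0 : ℝ) 1,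
      |terminantSlope s (x + τ) / (x + τ) - √(2 * Real.pi / x) / x| ≤ C / x ^ 2 := by
  obtain ⟨C, hC⟩ := exists_eventually_abs_terminantSlope_sub_le (K + 1)
  refine ⟨C + 6, ?_⟩
  filter_upwards [eventually_forall_ge_atTop.2 hC, eventually_ge_atTop 1]
    with x hslope hx s hsx τ ⟨hτ, hτ'⟩
  have hfirst := hslope (x + τ) (by linarith) s (by
    rw [add_sub_right_comm]
    exact (abs_add_le _ _).trans (add_le_add hsx (by rwa [abs_of_nonneg hτ])))
  have hC0 : 0 ≤ C := by
    have := (abs_nonneg _).trans hfirst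
    rwa [le_div_iff₀ (by positivity), zero_mul] at this
  calc |terminantSlope s (x + τ) / (x + τ) - √(2 * Real.pi / x) / x|
      ≤ |terminantSlope s (x + τ) / (x + τ) - √(2 * Real.pi / (x + τ)) / (x + τ)|
          + |√(2 * Real.pi / (x + τ)) / (x + τ) - √(2 * Real.pi / x) / x| := abs_sub_le _ _ _
    _ ≤ C / x ^ 2 + 6 / x ^ 2 := by
        refine add_le_add ?_ (abs_sqrt_two_pi_div_div_sub_le hx hτ hτ')
        rw [← sub_div, abs_div, abs_of_pos (by positivity : 0 < x + τ)]
        calc |terminantSlope s (x + τ) - √(2 * Real.pi / (x + τ))| / (x + τ)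
            ≤ C / (x + τ) / (x + τ) := by gcongr
          _ ≤ C / x / x := by gcongr <;> linarith
          _ = C / x ^ 2 := by ring
    _ = (C + 6) / x ^ 2 := by ring

/-- The terminant minus its leading term. -/
noncomputable def terminantError (s x : ℝ) : ℝ :=
  terminant s x - √(2 * Real.pi / x) * (x - s - 1 / 3)

lemma tendsto_terminantError {s : ℝ} (hs : ∀ k : ℤ, s ≠ k) (x : ℝ) :
    Tendsto (fun m : ℕ => terminantError (s + m) (x + m)) atTop (𝓝 0) := by
  have hsqrt : Tendsto (fun m : ℕ => √(2 * Real.pi / (x + m))) atTop (𝓝 0) := by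
    simpa using (tendsto_const_nhds.div_atTop
      (tendsto_atTop_add_const_left _ x tendsto_natCast_atTop_atTop)).sqrt
  simpa [terminantError] using (tendsto_terminant_add_natCast_add_natCast hs x).sub
    (hsqrt.mul_const (x - s - 1 / 3))

/-- Interpolates between `0` at `τ = 0` and the difference of `terminantError` along the diagonal
at `τ = 1`. The cubic vanishes at `0` and `1` and cancels the leading part of the derivative. -/
noncomputable def terminantErrorPath (s x τ : ℝ) : ℝ :=
  τ * terminantSlope s (x + τ) - terminant s (x + τ) + terminant s x
    + (x - s - 1 / 3) * (√(2 * Real.pi / (x + τ)) - √(2 * Real.pi / x))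
    - √(2 * Real.pi / x) / x * (τ ^ 3 / 3 + (x - s - 1) * τ ^ 2 / 2 - (x - s - 1 / 3) / 2 * τ)

lemma terminantErrorPath_zero (s x : ℝ) : terminantErrorPath s x 0 = 0 := by
  simp [terminantErrorPath]

lemma terminantErrorPath_one {s x : ℝ} (hs : ∀ k : ℤ, s ≠ k) (hx : 0 < x) :
    terminantErrorPath s x 1 = terminantError s x - terminantError (s + 1) (x + 1) := by
  rw [terminantErrorPath, terminantError, terminantError,
    ← terminant_sub_terminant_add_one hs (by positivity : 0 < x + 1)]
  ring

lemma hasDerivAt_terminantErrorPath {s x τ : ℝ} (hs : ∀ k : ℕ, s ≠ k) (hxτ : 0 < x + τ) :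
    HasDerivAt (terminantErrorPath s x)
      (τ * (x - s - 1 + τ) * (terminantSlope s (x + τ) / (x + τ) - √(2 * Real.pi / x) / x)
        - (x - s - 1 / 3) / 2 *
          (√(2 * Real.pi / (x + τ)) / (x + τ) - √(2 * Real.pi / x) / x)) τ := by
  have hslope := (hasDerivAt_terminantSlope s hxτ).comp_const_add x τ
  have hterminant := (hasDerivAt_terminant hs hxτ).comp_const_add x τ
  have hsqrt := (hasDerivAt_sqrt_two_pi_div hxτ).comp_const_add x τ
  have hcubic : HasDerivAt
      (fun τ : ℝ => τ ^ 3 / 3 + (x - s - 1) * τ ^ 2 / 2 - (x - s - 1 / 3) / 2 * τ)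
      (τ ^ 2 + (x - s - 1) * τ - (x - s - 1 / 3) / 2) τ := by
    refine ((((hasDerivAt_pow 3 τ).div_const 3).add
      (((hasDerivAt_pow 2 τ).const_mul (x - s - 1)).div_const 2)).sub
      ((hasDerivAt_id τ).const_mul _)).congr_deriv ?_
    norm_num
    ring
  refine ((((((hasDerivAt_id τ).mul hslope).sub hterminant).add_const _).add
    ((hsqrt.sub_const _).const_mul _)).sub (hcubic.const_mul _)).congr_deriv ?_
  simp only [id]
  field_simp
  ring

lemma exists_eventually_abs_terminantError_sub_le (K : ℝ) :
    ∃ C, ∀ᶠ x in atTop, ∀ s ∈ {s : ℝ | ∀ k : ℤ, s ≠ k}, |x - s| ≤ K →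
      |terminantError s x - terminantError (s + 1) (x + 1)| ≤ C / x ^ 2 := by
  obtain ⟨C, hC⟩ := exists_eventually_abs_terminantSlope_div_sub_le K
  refine ⟨(K + 2) * C + (K + 1) / 2 * 6, ?_⟩
  filter_upwards [hC, eventually_ge_atTop 1] with x hslope hx s hs hsx
  obtain ⟨hlower, hupper⟩ := abs_le.1 hsx
  have hderiv_le (τ : ℝ) (hτ : τ ∈ Set.Icc (0 : ℝ) 1) :
      ‖τ * (x - s - 1 + τ) * (terminantSlope s (x + τ) / (x + τ) - √(2 * Real.pi / x) / x)
        - (x - s - 1 / 3) / 2 * (√(2 * Real.pi / (x + τ)) / (x + τ) - √(2 * Real.pi / x) / x)‖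
      ≤ ((K + 2) * C + (K + 1) / 2 * 6) / x ^ 2 := by
    have hfactor : |τ * (x - s - 1 + τ)| ≤ K + 2 := by
      rw [abs_le]; constructor <;> nlinarith [hτ.1, hτ.2]
    have hconst : |(x - s - 1 / 3) / 2| ≤ (K + 1) / 2 := by
      rw [abs_le]; constructor <;> linarith
    have hK : 0 ≤ K := (abs_nonneg _).trans hsx
    rw [show ((K + 2) * C + (K + 1) / 2 * 6) / x ^ 2
      = (K + 2) * (C / x ^ 2) + (K + 1) / 2 * (6 / x ^ 2) by ring]
    refine (abs_sub _ _).trans (add_le_add ?_ ?_) <;> rw [abs_mul]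
    · gcongr
      exact hslope s hsx τ hτ
    · gcongr
      exact abs_sqrt_two_pi_div_div_sub_le hx hτ.1 hτ.2
  have hmean := (convex_Icc (0 : ℝ) 1).norm_image_sub_le_of_norm_hasDerivWithin_le
    (fun τ hτ => (hasDerivAt_terminantErrorPath (fun k => hs k)
      (by linarith [hτ.1] : 0 < x + τ)).hasDerivWithinAt) hderiv_le
    (Set.left_mem_Icc.2 zero_le_one) (Set.right_mem_Icc.2 zero_le_one)
  simpa [terminantErrorPath_zero, terminantErrorPath_one hs (zero_lt_one.trans_le hx)] using hmean

lemma exists_eventually_abs_terminantError_le (K : ℝ) :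
    ∃ C, ∀ᶠ x in atTop, ∀ s : ℝ, (∀ k : ℤ, s ≠ k) → |x - s| ≤ K → |terminantError s x| ≤ C / x := by
  obtain ⟨C, hC⟩ := exists_eventually_abs_terminantError_sub_le K
  exact ⟨2 * C, eventually_forall_abs_le_div_of_telescoping
    (fun s hs k h => hs (k - 1) (by push_cast; linarith))
    (fun s hs x => tendsto_terminantError hs x) hC⟩

/-! ### The regularized Kummer function -/

/-- `₁F₁(a; b; z) / Γ(b)`, which is entire in `a`, `b` and `z`. -/
noncomputable def regularizedKummer (a b z : ℂ) : ℂ := regularizedHGFun {a} {b} z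

lemma hasSum_regularizedKummer (a b z : ℂ) :
    HasSum (fun k : ℕ => (ascPochhammer ℂ k).eval a / (k.factorial * Gamma (b + k)) * z ^ k)
      (regularizedKummer a b z) := by
  have hz : z ∈ Metric.eball 0 (regularizedHGFunSeries {a} {b}).radius := by
    simp [radius_regularizedHGFunSeries_eq_top]
  simpa [regularizedKummer, regularizedHGFun, regularizedHGFunSeries, regularizedHGFunCoeff,
    mul_comm] using (regularizedHGFunSeries {a} {b}).hasSum hz

lemma one_div_Gamma_mul_kummer {b : ℂ} (hb : ∀ k : ℕ, b ≠ -k) (a z : ℂ) :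
    1 / Gamma b * kummer a b z = regularizedKummer a b z := by
  rw [kummer, ← tsum_mul_left, ← (hasSum_regularizedKummer a b z).tsum_eq]
  refine tsum_congr fun k => ?_
  rw [← Gamma_add_nat_div_Gamma_eq b hb]
  have := Gamma_ne_zero hb
  field_simp

lemma inv_Gamma_sub_one (s : ℂ) : (Gamma (s - 1))⁻¹ = (s - 1) * (Gamma s)⁻¹ := by
  rw [one_div_Gamma_eq_self_mul_one_div_Gamma_add_one, sub_add_cancel]

lemma ascPochhammer_succ_eval_sub_one (a : ℂ) (k : ℕ) :
    (ascPochhammer ℂ (k + 1)).eval (a - 1) = (a - 1) * (ascPochhammer ℂ k).eval a := by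
  simp [ascPochhammer_succ_left]

lemma regularizedKummer_sub_one_left (a b z : ℂ) :
    regularizedKummer (a - 1) b z
      = regularizedKummer a b z - z * regularizedKummer a (b + 1) z := by
  refine (hasSum_regularizedKummer (a - 1) b z).unique ?_
  rw [← hasSum_nat_add_iff' 1]
  have hsum := ((hasSum_nat_add_iff' 1).2 (hasSum_regularizedKummer a b z)).sub
    ((hasSum_regularizedKummer a (b + 1) z).mul_left z)
  convert hsum.congr_fun fun k => ?_ using 1
  · simp only [range_one, sum_singleton, ascPochhammer_zero, Polynomial.eval_one,
      Nat.factorial_zero, Nat.cast_one, Nat.cast_zero, add_zero, one_mul, pow_zero, mul_one]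
    ring
  · rw [ascPochhammer_succ_eval_sub_one, ascPochhammer_succ_eval, Nat.factorial_succ]
    push_cast
    rw [add_right_comm, ← add_assoc b]
    field_simp
    ring

lemma sub_mul_regularizedKummer_sub_one_left (a b z : ℂ) :
    (b - a) * regularizedKummer (a - 1) b z
      = regularizedKummer a (b - 1) z + (1 - a - z) * regularizedKummer a b z := by
  refine ((hasSum_regularizedKummer (a - 1) b z).mul_left (b - a)).unique ?_
  rw [← hasSum_nat_add_iff' 1]
  have hsum := ((hasSum_nat_add_iff' 1).2 ((hasSum_regularizedKummer a (b - 1) z).add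
    ((hasSum_regularizedKummer a b z).mul_left (1 - a)))).sub
    ((hasSum_regularizedKummer a b z).mul_left z)
  convert hsum.congr_fun fun k => ?_ using 1
  · simp only [range_one, div_eq_mul_inv, mul_inv_rev, sum_singleton, ascPochhammer_zero,
      Polynomial.eval_one, Nat.cast_zero, add_zero, Nat.factorial_zero, Nat.cast_one, inv_one,
      mul_one, one_mul, pow_zero, inv_Gamma_sub_one]
    ring
  · have hGamma := inv_Gamma_sub_one (b + k + 1)
    rw [add_sub_cancel_right] at hGamma
    rw [ascPochhammer_succ_eval_sub_one, ascPochhammer_succ_eval, Nat.factorial_succ]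
    simp only [div_eq_mul_inv, mul_inv]
    push_cast
    rw [show b - 1 + (k + 1) = b + k by ring, ← add_assoc b, hGamma]
    field_simp
    ring

lemma regularizedKummer_sub_one_right (a b z : ℂ) :
    regularizedKummer a (b - 1) z
      = (b - 1 + z) * regularizedKummer a b z
        - (b - a) * z * regularizedKummer a (b + 1) z := by
  linear_combination (b - a) * regularizedKummer_sub_one_left a b z
    - sub_mul_regularizedKummer_sub_one_left a b z

/-! ### The truncated remainder -/

/-- The exponentially large expansion of `₁F₁(a; b; z) / Γ(b)`, truncated after `N` terms. -/
noncomputable def expPart (a b : ℂ) (N : ℕ) (z : ℂ) : ℂ :=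
  z ^ (a - b) * exp z / Gamma a * ∑ j ∈ range N,
    (ascPochhammer ℂ j).eval (b - a) * (ascPochhammer ℂ j).eval (1 - a) / (j.factorial * z ^ j)

/-- What the exponentially large expansion leaves of `₁F₁(a; b; z) / Γ(b)` after `N` terms. -/
noncomputable def remainder (a b : ℂ) (N : ℕ) (z : ℂ) : ℂ :=
  regularizedKummer a b z - expPart a b N z

lemma expPart_succ (a b : ℂ) (N : ℕ) (z : ℂ) :
    expPart a b (N + 1) z = expPart a b N z + z ^ (a - b) * exp z / Gamma a *
      ((ascPochhammer ℂ N).eval (b - a) * (ascPochhammer ℂ N).eval (1 - a)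
        / (N.factorial * z ^ N)) := by
  rw [expPart, sum_range_succ, mul_add, ← expPart]

lemma remainder_succ (a b : ℂ) (N : ℕ) (z : ℂ) :
    remainder a b (N + 1) z = remainder a b N z - z ^ (a - b) * exp z / Gamma a *
      ((ascPochhammer ℂ N).eval (b - a) * (ascPochhammer ℂ N).eval (1 - a)
        / (N.factorial * z ^ N)) := by
  rw [remainder, expPart_succ, ← sub_sub, ← remainder]

lemma regularizedKummer_add_one_right {a : ℝ} (ha : ∀ k : ℕ, a ≠ -k) (y : ℝ) :
    regularizedKummer a (a + 1) y = ((shiftedExpSeries (-a) y / Real.Gamma a : ℝ) : ℂ) := by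
  have ha' (k : ℕ) : (a : ℂ) ≠ -k := mod_cast ha k
  have := Gamma_ne_zero ha'
  refine (hasSum_regularizedKummer a (a + 1) y).unique (HasSum.congr_fun (hasSum_ofReal.2
    ((summable_shiftedExpSeries (-a) y).hasSum.div_const (Real.Gamma a))) fun k => ?_)
  have hak : (a : ℂ) + k ≠ 0 := fun h => ha' k (eq_neg_of_add_eq_zero_left h)
  have hGammak : Gamma (a + k) ≠ 0 := Gamma_ne_zero fun m h => ha' (m + k) (by
    push_cast; linear_combination h)
  rw [← Gamma_add_nat_div_Gamma_eq _ ha', add_right_comm, Gamma_add_one _ hak]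
  push_cast [Gamma_ofReal]
  rw [sub_neg_eq_add, add_comm (k : ℂ)]
  field_simp

lemma sin_pi_mul_ne_zero {a : ℝ} (ha : ∀ k : ℤ, a ≠ k) : Real.sin (Real.pi * a) ≠ 0 := fun h => by
  obtain ⟨k, hk⟩ := Real.sin_eq_zero_iff.1 h
  exact ha k (mul_left_cancel₀ Real.pi_ne_zero (by linarith))

lemma inv_Gamma_eq_sin_pi_mul {a : ℝ} (ha : ∀ k : ℤ, a ≠ k) :
    (Real.Gamma a)⁻¹ = Real.sin (Real.pi * a) / Real.pi * Real.Gamma (1 - a) := by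
  rw [inv_eq_iff_eq_inv, mul_inv, inv_div, ← Real.Gamma_mul_Gamma_one_sub, mul_assoc,
    mul_inv_cancel₀, mul_one]
  exact Real.Gamma_ne_zero fun k h => ha (1 + k) (by push_cast; linarith)

lemma Gamma_natCast_sub_add_one {a : ℝ} (ha : ∀ k : ℤ, a ≠ k) (N : ℕ) :
    ((Real.Gamma (N - a + 1) : ℝ) : ℂ)
      = (ascPochhammer ℂ N).eval (1 - a : ℂ) * (Real.Gamma (1 - a) : ℝ) := by
  have ha' (k : ℕ) : (1 - a : ℂ) ≠ -k := fun h => ha (1 + k) (by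
    have : 1 - a = -k := mod_cast h
    push_cast
    linarith)
  rw [← Gamma_add_nat_div_Gamma_eq _ ha', ← Gamma_ofReal, ← Gamma_ofReal]
  push_cast
  rw [div_mul_cancel₀ _ (Gamma_ne_zero ha')]
  congr 1
  ring

lemma expPart_term_add_one_right {a : ℝ} (ha : ∀ k : ℤ, a ≠ k) (N : ℕ) {y : ℝ} (hy : 0 < y) :
    (y : ℂ) ^ ((a : ℂ) - (a + 1)) * exp y / Gamma a *
        ((ascPochhammer ℂ N).eval (a + 1 - a : ℂ) * (ascPochhammer ℂ N).eval (1 - a : ℂ)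
          / (N.factorial * y ^ N))
      = ((y ^ (-a) * (Real.sin (Real.pi * a) / Real.pi * terminantSlope (N - a) y) : ℝ) : ℂ) := by
  have hpow : y ^ (-a) * y ^ (-(N - a) - 1) = y⁻¹ / y ^ N := by
    rw [← Real.rpow_add hy, show -a + (-(N - a) - 1) = -1 - (N : ℝ) by ring,
      Real.rpow_sub_natCast hy.ne', Real.rpow_neg_one]
  have hslope : y ^ (-a) * (Real.sin (Real.pi * a) / Real.pi * terminantSlope (N - a) y)
      = y⁻¹ / y ^ N * Real.exp y * (Real.sin (Real.pi * a) / Real.pi)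
        * Real.Gamma (N - a + 1) := by
    rw [← hpow, terminantSlope]
    ring
  have hGamma : (Gamma a)⁻¹
      = ((Real.sin (Real.pi * a) / Real.pi * Real.Gamma (1 - a) : ℝ) : ℂ) := by
    rw [← inv_Gamma_eq_sin_pi_mul ha, ofReal_inv, Gamma_ofReal]
  rw [hslope, ofReal_mul, Gamma_natCast_sub_add_one ha, sub_add_cancel_left, cpow_neg_one,
    add_sub_cancel_left, ascPochhammer_eval_one,
    mul_div_mul_left _ _ (Nat.cast_ne_zero.2 N.factorial_ne_zero), div_eq_mul_inv _ (Gamma a),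
    hGamma]
  push_cast
  field_simp

lemma remainder_add_one_right {a : ℝ} (ha : ∀ k : ℤ, a ≠ k) (N : ℕ) {y : ℝ} (hy : 0 < y) :
    remainder a (a + 1) N y = ((y ^ (-a) * (Real.cos (Real.pi * a)
      + Real.sin (Real.pi * a) / Real.pi * terminant (N - a) y) : ℝ) : ℂ) := by
  have hsin := sin_pi_mul_ne_zero ha
  induction N with
  | zero =>
    rw [remainder, expPart, range_zero, sum_empty, mul_zero, sub_zero,
      regularizedKummer_add_one_right (fun k => mod_cast ha (-k)), ofReal_inj, terminant,
      Nat.cast_zero, zero_sub, neg_neg, mul_neg, Real.cot_eq_cos_div_sin, Real.cos_neg,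
      Real.sin_neg, neg_add_eq_sub, Real.rpow_neg hy.le, div_eq_mul_inv _ (Real.Gamma a),
      inv_Gamma_eq_sin_pi_mul ha]
    generalize Real.pi * a = θ at hsin ⊢
    field_simp
    ring
  | succ N ih =>
    rw [remainder_succ, ih, expPart_term_add_one_right ha N hy, ← ofReal_sub, ofReal_inj,
      Nat.cast_succ, add_sub_right_comm, ← terminant_sub_terminant_add_one (fun k h =>
        ha (N - k) (by push_cast; linarith)) hy]
    ring

/-! ### Mellin representation of the remainder -/

lemma Gamma_mul_Gamma_mul_hasSum_regularizedKummer {a β : ℂ} (ha : 0 < a.re) (hβ : 0 < β.re)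
    (z : ℂ) :
    HasSum (fun k : ℕ => z ^ k / k.factorial * betaIntegral β (a + k))
      (Gamma a * Gamma β * regularizedKummer a (a + β) z) := by
  have ha' (k : ℕ) : a ≠ -k := fun h => ha.not_ge (by simp [h])
  refine ((hasSum_regularizedKummer a (a + β) z).mul_left (Gamma a * Gamma β)).congr_fun
    fun k => ?_
  have hak : 0 < (a + k).re := by simpa using add_pos_of_pos_of_nonneg ha k.cast_nonneg
  have hbeta := Gamma_mul_Gamma_eq_betaIntegral hβ hak
  have hGamma : Gamma (β + (a + k)) ≠ 0 :=
    Gamma_ne_zero_of_re_pos (by simpa [add_assoc] using add_pos hβ hak)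
  rw [show a + β + k = β + (a + k) by ring, ← Gamma_add_nat_div_Gamma_eq a ha',
    eq_div_of_mul_eq hGamma ((mul_comm _ _).trans hbeta.symm)]
  have := Gamma_ne_zero ha'
  field_simp

lemma integral_cpow_mul_one_sub_cpow_mul_exp {a β : ℂ} (ha : 0 < a.re) (hβ : 0 < β.re) (z : ℂ) :
    ∫ s : ℝ in (0)..1, (s : ℂ) ^ (β - 1) * (1 - s) ^ (a - 1) * exp (z * (1 - s))
      = Gamma a * Gamma β * regularizedKummer a (a + β) z := by
  have hconv := betaIntegral_convergent hβ ha
  have hsum (s : ℝ) : HasSum (fun k : ℕ => (s : ℂ) ^ (β - 1) * (1 - s) ^ (a - 1) *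
      ((z * (1 - s)) ^ k / k.factorial))
      ((s : ℂ) ^ (β - 1) * (1 - s) ^ (a - 1) * exp (z * (1 - s))) := by
    rw [exp_eq_exp_ℂ]
    exact (NormedSpace.expSeries_div_hasSum_exp (z * (1 - s))).mul_left _
  have hterm (k : ℕ) (s : ℝ) (hs : s ∈ Set.uIoc (0 : ℝ) 1) :
      ‖(s : ℂ) ^ (β - 1) * (1 - s) ^ (a - 1) * ((z * (1 - s)) ^ k / k.factorial)‖
        ≤ ‖(s : ℂ) ^ (β - 1) * (1 - s) ^ (a - 1)‖ * (‖z‖ ^ k / k.factorial) := by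
    rw [Set.uIoc_of_le zero_le_one] at hs
    have hs' : ‖(1 - s : ℂ)‖ ≤ 1 := by
      rw [← ofReal_one, ← ofReal_sub, norm_real, Real.norm_eq_abs, abs_le]
      constructor <;> linarith [hs.1, hs.2]
    rw [norm_mul, norm_div, norm_pow, norm_mul z, norm_natCast]
    gcongr
    exact mul_le_of_le_one_right (norm_nonneg z) hs'
  refine (intervalIntegral.hasSum_integral_of_dominated_convergence _ (fun k => ?_)
    (fun k => ae_of_all _ (hterm k))
    (ae_of_all _ fun s _ => (Real.summable_pow_div_factorial ‖z‖).mul_left _) ?_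
    (ae_of_all _ fun s _ => hsum s)).unique ?_
  · refine (intervalIntegrable_iff.1 hconv).aestronglyMeasurable.mul ?_
    exact Continuous.aestronglyMeasurable (by fun_prop)
  · simpa only [tsum_mul_left] using hconv.norm.mul_const _
  · refine (Gamma_mul_Gamma_mul_hasSum_regularizedKummer ha hβ z).congr_fun fun k => ?_
    rw [betaIntegral, ← intervalIntegral.integral_const_mul]
    refine intervalIntegral.integral_congr_Ioo_of_le zero_le_one fun s hs => ?_
    have hs' : (1 - s : ℂ) ≠ 0 := sub_ne_zero.2 (mod_cast hs.2.ne')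
    simp only [add_sub_right_comm, cpow_add _ _ hs', cpow_natCast, mul_pow]
    ring

/-- The Laplace transform of this kernel against `s ^ (β - 1)` is the `N`-th remainder for
`b = a + β`: the truncation subtracts the Taylor polynomial of `(1 - s) ^ (a - 1)` at `0`. -/
noncomputable def remainderKernel (a : ℂ) (N : ℕ) (s : ℝ) : ℂ :=
  (Set.Ioc 0 1).indicator (fun s : ℝ => (1 - s : ℂ) ^ (a - 1)) s
    - ∑ j ∈ range N, (ascPochhammer ℂ j).eval (1 - a) / j.factorial * (s : ℂ) ^ j

lemma hasMellin_indicator_mul_exp {a β : ℂ} (ha : 0 < a.re) (hβ : 0 < β.re) (z : ℂ) :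
    HasMellin (fun s : ℝ => exp (-(z * s)) *
      (Set.Ioc 0 1).indicator (fun s : ℝ => (1 - s : ℂ) ^ (a - 1)) s) β
      (Gamma a * Gamma β * (exp (-z) * regularizedKummer a (a + β) z)) := by
  have hfun : (fun s : ℝ => (s : ℂ) ^ (β - 1) • (exp (-(z * s)) *
      (Set.Ioc 0 1).indicator (fun s : ℝ => (1 - s : ℂ) ^ (a - 1)) s))
      = (Set.Ioc 0 1).indicator (fun s : ℝ => (exp (-z) *
        ((s : ℂ) ^ (β - 1) * (1 - s) ^ (a - 1) * exp (z * (1 - s)) : ℂ))) := by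
    ext s
    by_cases hs : s ∈ Set.Ioc (0 : ℝ) 1
    · rw [Set.indicator_of_mem hs, Set.indicator_of_mem hs, smul_eq_mul,
        show -(z * s) = -z + z * (1 - s) by ring, exp_add]
      ring
    · simp [Set.indicator_of_notMem hs]
  have hsubset : Set.Ioi (0 : ℝ) ∩ Set.Ioc 0 1 = Set.Ioc 0 1 :=
    Set.inter_eq_right.2 Set.Ioc_subset_Ioi_self
  constructor
  · have hconv := ((betaIntegral_convergent hβ ha).mul_continuousOn
      (g := fun s : ℝ => exp (z * (1 - s))) (by fun_prop)).const_mul (exp (-z))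
    rw [MellinConvergent, hfun, integrableOn_indicator_iff measurableSet_Ioc, Set.inter_comm,
      hsubset]
    exact (intervalIntegrable_iff_integrableOn_Ioc_of_le zero_le_one).1 hconv
  · rw [mellin, hfun, setIntegral_indicator measurableSet_Ioc, hsubset,
      ← intervalIntegral.integral_of_le zero_le_one, intervalIntegral.integral_const_mul,
      integral_cpow_mul_one_sub_cpow_mul_exp ha hβ]
    ring

lemma hasMellin_exp_neg_mul {β : ℂ} (hβ : 0 < β.re) {y : ℝ} (hy : 0 < y) :
    HasMellin (fun s : ℝ => exp (-(y * s))) β ((y : ℂ) ^ (-β) * Gamma β) := by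
  have hexp : (fun s : ℝ => exp (-(y * s))) = fun s => ((Real.exp (-(y * s)) : ℝ) : ℂ) := by
    ext s
    push_cast
    rfl
  rw [hexp]
  constructor
  · refine (MellinConvergent.comp_mul_left (f := fun t => ((Real.exp (-t) : ℝ) : ℂ)) hy).2 ?_
    simpa only [MellinConvergent, smul_eq_mul, mul_comm] using GammaIntegral_convergent hβ
  · rw [mellin_comp_mul_left (fun t => ((Real.exp (-t) : ℝ) : ℂ)) _ hy,
      ← GammaIntegral_eq_mellin, Gamma_eq_integral hβ, smul_eq_mul]

lemma hasMellin_exp_mul_remainderKernel {a β : ℂ} (ha : 0 < a.re) (hβ : 0 < β.re) (N : ℕ) {y : ℝ}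
    (hy : 0 < y) :
    HasMellin (fun s : ℝ => exp (-(y * s)) * remainderKernel a N s) β
      (Gamma a * Gamma β * (exp (-y) * remainder a (a + β) N y)) := by
  induction N with
  | zero => simpa [remainderKernel, remainder, expPart] using hasMellin_indicator_mul_exp ha hβ y
  | succ N ih =>
    have hterm := hasMellin_exp_neg_mul (β := β + N) (by
      simpa using add_pos_of_pos_of_nonneg hβ N.cast_nonneg) hy
    have hsub := hasMellin_sub ih.1 ((MellinConvergent.cpow_smul.2 hterm.1).const_smul
      ((ascPochhammer ℂ N).eval (1 - a) / N.factorial))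
    rw [ih.2, mellin_const_smul, mellin_cpow_smul, hterm.2] at hsub
    convert hsub using 1
    · ext s
      rw [remainderKernel, sum_range_succ, ← sub_sub, ← remainderKernel]
      simp only [smul_eq_mul, cpow_natCast]
      ring
    · have hβ' (k : ℕ) : β ≠ -k := fun h => hβ.not_ge (by simp [h])
      have hGamma : Gamma (β + N) = (ascPochhammer ℂ N).eval β * Gamma β := by
        rw [← Gamma_add_nat_div_Gamma_eq β hβ', div_mul_cancel₀ _ (Gamma_ne_zero hβ')]
      have hGammaa := Gamma_ne_zero_of_re_pos ha
      have hy' : (y : ℂ) ≠ 0 := ofReal_ne_zero.2 hy.ne'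
      rw [remainder_succ, hGamma, exp_neg, neg_add', cpow_sub (-β) _ hy', cpow_natCast,
        sub_add_cancel_left, add_sub_cancel_left, smul_eq_mul]
      field_simp

lemma aestronglyMeasurable_of_mellinConvergent {F : ℝ → ℂ} {s : ℂ} (hF : MellinConvergent F s) :
    AEStronglyMeasurable F (volume.restrict (Set.Ioi 0)) := by
  have hcpow : AEStronglyMeasurable (fun t : ℝ => (t : ℂ) ^ (1 - s))
      (volume.restrict (Set.Ioi 0)) :=
    Measurable.aestronglyMeasurable (by fun_prop)
  refine (hcpow.mul hF.aestronglyMeasurable).congr ?_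
  filter_upwards [ae_restrict_mem measurableSet_Ioi] with t ht
  have ht' : (t : ℂ) ≠ 0 := ofReal_ne_zero.2 (ne_of_gt ht)
  rw [Pi.mul_apply, smul_eq_mul, ← mul_assoc, ← cpow_add _ _ ht', sub_add_sub_cancel, sub_self,
    cpow_zero, one_mul]

lemma integrable_cpow_mul_exp_mul {F : ℝ → ℂ} {μ : ℂ} (hμ : 0 < μ.re)
    (hF : MellinConvergent F (1 - μ)) :
    Integrable (fun p : ℝ × ℝ => (p.1 : ℂ) ^ (μ - 1) * (exp (-(p.1 * p.2)) * F p.2))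
      ((volume.restrict (Set.Ioi 0)).prod (volume.restrict (Set.Ioi 0))) := by
  have hmeas : AEStronglyMeasurable
      (fun p : ℝ × ℝ => (p.1 : ℂ) ^ (μ - 1) * (exp (-(p.1 * p.2)) * F p.2))
      ((volume.restrict (Set.Ioi 0)).prod (volume.restrict (Set.Ioi 0))) := by
    refine AEStronglyMeasurable.mul (Measurable.aestronglyMeasurable (by fun_prop)) ?_
    exact AEStronglyMeasurable.mul (Measurable.aestronglyMeasurable (by fun_prop))
      (aestronglyMeasurable_of_mellinConvergent hF).comp_snd
  rw [integrable_prod_iff' hmeas]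
  have hnorm (v s : ℝ) (hv : v ∈ Set.Ioi (0 : ℝ)) :
      ‖(v : ℂ) ^ (μ - 1) * (exp (-(v * s)) * F s)‖
        = v ^ (μ.re - 1) * Real.exp (-(s * v)) * ‖F s‖ := by
    rw [norm_mul, norm_mul, norm_cpow_eq_rpow_re_of_pos hv, ← ofReal_mul, ← ofReal_neg,
      norm_exp_ofReal, sub_re, one_re, mul_comm v s, mul_assoc]
  constructor
  · filter_upwards [ae_restrict_mem measurableSet_Ioi] with s hs
    refine ((hasMellin_exp_neg_mul hμ hs).1.mul_const (F s)).congr (ae_of_all _ fun v => ?_)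
    simp only [smul_eq_mul, mul_assoc, mul_comm (s : ℂ)]
  · refine (hF.norm.mul_const (Real.Gamma μ.re)).congr ?_
    filter_upwards [ae_restrict_mem measurableSet_Ioi] with s hs
    rw [setIntegral_congr_fun measurableSet_Ioi (fun v hv => hnorm v s hv), integral_mul_const,
      Real.integral_rpow_mul_exp_neg_mul_Ioi hμ hs, norm_smul, norm_cpow_eq_rpow_re_of_pos hs,
      sub_sub_cancel_left, neg_re, Real.rpow_neg (le_of_lt hs), one_div,
      Real.inv_rpow (le_of_lt hs)]
    ring

lemma mellin_integral_exp_mul {F : ℝ → ℂ} {μ : ℂ} (hμ : 0 < μ.re)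
    (hF : MellinConvergent F (1 - μ)) :
    mellin (fun v => ∫ s : ℝ in Set.Ioi 0, exp (-(v * s)) * F s) μ
      = Gamma μ * mellin F (1 - μ) := by
  simp only [mellin, smul_eq_mul, ← integral_const_mul]
  rw [integral_integral_swap (integrable_cpow_mul_exp_mul hμ hF)]
  refine setIntegral_congr_fun measurableSet_Ioi fun s hs => ?_
  have hGamma := (hasMellin_exp_neg_mul hμ hs).2
  simp only [mellin, smul_eq_mul, mul_comm (s : ℂ)] at hGamma
  simp only [← mul_assoc]
  rw [integral_mul_const, hGamma, sub_sub_cancel_left]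
  ring

lemma mellin_remainder_add_one {a μ : ℂ} (ha : 0 < a.re) (hμ : 0 < μ.re) (hμ1 : μ.re < 1) (N : ℕ)
    {x : ℝ} (hx : 0 < x) :
    mellin (fun v : ℝ => exp (-v) * remainder a (a + 1) N (x + v)) μ
      = Gamma μ * Gamma (1 - μ) * remainder a (a + (1 - μ)) N x := by
  have hF := hasMellin_exp_mul_remainderKernel ha (β := 1 - μ) (by simpa using hμ1) N hx
  have hlaplace (v : ℝ) (hv : v ∈ Set.Ioi (0 : ℝ)) :
      ∫ s : ℝ in Set.Ioi 0, exp (-(v * s)) * (exp (-(x * s)) * remainderKernel a N s)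
        = Gamma a * exp (-x) * (exp (-v) * remainder a (a + 1) N (x + v)) := by
    have hxv := (hasMellin_exp_mul_remainderKernel ha (β := 1) (by simp) N (add_pos hx hv)).2
    simp only [mellin, sub_self, cpow_zero, one_smul, Gamma_one, mul_one, ofReal_add, neg_add,
      add_mul, exp_add] at hxv
    rw [mul_assoc, ← mul_assoc (exp (-x)), ← hxv]
    refine integral_congr_ae (ae_of_all _ fun s => ?_)
    ring_nf
  have hfubini := mellin_integral_exp_mul hμ hF.1
  rw [hF.2] at hfubini
  have hGamma := Gamma_ne_zero_of_re_pos ha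
  rw [mellin, setIntegral_congr_fun measurableSet_Ioi (fun v hv => congrArg _ (hlaplace v hv)),
    ← mellin] at hfubini
  have hconst := mellin_const_smul (fun v : ℝ => exp (-v) * remainder a (a + 1) N (x + v)) μ
    (Gamma a * exp (-x))
  simp only [smul_eq_mul] at hconst
  rw [hconst] at hfubini
  refine mul_left_cancel₀ (mul_ne_zero hGamma (exp_ne_zero (-x))) ?_
  linear_combination hfubini

lemma differentiableAt_regularizedKummer_add_of_re_pos {a β : ℂ} (ha : 0 < a.re) (hβ : 0 < β.re)
    (z : ℂ) : DifferentiableAt ℂ (fun β => regularizedKummer a (a + β) z) β := by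
  have hinv (s : ℂ) : DifferentiableAt ℂ (fun s => (Gamma s)⁻¹) s := differentiable_one_div_Gamma s
  set kernel : ℝ → ℂ := fun s : ℝ => exp (-(z * s)) *
      (Set.Ioc 0 1).indicator (fun s : ℝ => (1 - s : ℂ) ^ (a - 1)) s with hkernel
  have hmellin (β : ℂ) (hβ : 0 < β.re) : HasMellin kernel β
      (Gamma a * Gamma β * (exp (-z) * regularizedKummer a (a + β) z)) :=
    hasMellin_indicator_mul_exp ha hβ z
  have hloc : LocallyIntegrableOn kernel (Set.Ioi 0) := by
    refine IntegrableOn.locallyIntegrableOn ?_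
    simpa [MellinConvergent] using (hmellin 1 (by simp)).1
  have htop : kernel =O[atTop] fun s : ℝ => s ^ (-(β.re + 1)) := by
    refine EventuallyEq.trans_isBigO ?_ (isBigO_zero _ _)
    filter_upwards [eventually_gt_atTop 1] with s hs
    simp [hkernel, Set.indicator_of_notMem (fun h : s ∈ Set.Ioc (0 : ℝ) 1 => h.2.not_gt hs)]
  have hzero : kernel =O[𝓝[>] 0] fun s : ℝ => s ^ (-0 : ℝ) := by
    have hcont : ContinuousAt (fun s : ℝ => exp (-(z * s)) * (1 - s : ℂ) ^ (a - 1)) 0 := by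
      refine ContinuousAt.mul (by fun_prop) (ContinuousAt.cpow (by fun_prop) (by fun_prop) ?_)
      simp
    simp only [neg_zero, Real.rpow_zero]
    refine EventuallyEq.trans_isBigO ?_ ((hcont.tendsto.isBigO_one ℝ).mono nhdsWithin_le_nhds)
    filter_upwards [Ioc_mem_nhdsGT zero_lt_one] with s hs
    simp only [hkernel, Set.indicator_of_mem hs]
  have hdiff := mellin_differentiableAt_of_isBigO_rpow hloc htop (lt_add_one _) hzero hβ
  refine ((((hinv β).mul hdiff).const_mul ((Gamma a)⁻¹ * exp z)).congr_of_eventuallyEq) ?_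
  filter_upwards [(isOpen_lt continuous_const continuous_re).mem_nhds hβ] with β' hβ'
  have hGammaa := Gamma_ne_zero_of_re_pos ha
  have hGammaβ := Gamma_ne_zero_of_re_pos hβ'
  rw [Pi.mul_apply, (hmellin β' hβ').2, exp_neg]
  field_simp

lemma differentiable_regularizedKummer {a : ℂ} (ha : 0 < a.re) (z : ℂ) :
    Differentiable ℂ (fun β => regularizedKummer a (a + β) z) := by
  have hstrip (n : ℕ) : ∀ β : ℂ, -(n : ℝ) < β.re →
      DifferentiableAt ℂ (fun β => regularizedKummer a (a + β) z) β := by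
    induction n with
    | zero =>
      exact fun β hβ => differentiableAt_regularizedKummer_add_of_re_pos ha (by simpa using hβ) z
    | succ n ih =>
      intro β hβ
      push_cast at hβ
      have hone : DifferentiableAt ℂ (fun β => regularizedKummer a (a + (β + 1)) z) β :=
        (ih (β + 1) (by simp only [add_re, one_re]; linarith)).comp (f := (· + 1)) β (by fun_prop)
      have htwo : DifferentiableAt ℂ (fun β => regularizedKummer a (a + (β + 2)) z) β :=
        (ih (β + 2) (by simp only [add_re, re_ofNat]; linarith)).comp (f := (· + 2)) β (by fun_prop)
      have hrec : (fun β => regularizedKummer a (a + β) z) = fun β =>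
          (a + β + z) * regularizedKummer a (a + (β + 1)) z
            - (β + 1) * z * regularizedKummer a (a + (β + 2)) z := by
        ext β
        have := regularizedKummer_sub_one_right a (a + (β + 1)) z
        ring_nf at this ⊢
        exact this
      rw [hrec]
      fun_prop
  intro β
  obtain ⟨n, hn⟩ := exists_nat_gt (-β.re)
  exact hstrip n β (by linarith)

lemma differentiable_remainder {a : ℂ} (ha : 0 < a.re) (N : ℕ) {z : ℂ} (hz : z ≠ 0) :
    Differentiable ℂ (fun β => remainder a (a + β) N z) := by
  have (j : ℕ) : Differentiable ℂ (fun β : ℂ => (ascPochhammer ℂ j).eval (a + β - a)) :=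
    (ascPochhammer ℂ j).differentiable.comp (by fun_prop)
  have : Differentiable ℂ (fun β : ℂ => z ^ (a - (a + β))) :=
    Differentiable.const_cpow (by fun_prop) (Or.inl hz)
  have := differentiable_regularizedKummer ha z
  unfold remainder expPart
  fun_prop

lemma isBigO_rpow_neg_zero_of_continuousOn {E : Type*} [NormedAddCommGroup E] {f : ℝ → E}
    (hf : ContinuousOn f (Set.Ici 0)) : f =O[𝓝[>] 0] fun v : ℝ => v ^ (-0 : ℝ) := by
  simp only [neg_zero, Real.rpow_zero]
  exact ((hf 0 Set.self_mem_Ici).tendsto.mono_left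
    (nhdsWithin_mono 0 Set.Ioi_subset_Ici_self)).isBigO_one ℝ

lemma remainder_eq_mellin {a : ℂ} (ha : 0 < a.re) {N : ℕ} {x M : ℝ} (hx : 0 < x)
    (hcont : ContinuousOn (fun v : ℝ => exp (-v) * remainder a (a + 1) N (x + v)) (Set.Ici 0))
    (hdecay : (fun v : ℝ => exp (-v) * remainder a (a + 1) N (x + v)) =O[atTop]
      fun v => v ^ (-M)) {μ : ℂ} (hμ : 0 < μ.re) (hμM : μ.re < M) :
    remainder a (a + (1 - μ)) N x = (Gamma μ)⁻¹ * (Gamma (1 - μ))⁻¹ *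
      mellin (fun v : ℝ => exp (-v) * remainder a (a + 1) N (x + v)) μ := by
  set f : ℝ → ℂ := fun v => exp (-v) * remainder a (a + 1) N (x + v)
  have hinv : Differentiable ℂ fun s => (Gamma s)⁻¹ := differentiable_one_div_Gamma
  have hloc : LocallyIntegrableOn f (Set.Ioi 0) :=
    (hcont.mono Set.Ioi_subset_Ici_self).locallyIntegrableOn measurableSet_Ioi
  have hmellin (s : ℂ) (hs : 0 < s.re) (hsM : s.re < M) : DifferentiableAt ℂ (mellin f) s :=
    mellin_differentiableAt_of_isBigO_rpow hloc hdecay hsM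
      (isBigO_rpow_neg_zero_of_continuousOn hcont) hs
  have hremainder : Differentiable ℂ (fun s => remainder a (a + (1 - s)) N x) :=
    (differentiable_remainder ha N (ofReal_ne_zero.2 hx.ne')).comp (by fun_prop)
  have hopen (c : ℝ) : IsOpen {s : ℂ | 0 < s.re ∧ s.re < c} :=
    (isOpen_lt continuous_const continuous_re).inter (isOpen_lt continuous_re continuous_const)
  have hconvex : Convex ℝ {s : ℂ | 0 < s.re ∧ s.re < M} :=
    (convex_halfSpace_re_gt 0).inter (convex_halfSpace_re_lt M)
  have hbase : ((min 1 M / 2 : ℝ) : ℂ) ∈ {s : ℂ | 0 < s.re ∧ s.re < min 1 M} := by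
    have : 0 < min 1 M := lt_min one_pos (hμ.trans hμM)
    exact ⟨by rw [ofReal_re]; linarith, by rw [ofReal_re]; linarith⟩
  refine AnalyticOnNhd.eqOn_of_preconnected_of_eventuallyEq
    (g := fun s => (Gamma s)⁻¹ * (Gamma (1 - s))⁻¹ * mellin f s)
    (hremainder.differentiableOn.analyticOnNhd (hopen M))
    (DifferentiableOn.analyticOnNhd (fun s hs => ?_) (hopen M)) hconvex.isPreconnected
    ⟨hbase.1, hbase.2.trans_le (min_le_right 1 M)⟩ ?_ ⟨hμ, hμM⟩
  · exact (((hinv s).mul ((hinv (1 - s)).comp (f := (1 - ·)) s (by fun_prop))).mul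
      (hmellin s hs.1 hs.2)).differentiableWithinAt
  · filter_upwards [(hopen _).mem_nhds hbase] with s ⟨hs, hs'⟩
    have hs1 : s.re < 1 := hs'.trans_le (min_le_left 1 M)
    have hGamma := Gamma_ne_zero_of_re_pos hs
    have hGamma' := Gamma_ne_zero_of_re_pos (s := 1 - s) (by simpa using hs1)
    rw [mellin_remainder_add_one ha hs hs1 N hx]
    field_simp

/-! ### The remainder to the right of the truncation point -/

/-- The weight `(2m + v)⁻ᵐ`, used to dominate integrands uniformly in large parameters. The shift
`2m` keeps the logarithmic derivative of `exp v * polyDecay m v` above `1 / 2`. -/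
noncomputable def polyDecay (m : ℕ) (v : ℝ) : ℝ := ((2 * m + v) ^ m)⁻¹

lemma polyDecay_pos {m : ℕ} (hm : 0 < m) {v : ℝ} (hv : 0 ≤ v) : 0 < polyDecay m v := by
  unfold polyDecay; positivity

lemma hasDerivAt_exp_mul_polyDecay {m : ℕ} (hm : 0 < m) {v : ℝ} (hv : 0 ≤ v) :
    HasDerivAt (fun v => Real.exp v * polyDecay m v)
      (Real.exp v * polyDecay m v * (1 - m / (2 * m + v))) v := by
  have hpos : 0 < 2 * m + v := by positivity
  have hpow : HasDerivAt (fun v : ℝ => (2 * m + v) ^ m) (m * (2 * m + v) ^ (m - 1)) v := by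
    simpa using ((hasDerivAt_id v).const_add (2 * m : ℝ)).fun_pow m
  refine ((Real.hasDerivAt_exp v).mul (hpow.inv (by positivity))).congr_deriv ?_
  obtain ⟨k, rfl⟩ := Nat.exists_eq_succ_of_ne_zero hm.ne'
  simp only [polyDecay, Pi.inv_apply, Nat.succ_eq_add_one, Nat.add_sub_cancel, pow_succ]
  field_simp
  ring

lemma half_le_one_sub_div {m : ℕ} (hm : 0 < m) {v : ℝ} (hv : 0 ≤ v) :
    1 / 2 ≤ 1 - m / (2 * m + v) := by
  have : (0 : ℝ) < m := Nat.cast_pos.2 hm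
  rw [le_sub_comm, div_le_iff₀ (by positivity)]
  linarith

lemma abs_le_mul_exp_mul_polyDecay {f f' : ℝ → ℝ} {m : ℕ} (hm : 0 < m) {A : ℝ}
    (hderiv : ∀ t, 0 ≤ t → HasDerivAt f (f' t) t) (hzero : |f 0| ≤ A * polyDecay m 0)
    (hf' : ∀ t, 0 ≤ t → |f' t| ≤ A / 2 * (Real.exp t * polyDecay m t)) (v : ℝ) (hv : 0 ≤ v) :
    |f v| ≤ A * (Real.exp v * polyDecay m v) := by
  have hA : 0 ≤ A :=
    nonneg_of_mul_nonneg_left ((abs_nonneg _).trans hzero) (polyDecay_pos hm le_rfl)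
  refine image_norm_le_of_norm_deriv_right_le_deriv_boundary' (a := 0) (b := v)
    (B := fun v => A * (Real.exp v * polyDecay m v))
    (HasDerivAt.continuousOn fun t ht => hderiv t ht.1)
    (fun t ht => (hderiv t ht.1).hasDerivWithinAt) (by simpa using hzero)
    (HasDerivAt.continuousOn fun t ht => (hasDerivAt_exp_mul_polyDecay hm ht.1).const_mul A)
    (fun t ht => ((hasDerivAt_exp_mul_polyDecay hm ht.1).const_mul A).hasDerivWithinAt)
    (fun t ht => ?_) (Set.right_mem_Icc.2 hv)
  have hw := polyDecay_pos hm ht.1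
  calc |f' t| ≤ A / 2 * (Real.exp t * polyDecay m t) := hf' t ht.1
    _ = A * (Real.exp t * polyDecay m t * (1 / 2)) := by ring
    _ ≤ A * (Real.exp t * polyDecay m t * (1 - m / (2 * m + t))) := by
        gcongr
        exact half_le_one_sub_div hm ht.1

lemma abs_exp_neg_sub_exp_neg_le {r u v : ℝ} (hu : r ≤ u) (hv : r ≤ v) :
    |Real.exp (-u) - Real.exp (-v)| ≤ |u - v| * Real.exp (-r) := by
  wlog huv : u ≤ v generalizing u v
  · rw [abs_sub_comm, abs_sub_comm u]
    exact this hv hu (le_of_not_ge huv)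
  rw [abs_of_nonneg (sub_nonneg.2 (Real.exp_le_exp.2 (neg_le_neg huv))), abs_sub_comm,
    abs_of_nonneg (sub_nonneg.2 huv)]
  calc Real.exp (-u) - Real.exp (-v) = (1 - Real.exp (-(v - u))) * Real.exp (-u) := by
        rw [sub_mul, ← Real.exp_add]; ring_nf
    _ ≤ (v - u) * Real.exp (-r) := by
        refine mul_le_mul (by linarith [Real.add_one_le_exp (-(v - u))])
          (Real.exp_le_exp.2 (neg_le_neg hu)) (Real.exp_nonneg _) (sub_nonneg.2 huv)

lemma mul_log_one_add_div_le {m : ℕ} (hm : 0 < m) {p x v : ℝ} (hx : 0 < x) (hpx : x ≤ 2 * p)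
    (hmp : m ≤ p) (hv : 0 ≤ v) :
    m * Real.log (1 + v / (2 * m)) ≤ p * Real.log (1 + v / x) := by
  have hm' : (0 : ℝ) < m := Nat.cast_pos.2 hm
  have hbernoulli : 1 + p / m * (v / x) ≤ (1 + v / x) ^ (p / m) :=
    one_add_mul_self_le_rpow_one_add (by linarith [div_nonneg hv hx.le]) ((one_le_div hm').2 hmp)
  have hle : 1 + v / (2 * m) ≤ 1 + p / m * (v / x) := by
    have : 1 ≤ 2 * p / x := (one_le_div hx).2 hpx
    have : v / (2 * m) * 1 ≤ v / (2 * m) * (2 * p / x) := by gcongr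
    have heq : v / (2 * m) * (2 * p / x) = p / m * (v / x) := by field_simp
    linarith
  have hlog := Real.log_le_log (by positivity) (hle.trans hbernoulli)
  rw [Real.log_rpow (by positivity)] at hlog
  calc m * Real.log (1 + v / (2 * m)) ≤ m * (p / m * Real.log (1 + v / x)) := by gcongr
    _ = p * Real.log (1 + v / x) := by field_simp

lemma mul_log_one_add_div_le_self (m : ℕ) {v : ℝ} (hv : 0 ≤ v) :
    m * Real.log (1 + v / (2 * m)) ≤ v := by
  rcases m.eq_zero_or_pos with rfl | hm
  · simpa using hv
  calc m * Real.log (1 + v / (2 * m)) ≤ m * (v / (2 * m)) := by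
        gcongr
        linarith [Real.log_le_sub_one_of_pos (show 0 < 1 + v / (2 * m) by positivity)]
    _ = v / 2 := by field_simp
    _ ≤ v := half_le_self hv

lemma abs_mul_log_one_add_div_sub_le {p x v : ℝ} (hx : 0 < x) (hv : 0 ≤ v) :
    |p * Real.log (1 + v / x) - v| ≤ (|x - p| + 1) * (1 + v) ^ 2 / x := by
  have hupper : Real.log (1 + v / x) ≤ v / x := by
    linarith [Real.log_le_sub_one_of_pos (show 0 < 1 + v / x by positivity)]
  have hlower : v / (x + v) ≤ Real.log (1 + v / x) := by
    have := Real.one_sub_inv_le_log_of_pos (show 0 < 1 + v / x by positivity)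
    convert this using 1
    field_simp
    ring
  have hnonneg : 0 ≤ Real.log (1 + v / x) := le_trans (by positivity) hlower
  have hquad : |x * Real.log (1 + v / x) - v| ≤ v ^ 2 / x := by
    have hle : x * Real.log (1 + v / x) ≤ v := by
      rwa [← le_div_iff₀' hx]
    have hge : v - x * Real.log (1 + v / x) ≤ v ^ 2 / x := calc
      v - x * Real.log (1 + v / x) ≤ v - x * (v / (x + v)) := by gcongr
      _ = v ^ 2 / (x + v) := by field_simp; ring
      _ ≤ v ^ 2 / x := by gcongr; linarith
    rwa [abs_sub_comm, abs_of_nonneg (sub_nonneg.2 hle)]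
  calc |p * Real.log (1 + v / x) - v|
      = |(x * Real.log (1 + v / x) - v) - (x - p) * Real.log (1 + v / x)| := by ring_nf
    _ ≤ v ^ 2 / x + |x - p| * (v / x) := by
        refine (abs_sub _ _).trans (add_le_add hquad ?_)
        rw [abs_mul, abs_of_nonneg hnonneg]
        gcongr
    _ ≤ (|x - p| + 1) * (1 + v) ^ 2 / x := by
        rw [← mul_div_assoc, ← add_div]
        gcongr
        nlinarith [abs_nonneg (x - p), mul_nonneg (abs_nonneg (x - p)) hv,
          mul_nonneg (abs_nonneg (x - p)) (sq_nonneg v)]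

lemma sq_mul_exp_neg_le_polyDecay {m : ℕ} (hm : 0 < m) {r v : ℝ} (hv : 0 ≤ v)
    (hr : (m + 2 : ℕ) * Real.log (1 + v / (2 * (m + 2 : ℕ))) ≤ r) :
    (1 + v) ^ 2 * Real.exp (-r) ≤ (2 * (m + 2)) ^ (m + 2) * polyDecay m v := by
  have hm' : (1 : ℝ) ≤ m := Nat.one_le_cast.2 hm
  have hpos : 0 < 1 + v / (2 * (m + 2 : ℕ)) := by positivity
  have hexp : Real.exp (-r) ≤ (2 * (m + 2)) ^ (m + 2) / (2 * m + v) ^ (m + 2) :=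
    calc Real.exp (-r) ≤ Real.exp (-((m + 2 : ℕ) * Real.log (1 + v / (2 * (m + 2 : ℕ))))) :=
          Real.exp_le_exp.2 (neg_le_neg hr)
      _ = (2 * (m + 2)) ^ (m + 2) / (2 * (m + 2) + v) ^ (m + 2) := by
          rw [Real.exp_neg, Real.exp_nat_mul, Real.exp_log hpos, ← inv_pow, ← div_pow]
          push_cast
          field_simp
      _ ≤ (2 * (m + 2)) ^ (m + 2) / (2 * m + v) ^ (m + 2) := by gcongr; linarith
  calc (1 + v) ^ 2 * Real.exp (-r)
      ≤ (2 * m + v) ^ 2 * ((2 * (m + 2)) ^ (m + 2) / (2 * m + v) ^ (m + 2)) := by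
        gcongr; linarith
    _ = (2 * (m + 2)) ^ (m + 2) * polyDecay m v := by
        have : 2 * m + v ≠ 0 := by positivity
        rw [polyDecay, pow_add (2 * (m : ℝ) + v)]
        field_simp

lemma exists_eventually_abs_rpow_sub_exp_neg_le (K : ℝ) {m : ℕ} (hm : 0 < m) :
    ∃ C, ∀ᶠ x in atTop, ∀ p, |x - p| ≤ K → ∀ v, 0 ≤ v →
      |(1 + v / x) ^ (-p) - Real.exp (-v)| ≤ C / x * polyDecay m v := by
  refine ⟨(K + 1) * (2 * (m + 2)) ^ (m + 2), ?_⟩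
  filter_upwards [eventually_gt_atTop 0, eventually_ge_atTop (2 * K),
    eventually_ge_atTop (K + (m + 2 : ℕ))] with x hx hxK hxm p hp v hv
  have hpx := (abs_le.1 hp).2
  have hlog := mul_log_one_add_div_le (m := m + 2) (by positivity) hx
    (by linarith : x ≤ 2 * p) (by linarith) hv
  set r : ℝ := (m + 2 : ℕ) * Real.log (1 + v / (2 * (m + 2 : ℕ))) with hr
  calc |(1 + v / x) ^ (-p) - Real.exp (-v)|
      = |Real.exp (-(p * Real.log (1 + v / x))) - Real.exp (-v)| := by
        rw [Real.rpow_def_of_pos (by positivity)]; ring_nf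
    _ ≤ |p * Real.log (1 + v / x) - v| * Real.exp (-r) :=
        abs_exp_neg_sub_exp_neg_le hlog (mul_log_one_add_div_le_self _ hv)
    _ ≤ (K + 1) * (1 + v) ^ 2 / x * Real.exp (-r) := by
        gcongr
        exact (abs_mul_log_one_add_div_sub_le hx hv).trans (by gcongr)
    _ = (K + 1) / x * ((1 + v) ^ 2 * Real.exp (-r)) := by ring
    _ ≤ (K + 1) / x * ((2 * (m + 2)) ^ (m + 2) * polyDecay m v) := by
        have : 0 ≤ K := (abs_nonneg _).trans hp
        exact mul_le_mul_of_nonneg_left (sq_mul_exp_neg_le_polyDecay hm hv hr.ge) (by positivity)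
    _ = (K + 1) * (2 * (m + 2)) ^ (m + 2) / x * polyDecay m v := by ring

lemma sq_mul_exp_neg_self_le_polyDecay {m : ℕ} (hm : 0 < m) {v : ℝ} (hv : 0 ≤ v) :
    (1 + v) ^ 2 * Real.exp (-v) ≤ (2 * (m + 2)) ^ (m + 2) * polyDecay m v :=
  sq_mul_exp_neg_le_polyDecay hm hv (mul_log_one_add_div_le_self _ hv)

lemma terminantSlope_add (s : ℝ) {x v : ℝ} (hx : 0 < x) (hv : 0 ≤ v) :
    terminantSlope s (x + v) = terminantSlope s x * (Real.exp v * (1 + v / x) ^ (-(s + 1))) := by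
  have hsplit : x + v = x * (1 + v / x) := by field_simp
  rw [terminantSlope, terminantSlope, Real.exp_add,
    show (x + v) ^ (-s - 1) = x ^ (-s - 1) * (1 + v / x) ^ (-s - 1) by
      rw [hsplit, Real.mul_rpow hx.le (by positivity)], neg_add']
  ring

lemma terminantSlope_add_sub_eq (s c : ℝ) {x v : ℝ} (hx : 0 < x) (hv : 0 ≤ v) :
    terminantSlope s (x + v) - c = Real.exp v *
      (terminantSlope s x * ((1 + v / x) ^ (-(s + 1)) - Real.exp (-v))
        + (terminantSlope s x - c) * Real.exp (-v)) := by
  have := Real.exp_ne_zero v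
  rw [terminantSlope_add s hx hv, Real.exp_neg]
  field_simp
  ring

lemma exists_eventually_abs_terminantSlope_add_sub_le (K : ℝ) {m : ℕ} (hm : 0 < m) :
    ∃ C, ∀ᶠ x in atTop, ∀ s, |x - s| ≤ K → ∀ v, 0 ≤ v →
      |terminantSlope s (x + v) - √(2 * Real.pi / x)|
        ≤ C / x * (Real.exp v * polyDecay m v) := by
  obtain ⟨C, hC⟩ := exists_eventually_abs_terminantSlope_sub_le K
  obtain ⟨C', hC'⟩ := exists_eventually_abs_rpow_sub_exp_neg_le (K + 1) hm
  refine ⟨(C + 3) * C' + C * (2 * (m + 2)) ^ (m + 2), ?_⟩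
  filter_upwards [hC, hC', eventually_ge_atTop 1] with x hslope hkernel hx s hs v hv
  have hx0 : 0 < x := by linarith
  have hC0 : 0 ≤ C / x := (abs_nonneg _).trans (hslope s hs)
  have hC0' : 0 ≤ C := by simpa [hx0.ne'] using mul_nonneg hC0 hx0.le
  have hp : |x - (s + 1)| ≤ K + 1 := by
    rw [← sub_sub]; exact (abs_sub _ _).trans (by simpa using hs)
  have hslope_le : |terminantSlope s x| ≤ C + 3 := by
    have hdist := abs_le.1 ((hslope s hs).trans (div_le_self hC0' hx))
    rw [abs_le]
    constructor <;> linarith [sqrt_two_pi_div_le hx, Real.sqrt_nonneg (2 * Real.pi / x)]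
  have hexp : Real.exp (-v) ≤ (2 * (m + 2)) ^ (m + 2) * polyDecay m v :=
    (le_mul_of_one_le_left (Real.exp_nonneg _) (one_le_pow₀ (by linarith))).trans
      (sq_mul_exp_neg_self_le_polyDecay hm hv)
  calc |terminantSlope s (x + v) - √(2 * Real.pi / x)|
      = Real.exp v * |terminantSlope s x * ((1 + v / x) ^ (-(s + 1)) - Real.exp (-v))
          + (terminantSlope s x - √(2 * Real.pi / x)) * Real.exp (-v)| := by
        rw [terminantSlope_add_sub_eq s _ hx0 hv, abs_mul, Real.abs_exp]
    _ ≤ Real.exp v * ((C + 3) * (C' / x * polyDecay m v)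
          + C / x * ((2 * (m + 2)) ^ (m + 2) * polyDecay m v)) := by
        gcongr
        refine (abs_add_le _ _).trans (add_le_add ?_ ?_) <;> rw [abs_mul]
        · exact mul_le_mul hslope_le (hkernel _ hp v hv) (abs_nonneg _) (by positivity)
        · rw [Real.abs_exp]
          exact mul_le_mul (hslope s hs) hexp (Real.exp_nonneg _) hC0
    _ = _ := by ring

lemma hasDerivAt_terminant_add_sub {s : ℝ} (hs : ∀ k : ℕ, s ≠ k) {x t : ℝ} (hxt : 0 < x + t)
    (c : ℝ) : HasDerivAt (fun v => terminant s (x + v) - c * (x + v - s - 1 / 3))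
      (terminantSlope s (x + t) - c) t := by
  have hline : HasDerivAt (fun v => x + v - s - 1 / 3) 1 t :=
    (((hasDerivAt_id t).const_add x).sub_const s).sub_const (1 / 3)
  simpa only [mul_one] using
    ((hasDerivAt_terminant hs hxt).comp_const_add x t).fun_sub (hline.const_mul c)

lemma exists_eventually_abs_exp_neg_mul_terminant_sub_le (K : ℝ) {m : ℕ} (hm : 0 < m) :
    ∃ C, ∀ᶠ x : ℝ in atTop, ∀ s : ℝ, (∀ k : ℤ, s ≠ k) → |x - s| ≤ K → ∀ v, 0 ≤ v →
      |Real.exp (-v) * (terminant s (x + v) - √(2 * Real.pi / x) * (x + v - s - 1 / 3))|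
        ≤ C / x * polyDecay m v := by
  obtain ⟨C, hC⟩ := exists_eventually_abs_terminantError_le K
  obtain ⟨C', hC'⟩ := exists_eventually_abs_terminantSlope_add_sub_le K hm
  refine ⟨2 * C' + C / polyDecay m 0, ?_⟩
  filter_upwards [hC, hC', eventually_gt_atTop 0] with x herror hslope hx s hs hsx v hv
  have hw0 := polyDecay_pos hm le_rfl
  have hC0 : 0 ≤ C / x := (abs_nonneg _).trans (herror s hs hsx)
  have hC0' : 0 ≤ C' / x := by
    have := (abs_nonneg _).trans (hslope s hsx 0 le_rfl)
    exact nonneg_of_mul_nonneg_left this (by positivity)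
  have hderiv (t : ℝ) (ht : 0 ≤ t) := hasDerivAt_terminant_add_sub
    (fun k : ℕ => by exact_mod_cast hs k) (by positivity : 0 < x + t) √(2 * Real.pi / x)
  have hA : (2 * C' + C / polyDecay m 0) / x = 2 * (C' / x) + C / x / polyDecay m 0 := by ring
  have hC0w : 0 ≤ C / x / polyDecay m 0 := by positivity
  have hbound := abs_le_mul_exp_mul_polyDecay hm hderiv
    (A := (2 * C' + C / polyDecay m 0) / x) ?_ (fun t ht => (hslope s hsx t ht).trans ?_) v hv
  · rw [abs_mul, Real.abs_exp, Real.exp_neg, inv_mul_le_iff₀ (Real.exp_pos v)]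
    exact hbound.trans_eq (by ring)
  · have hinit : |terminantError s x| ≤ C / x := herror s hs hsx
    have : C / x ≤ (2 * C' + C / polyDecay m 0) / x * polyDecay m 0 := by
      rw [hA, add_mul, div_mul_cancel₀ _ hw0.ne']
      exact le_add_of_nonneg_left (by positivity)
    simpa [terminantError] using hinit.trans this
  · have := polyDecay_pos hm ht
    exact mul_le_mul_of_nonneg_right (by linarith) (by positivity)

/-! ### Two-term expansions -/

/-- The bracket `cos πa + 2 sin πa / √(2πx) * t` of the expansion, with `t` standing for the
correction term `2/3 - α`. -/
noncomputable def stokesFactor (a t x : ℝ) : ℝ :=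
  Real.cos (Real.pi * a) + 2 * Real.sin (Real.pi * a) / √(2 * Real.pi * x) * t

lemma two_div_sqrt_two_pi_mul {x : ℝ} (hx : 0 < x) :
    2 / √(2 * Real.pi * x) = √(2 * Real.pi / x) / Real.pi := by
  rw [div_eq_div_iff (by positivity) (by positivity), ← Real.sqrt_mul (by positivity),
    show 2 * Real.pi / x * (2 * Real.pi * x) = (2 * Real.pi) ^ 2 by field_simp,
    Real.sqrt_sq (by positivity)]

lemma stokesFactor_eq (a t : ℝ) {x : ℝ} (hx : 0 < x) :
    stokesFactor a t x
      = Real.cos (Real.pi * a) + Real.sin (Real.pi * a) / Real.pi * (√(2 * Real.pi / x) * t) := by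
  rw [stokesFactor, mul_comm 2, mul_div_assoc, two_div_sqrt_two_pi_mul hx]
  ring

lemma abs_stokesFactor_le (a t : ℝ) {x : ℝ} (hx : 1 ≤ x) : |stokesFactor a t x| ≤ 1 + |t| := by
  have hsqrt : 2 / √(2 * Real.pi * x) ≤ 1 := by
    rw [two_div_sqrt_two_pi_mul (by linarith), div_le_one Real.pi_pos]
    exact (sqrt_two_pi_div_le hx).trans Real.pi_gt_three.le
  calc |stokesFactor a t x|
      ≤ |Real.cos (Real.pi * a)| + 2 / √(2 * Real.pi * x) * |Real.sin (Real.pi * a)| * |t| := by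
        refine (abs_add_le _ _).trans_eq ?_
        rw [abs_mul, abs_div, abs_mul, abs_two, abs_of_nonneg (Real.sqrt_nonneg _)]
        ring
    _ ≤ 1 + 1 * 1 * |t| := by
        gcongr
        · exact Real.abs_cos_le_one _
        · exact Real.abs_sin_le_one _
    _ = 1 + |t| := by ring

lemma abs_add_rpow_neg_sub_le {a x v : ℝ} (ha : 0 ≤ a) (hx : 0 < x) (hv : 0 ≤ v) :
    |(x + v) ^ (-a) - x ^ (-a)| ≤ a * v * x ^ (-a - 1) := by
  have hle : (x + v) ^ (-a) ≤ x ^ (-a) :=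
    Real.rpow_le_rpow_of_nonpos hx (by linarith) (by linarith)
  have hlog : Real.log (1 + v / x) ≤ v / x := by
    linarith [Real.log_le_sub_one_of_pos (show 0 < 1 + v / x by positivity)]
  have hbernoulli : 1 - a * (v / x) ≤ (1 + v / x) ^ (-a) := by
    rw [Real.rpow_def_of_pos (by positivity)]
    nlinarith [Real.add_one_le_exp (Real.log (1 + v / x) * -a), mul_le_mul_of_nonneg_left hlog ha]
  have hsplit : (x + v) ^ (-a) = x ^ (-a) * (1 + v / x) ^ (-a) := by
    rw [← Real.mul_rpow hx.le (by positivity), mul_add, mul_one, mul_div_cancel₀ _ hx.ne']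
  rw [abs_sub_comm, abs_of_nonneg (sub_nonneg.2 hle), hsplit, Real.rpow_sub_one hx.ne']
  calc x ^ (-a) - x ^ (-a) * (1 + v / x) ^ (-a)
      = x ^ (-a) * (1 - (1 + v / x) ^ (-a)) := by ring
    _ ≤ x ^ (-a) * (a * (v / x)) := by gcongr; linarith
    _ = a * v * (x ^ (-a) / x) := by ring

lemma abs_exp_neg_mul_rpow_sub_mul_stokesFactor_le {a K x s v : ℝ} {m : ℕ} (hm : 0 < m)
    (ha : 0 ≤ a) (hx : 1 ≤ x) (hsx : |x - s| ≤ K) (hv : 0 ≤ v) :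
    |Real.exp (-v) * (((x + v) ^ (-a) - x ^ (-a)) * stokesFactor a (x + v - s - 1 / 3) x)|
      ≤ a * (K + 2) * (2 * (m + 2)) ^ (m + 2) * x ^ (-a - 1) * polyDecay m v := by
  have hK : 0 ≤ K := (abs_nonneg _).trans hsx
  have hfactor : |stokesFactor a (x + v - s - 1 / 3) x| ≤ (K + 2) * (1 + v) := by
    refine (abs_stokesFactor_le a _ hx).trans ?_
    have : |x + v - s - 1 / 3| ≤ K + v + 1 / 3 := by
      rw [abs_le] at hsx ⊢
      constructor <;> linarith
    nlinarith [mul_nonneg hK hv]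
  rw [abs_mul, abs_mul, Real.abs_exp]
  calc Real.exp (-v) * (|(x + v) ^ (-a) - x ^ (-a)| * |stokesFactor a (x + v - s - 1 / 3) x|)
      ≤ Real.exp (-v) * (a * (1 + v) * x ^ (-a - 1) * ((K + 2) * (1 + v))) := by
        gcongr
        refine (abs_add_rpow_neg_sub_le ha (by linarith) hv).trans ?_
        gcongr
        linarith
    _ = a * (K + 2) * x ^ (-a - 1) * ((1 + v) ^ 2 * Real.exp (-v)) := by ring
    _ ≤ a * (K + 2) * x ^ (-a - 1) * ((2 * (m + 2)) ^ (m + 2) * polyDecay m v) := by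
        gcongr a * (K + 2) * x ^ (-a - 1) * ?_
        exact sq_mul_exp_neg_self_le_polyDecay hm hv
    _ = _ := by ring

lemma exp_neg_mul_remainder_add_one {a : ℝ} (ha : ∀ k : ℤ, a ≠ k) (N : ℕ) {x v : ℝ}
    (hxv : 0 < x + v) :
    exp (-v) * remainder a (a + 1) N (x + v) = ((Real.exp (-v) * ((x + v) ^ (-a) *
      (Real.cos (Real.pi * a) + Real.sin (Real.pi * a) / Real.pi * terminant (N - a) (x + v))) :
        ℝ) : ℂ) := by
  rw [ofReal_mul, ← remainder_add_one_right ha N hxv]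
  push_cast
  rfl

lemma natCast_sub_ne_intCast {a : ℝ} (ha : ∀ k : ℤ, a ≠ k) (N : ℕ) (k : ℤ) : (N : ℝ) - a ≠ k :=
  fun h => ha (N - k) (by push_cast; linarith)

lemma abs_sin_pi_mul_div_pi_le_one (a : ℝ) : |Real.sin (Real.pi * a) / Real.pi| ≤ 1 := by
  rw [abs_div, abs_of_pos Real.pi_pos, div_le_one Real.pi_pos]
  linarith [Real.abs_sin_le_one (Real.pi * a), Real.pi_gt_three]

lemma exists_eventually_norm_exp_neg_mul_remainder_sub_le {a : ℝ} (hpos : 0 < a)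
    (ha : ∀ k : ℤ, a ≠ k) (K : ℝ) {m : ℕ} (hm : 0 < m) :
    ∃ C, ∀ᶠ x : ℝ in atTop, ∀ N : ℕ, |N - x| ≤ K → ∀ v : ℝ, 0 ≤ v →
      ‖exp (-v) * remainder a (a + 1) N (x + v)
        - exp (-v) * (x ^ (-a) * stokesFactor a (x - (N - a) - 1 / 3 + v) x : ℝ)‖
        ≤ C * x ^ (-a - 1) * polyDecay m v := by
  obtain ⟨C, hC⟩ := exists_eventually_abs_exp_neg_mul_terminant_sub_le (K + a) hm
  refine ⟨C + a * (K + a + 2) * (2 * (m + 2)) ^ (m + 2), ?_⟩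
  filter_upwards [hC, eventually_ge_atTop 1] with x hterminant hx N hN v hv
  have hx0 : 0 < x := by linarith
  set s : ℝ := N - a with hs
  have hsx : |x - s| ≤ K + a := by
    rw [abs_le] at hN ⊢
    constructor <;> linarith
  have hbound := hterminant s (natCast_sub_ne_intCast ha N) hsx v hv
  have hpow : (x + v) ^ (-a) ≤ x ^ (-a) :=
    Real.rpow_le_rpow_of_nonpos hx0 (by linarith) (by linarith)
  have hsin := abs_sin_pi_mul_div_pi_le_one a
  rw [exp_neg_mul_remainder_add_one ha N (by linarith), ← ofReal_neg, ← ofReal_exp,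
    ← ofReal_mul, ← ofReal_sub, norm_real, Real.norm_eq_abs, ← hs,
    show x - s - 1 / 3 + v = x + v - s - 1 / 3 by ring]
  calc _ = |(x + v) ^ (-a) * (Real.sin (Real.pi * a) / Real.pi) * (Real.exp (-v) *
            (terminant s (x + v) - √(2 * Real.pi / x) * (x + v - s - 1 / 3)))
          + Real.exp (-v) * (((x + v) ^ (-a) - x ^ (-a))
            * stokesFactor a (x + v - s - 1 / 3) x)| := by
        rw [stokesFactor_eq a _ hx0]; ring_nf
    _ ≤ x ^ (-a) * 1 * (C / x * polyDecay m v)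
          + a * (K + a + 2) * (2 * (m + 2)) ^ (m + 2) * x ^ (-a - 1) * polyDecay m v := by
        refine (abs_add_le _ _).trans (add_le_add ?_
          (abs_exp_neg_mul_rpow_sub_mul_stokesFactor_le hm hpos.le hx hsx hv))
        rw [abs_mul, abs_mul, abs_of_pos (Real.rpow_pos_of_pos (by linarith : 0 < x + v) _)]
        gcongr
    _ = _ := by rw [Real.rpow_sub_one hx0.ne']; ring

lemma hasMellin_exp_neg_mul_affine {μ : ℂ} (hμ : 0 < μ.re) (c d : ℂ) :
    HasMellin (fun v : ℝ => exp (-v) * (c + d * v)) μ (Gamma μ * (c + d * μ)) := by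
  have hexp {s : ℂ} (hs : 0 < s.re) : HasMellin (fun v : ℝ => exp (-v)) s (Gamma s) := by
    simpa using hasMellin_exp_neg_mul hs one_pos
  have hshift : 0 < (μ + 1).re := by simp only [add_re, one_re]; linarith
  have hlinear : HasMellin (fun v : ℝ => (v : ℂ) ^ (1 : ℂ) • exp (-v)) μ (Gamma (μ + 1)) :=
    ⟨MellinConvergent.cpow_smul.2 (hexp hshift).1, by rw [mellin_cpow_smul, (hexp hshift).2]⟩
  have hne : μ ≠ 0 := by rintro rfl; simp at hμ
  have hconst := hasMellin_const_smul (hexp hμ).1 c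
  have hlin := hasMellin_const_smul hlinear.1 d
  have hsum := hasMellin_add hconst.1 hlin.1
  rw [hconst.2, hlin.2, (hexp hμ).2, hlinear.2, Gamma_add_one μ hne] at hsum
  convert hsum using 1
  · ext v
    simp only [cpow_one, smul_eq_mul]
    ring
  · simp only [smul_eq_mul]
    ring

lemma norm_mellin_sub_le {f g : ℝ → ℂ} {w : ℝ → ℝ} {μ : ℂ} {D : ℝ} (hf : MellinConvergent f μ)
    (hg : MellinConvergent g μ)
    (hw : IntegrableOn (fun v => v ^ (μ.re - 1) * w v) (Set.Ioi 0))
    (hfg : ∀ v, 0 < v → ‖f v - g v‖ ≤ D * w v) :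
    ‖mellin f μ - mellin g μ‖ ≤ D * ∫ v in Set.Ioi 0, v ^ (μ.re - 1) * w v := by
  rw [← (hasMellin_sub hf hg).2, mellin, ← integral_const_mul]
  refine norm_integral_le_of_norm_le (hw.const_mul D) ?_
  filter_upwards [ae_restrict_mem measurableSet_Ioi] with v hv
  rw [norm_smul, norm_cpow_eq_rpow_re_of_pos hv, sub_re, one_re, mul_left_comm]
  gcongr
  · exact Real.rpow_nonneg (le_of_lt hv) _
  · exact hfg v hv

lemma polyDecay_isBigO (m : ℕ) : polyDecay m =O[atTop] fun v : ℝ => v ^ (-m : ℝ) := by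
  refine IsBigO.of_bound 1 ?_
  filter_upwards [eventually_gt_atTop 0] with v hv
  rw [polyDecay, Real.rpow_neg hv.le, Real.rpow_natCast, Real.norm_of_nonneg (by positivity),
    Real.norm_of_nonneg (by positivity), one_mul]
  gcongr
  linarith [(Nat.cast_nonneg m : (0 : ℝ) ≤ m)]

lemma continuousOn_polyDecay {m : ℕ} (hm : 0 < m) : ContinuousOn (polyDecay m) (Set.Ici 0) := by
  unfold polyDecay
  refine ContinuousOn.inv₀ (by fun_prop) fun v hv => ?_
  have : 0 ≤ v := hv
  positivity

lemma integrableOn_rpow_mul_polyDecay {μ : ℝ} (hμ : 0 < μ) {m : ℕ} (hμm : μ < m) :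
    IntegrableOn (fun v => v ^ (μ - 1) * polyDecay m v) (Set.Ioi 0) := by
  have hcont := continuousOn_polyDecay (m := m) (by exact_mod_cast hμ.trans hμm)
  refine mellin_convergent_of_isBigO_scalar
    ((hcont.mono Set.Ioi_subset_Ici_self).locallyIntegrableOn measurableSet_Ioi)
    (polyDecay_isBigO m) hμm (isBigO_rpow_neg_zero_of_continuousOn hcont) hμ

lemma continuousOn_exp_neg_mul_remainder {a : ℝ} (ha : ∀ k : ℤ, a ≠ k) (N : ℕ) {x : ℝ}
    (hx : 0 < x) :
    ContinuousOn (fun v : ℝ => exp (-v) * remainder a (a + 1) N (x + v)) (Set.Ici 0) := by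
  have hxv {v : ℝ} (hv : v ∈ Set.Ici 0) : 0 < x + v := add_pos_of_pos_of_nonneg hx hv
  have hterminant : ContinuousOn (fun v => terminant (N - a) (x + v)) (Set.Ici 0) :=
    HasDerivAt.continuousOn fun v hv => (hasDerivAt_terminant
      (fun k => by exact_mod_cast natCast_sub_ne_intCast ha N k) (hxv hv)).comp_const_add x v
  have hpow : ContinuousOn (fun v => (x + v) ^ (-a)) (Set.Ici 0) :=
    ContinuousOn.rpow_const (by fun_prop) fun v hv => Or.inl (hxv hv).ne'
  refine ContinuousOn.congr ?_ fun v hv => exp_neg_mul_remainder_add_one ha N (hxv hv)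
  exact continuous_ofReal.comp_continuousOn (by fun_prop)

lemma exp_neg_mul_affine_isBigO (c d : ℂ) (m : ℕ) :
    (fun v : ℝ => exp (-v) * (c + d * v)) =O[atTop] fun v : ℝ => v ^ (-m : ℝ) := by
  have haffine : (fun v : ℝ => c + d * v) =O[atTop] fun v : ℝ => v ^ (1 : ℝ) := by
    simp only [Real.rpow_one]
    refine IsBigO.add ?_ ?_
    · exact (isLittleO_const_id_atTop c).isBigO
    · exact (isBigO_const_mul_self d _ _).trans
        (IsBigO.of_bound 1 (by simp))
  have hexp : (fun v : ℝ => exp (-v)) =O[atTop] fun v : ℝ => v ^ (-m - 1 : ℝ) := by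
    refine IsBigO.trans (IsBigO.of_bound 1 ?_) (isLittleO_exp_neg_mul_rpow_atTop one_pos _).isBigO
    simp [norm_exp]
  refine (hexp.mul haffine).trans_eventuallyEq ?_
  filter_upwards [eventually_gt_atTop 0] with v hv
  rw [← Real.rpow_add hv]
  ring_nf

/-- The right-hand side of the expansion, for truncation after an arbitrary number `N` of terms. -/
noncomputable def twoTerm (a b : ℝ) (N : ℕ) (x : ℝ) : ℂ :=
  (x : ℂ) ^ (-a : ℂ) / Gamma (b - a) * stokesFactor a (2 / 3 - (N - x - 2 * a + b)) x

/-- The two-term expansion of the remainder, uniform in the number `N` of terms within bounded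
distance of `x`. -/
def HasTwoTermExpansion (a b : ℝ) : Prop :=
  ∀ K, ∃ C, ∀ᶠ x : ℝ in atTop, ∀ N : ℕ, |N - x| ≤ K →
    ‖remainder a b N x - twoTerm a b N x‖ ≤ C * x ^ (-a - 1)

lemma hasTwoTermExpansion_add_one {a : ℝ} (ha : ∀ k : ℤ, a ≠ k) :
    HasTwoTermExpansion a (a + 1) := by
  intro K
  obtain ⟨C, hC⟩ := exists_eventually_abs_terminantError_le (K + |a|)
  refine ⟨C, ?_⟩
  filter_upwards [hC, eventually_gt_atTop 0] with x herror hx N hN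
  have hsx : |x - (N - a)| ≤ K + |a| := by
    rw [← sub_add]
    exact (abs_add_le _ _).trans (by rwa [abs_sub_comm, add_le_add_iff_right])
  have hsin := abs_sin_pi_mul_div_pi_le_one a
  have htwoTerm : twoTerm a (a + 1 : ℝ) N x
      = ((x ^ (-a) * stokesFactor a (x - (N - a) - 1 / 3) x : ℝ) : ℂ) := by
    rw [twoTerm, ofReal_mul, ofReal_cpow hx.le]
    push_cast
    rw [add_sub_cancel_left, Gamma_one, div_one]
    ring_nf
  rw [htwoTerm, ofReal_add, ofReal_one, remainder_add_one_right ha N hx, ← ofReal_sub, norm_real,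
    Real.norm_eq_abs, stokesFactor_eq a _ hx]
  calc _ = |x ^ (-a) * (Real.sin (Real.pi * a) / Real.pi * terminantError (N - a) x)| := by
        rw [terminantError]; ring_nf
    _ ≤ x ^ (-a) * (1 * (C / x)) := by
        rw [abs_mul, abs_mul, Real.abs_rpow_of_nonneg hx.le, abs_of_pos hx]
        gcongr
        exact herror _ (natCast_sub_ne_intCast ha N) hsx
    _ = C * x ^ (-a - 1) := by rw [Real.rpow_sub_one hx.ne']; ring

lemma rpow_mul_stokesFactor_add (a t x v : ℝ) :
    ((x ^ (-a) * stokesFactor a (t + v) x : ℝ) : ℂ) = (x ^ (-a) * stokesFactor a t x : ℝ)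
      + (x ^ (-a) * (2 * Real.sin (Real.pi * a) / √(2 * Real.pi * x)) : ℝ) * v := by
  rw [← ofReal_mul, ← ofReal_add, stokesFactor, stokesFactor]
  ring_nf

lemma twoTerm_add_one_sub (a μ : ℝ) (N : ℕ) {x : ℝ} (hx : 0 ≤ x) :
    twoTerm a (a + (1 - μ)) N x = (Gamma (1 - μ))⁻¹ *
      (x ^ (-a) * stokesFactor a (x - (N - a) - 1 / 3 + μ) x : ℝ) := by
  rw [twoTerm, ofReal_mul, ofReal_cpow hx, div_eq_mul_inv]
  push_cast
  rw [add_sub_cancel_left]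
  ring_nf

lemma isBigO_rpow_of_norm_sub_le_polyDecay {f g : ℝ → ℂ} {m : ℕ} (hm : 0 < m) {D : ℝ}
    (hfg : ∀ v, 0 < v → ‖f v - g v‖ ≤ D * polyDecay m v)
    (hg : g =O[atTop] fun v => v ^ (-m : ℝ)) : f =O[atTop] fun v => v ^ (-m : ℝ) := by
  have hsub : (f - g) =O[atTop] polyDecay m := by
    refine IsBigO.of_bound D ?_
    filter_upwards [eventually_gt_atTop 0] with v hv
    rw [Real.norm_of_nonneg (polyDecay_pos hm hv.le).le]
    exact hfg v hv
  simpa using (hsub.trans (polyDecay_isBigO m)).add hg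

lemma mellinConvergent_of_continuousOn {f : ℝ → ℂ} {M : ℝ} {μ : ℂ}
    (hf : ContinuousOn f (Set.Ici 0)) (hdecay : f =O[atTop] fun v => v ^ (-M)) (hμ : 0 < μ.re)
    (hμM : μ.re < M) : MellinConvergent f μ :=
  mellinConvergent_of_isBigO_rpow
    ((hf.mono Set.Ioi_subset_Ici_self).locallyIntegrableOn measurableSet_Ioi) hdecay hμM
    (isBigO_rpow_neg_zero_of_continuousOn hf) hμ

lemma hasTwoTermExpansion_add_one_sub {a μ : ℝ} (hpos : 0 < a) (ha : ∀ k : ℤ, a ≠ k)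
    (hμ : 0 < μ) : HasTwoTermExpansion a (a + (1 - μ)) := by
  intro K
  obtain ⟨m, hμm⟩ := exists_nat_gt μ
  have hm : 0 < m := by exact_mod_cast hμ.trans hμm
  obtain ⟨C, hC⟩ := exists_eventually_norm_exp_neg_mul_remainder_sub_le hpos ha K hm
  set J : ℝ := ∫ v in Set.Ioi 0, v ^ (μ - 1) * polyDecay m v
  refine ⟨‖(Gamma μ)⁻¹ * (Gamma (1 - μ))⁻¹‖ * (C * J), ?_⟩
  filter_upwards [hC, eventually_gt_atTop 0] with x hbound hx N hN
  set f : ℝ → ℂ := fun v => exp (-v) * remainder a (a + 1) N (x + v)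
  set g : ℝ → ℂ := fun v =>
    exp (-v) * (x ^ (-a) * stokesFactor a (x - (N - a) - 1 / 3 + v) x : ℝ) with hg
  simp only [rpow_mul_stokesFactor_add] at hg
  have hμ' : 0 < (μ : ℂ).re := by simpa using hμ
  have hfg (v : ℝ) (hv : 0 < v) : ‖f v - g v‖ ≤ C * x ^ (-a - 1) * polyDecay m v :=
    hbound N hN v hv.le
  have hgMellin : HasMellin g μ _ := hg ▸ hasMellin_exp_neg_mul_affine hμ' _ _
  rw [← rpow_mul_stokesFactor_add] at hgMellin
  have hfdecay : f =O[atTop] fun v => v ^ (-m : ℝ) :=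
    isBigO_rpow_of_norm_sub_le_polyDecay hm hfg (hg ▸ exp_neg_mul_affine_isBigO _ _ m)
  have hfcont : ContinuousOn f (Set.Ici 0) := continuousOn_exp_neg_mul_remainder ha N hx
  have hfMellin : MellinConvergent f μ :=
    mellinConvergent_of_continuousOn hfcont hfdecay hμ' (by simpa using hμm)
  have hremainder := remainder_eq_mellin (a := a) (by simpa using hpos) hx hfcont hfdecay hμ'
    (by simpa using hμm)
  have hGamma : Gamma μ ≠ 0 := Gamma_ne_zero_of_re_pos hμ'
  have htwoTerm : twoTerm a (a + (1 - μ)) N x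
      = (Gamma μ)⁻¹ * (Gamma (1 - μ))⁻¹ * mellin g μ := by
    rw [twoTerm_add_one_sub a μ N hx.le, hgMellin.2]
    field_simp
  calc ‖remainder a (a + (1 - μ) : ℝ) N x - twoTerm a (a + (1 - μ)) N x‖
      = ‖(Gamma μ)⁻¹ * (Gamma (1 - μ))⁻¹‖ * ‖mellin f μ - mellin g μ‖ := by
        rw [htwoTerm, ← norm_mul, mul_sub, ← hremainder]
        push_cast
        rfl
    _ ≤ ‖(Gamma μ)⁻¹ * (Gamma (1 - μ))⁻¹‖ * (C * x ^ (-a - 1) * J) := by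
        gcongr
        exact norm_mellin_sub_le hfMellin hgMellin.1
          (integrableOn_rpow_mul_polyDecay hμ hμm) hfg
    _ = _ := by ring

/-! ### Lowering the first parameter -/

lemma cpow_sub_sub_one {z : ℂ} (hz : z ≠ 0) (a b : ℂ) : z ^ (a - (b - 1)) = z ^ (a - b) * z := by
  rw [show a - (b - 1) = a - b + 1 by ring, cpow_add _ _ hz, cpow_one]

lemma expPart_term_contiguous (a b : ℂ) (N : ℕ) {z : ℂ} (hz : z ≠ 0) :
    (b - a) * (z ^ (a - 1 - b) * exp z / Gamma (a - 1) *
        ((ascPochhammer ℂ N).eval (b - (a - 1)) * (ascPochhammer ℂ N).eval (1 - (a - 1))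
          / (N.factorial * z ^ N)))
      = z ^ (a - (b - 1)) * exp z / Gamma a *
          ((ascPochhammer ℂ (N + 2)).eval (b - 1 - a) * (ascPochhammer ℂ (N + 2)).eval (1 - a)
            / ((N + 2).factorial * z ^ (N + 2)))
        - z * (z ^ (a - b) * exp z / Gamma a *
          ((ascPochhammer ℂ (N + 2)).eval (b - a) * (ascPochhammer ℂ (N + 2)).eval (1 - a)
            / ((N + 2).factorial * z ^ (N + 2))))
        + (1 - a) * (z ^ (a - b) * exp z / Gamma a *
          ((ascPochhammer ℂ (N + 1)).eval (b - a) * (ascPochhammer ℂ (N + 1)).eval (1 - a)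
            / ((N + 1).factorial * z ^ (N + 1)))) := by
  have hshift (c : ℂ) :
      (ascPochhammer ℂ (N + 1)).eval c = c * (ascPochhammer ℂ N).eval (c + 1) := by
    simpa using ascPochhammer_succ_eval_sub_one (c + 1) N
  have hbelow : (ascPochhammer ℂ (N + 2)).eval (b - 1 - a)
      = (b - a - 1) * (ascPochhammer ℂ (N + 1)).eval (b - a) := by
    rw [← ascPochhammer_succ_eval_sub_one, sub_right_comm]
  have hpow : z ^ (a - 1 - b) = z ^ (a - b) / z := by
    rw [sub_right_comm, cpow_sub _ _ hz, cpow_one]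
  rw [hbelow, ascPochhammer_succ_eval (N + 1), ascPochhammer_succ_eval (N + 1), hshift (b - a),
    hshift (1 - a), cpow_sub_sub_one hz, hpow, div_eq_mul_inv _ (Gamma (a - 1)),
    inv_Gamma_sub_one, Nat.factorial_succ (N + 1), Nat.factorial_succ N,
    show b - (a - 1) = b - a + 1 by ring, show 1 - (a - 1) = 1 - a + 1 by ring]
  have hN : (N : ℂ) + 1 ≠ 0 := Nat.cast_add_one_ne_zero N
  have hN' : (N : ℂ) + 1 + 1 ≠ 0 := mod_cast Nat.cast_add_one_ne_zero (R := ℂ) (N + 1)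
  push_cast
  field_simp
  ring

lemma expPart_contiguous (a b : ℂ) (N : ℕ) {z : ℂ} (hz : z ≠ 0) :
    (b - a) * expPart (a - 1) b N z = expPart a (b - 1) (N + 2) z
      - z * expPart a b (N + 2) z + (1 - a) * expPart a b (N + 1) z := by
  induction N with
  | zero =>
    simp only [expPart, range_zero, sum_empty, zero_add, sum_range_succ, cpow_sub_sub_one hz,
      ascPochhammer_zero, ascPochhammer_one, Polynomial.eval_one, Polynomial.eval_X,
      Nat.factorial_zero, Nat.factorial_one, Nat.cast_one, pow_zero, pow_one]
    field_simp
    ring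
  | succ N ih =>
    rw [expPart_succ (a - 1), expPart_succ a (b - 1) (N + 2), expPart_succ a b (N + 1),
      expPart_succ a b (N + 2)]
    linear_combination ih + expPart_term_contiguous a b N hz

lemma remainder_contiguous (a b : ℂ) (N : ℕ) {z : ℂ} (hz : z ≠ 0) :
    (b - a) * remainder (a - 1) b N z = remainder a (b - 1) (N + 2) z
      - z * remainder a b (N + 2) z + (1 - a) * remainder a b (N + 1) z := by
  rw [remainder, mul_sub, sub_mul_regularizedKummer_sub_one_left, expPart_contiguous a b N hz]
  simp only [remainder]
  ring

lemma stokesFactor_sub_one (a t x : ℝ) : stokesFactor (a - 1) t x = -stokesFactor a t x := by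
  simp only [stokesFactor, mul_sub, mul_one, Real.cos_sub_pi, Real.sin_sub_pi]
  ring

lemma twoTerm_contiguous (a b : ℝ) (N : ℕ) {x : ℝ} (hx : 0 < x) :
    (b - a) * twoTerm (a - 1) b N x = -(x * twoTerm a b (N + 2) x) := by
  have hGamma : (Gamma (b - a : ℂ))⁻¹ = (b - a) * (Gamma (b - (a - 1) : ℂ))⁻¹ := by
    rw [one_div_Gamma_eq_self_mul_one_div_Gamma_add_one]
    ring_nf
  have hpow : (x : ℂ) ^ (-(a - 1) : ℂ) = x * (x : ℂ) ^ (-a : ℂ) := by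
    rw [show (-(a - 1) : ℂ) = 1 + -a by ring, cpow_add _ _ (ofReal_ne_zero.2 hx.ne'), cpow_one]
  have harg : 2 / 3 - ((N : ℝ) - x - 2 * (a - 1) + b)
      = 2 / 3 - (((N + 2 : ℕ) : ℝ) - x - 2 * a + b) := by push_cast; ring
  rw [twoTerm, twoTerm, stokesFactor_sub_one, harg, div_eq_mul_inv (_ ^ _), div_eq_mul_inv (_ ^ _),
    hGamma]
  push_cast
  rw [hpow]
  ring

lemma norm_twoTerm_le (a b : ℝ) {K x : ℝ} {N : ℕ} (hx : 1 ≤ x) (hN : |N - x| ≤ K) :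
    ‖twoTerm a b N x‖ ≤ ‖(Gamma (b - a))⁻¹‖ * (2 + K + |2 * a - b|) * x ^ (-a) := by
  have hx0 : 0 < x := by linarith
  have hfactor : |stokesFactor a (2 / 3 - (N - x - 2 * a + b)) x| ≤ 2 + K + |2 * a - b| := by
    refine (abs_stokesFactor_le a _ hx).trans ?_
    have : |2 / 3 - (N - x - 2 * a + b)| ≤ 1 + K + |2 * a - b| := by
      rw [abs_le] at hN ⊢
      constructor <;> linarith [neg_abs_le (2 * a - b), le_abs_self (2 * a - b)]
    linarith
  rw [twoTerm, div_eq_mul_inv, norm_mul, norm_mul, norm_real, Real.norm_eq_abs,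
    ← ofReal_neg, norm_cpow_eq_rpow_re_of_pos hx0, ofReal_re]
  calc _ ≤ x ^ (-a) * ‖(Gamma (b - a))⁻¹‖ * (2 + K + |2 * a - b|) := by gcongr
    _ = _ := by ring

lemma HasTwoTermExpansion.norm_remainder_le {a b : ℝ} (h : HasTwoTermExpansion a b) (K : ℝ) :
    ∃ C, ∀ᶠ x : ℝ in atTop, ∀ N : ℕ, |N - x| ≤ K → ‖remainder a b N x‖ ≤ C * x ^ (-a) := by
  obtain ⟨C, hC⟩ := h K
  refine ⟨|C| + ‖(Gamma (b - a))⁻¹‖ * (2 + K + |2 * a - b|), ?_⟩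
  filter_upwards [hC, eventually_ge_atTop 1] with x herror hx N hN
  have hpow : C * x ^ (-a - 1) ≤ |C| * x ^ (-a) := by
    gcongr
    · exact le_abs_self C
    · linarith
  calc ‖remainder a b N x‖
      ≤ ‖remainder a b N x - twoTerm a b N x‖ + ‖twoTerm a b N x‖ := norm_le_norm_sub_add _ _
    _ ≤ |C| * x ^ (-a) + ‖(Gamma (b - a))⁻¹‖ * (2 + K + |2 * a - b|) * x ^ (-a) :=
        add_le_add ((herror N hN).trans hpow) (norm_twoTerm_le a b hx hN)
    _ = _ := by ring

lemma HasTwoTermExpansion.sub_one_left {a b : ℝ} (h : HasTwoTermExpansion a b)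
    (h' : HasTwoTermExpansion a (b - 1)) (hab : b ≠ a) : HasTwoTermExpansion (a - 1) b := by
  intro K
  obtain ⟨C₀, hC₀⟩ := h (K + 2)
  obtain ⟨C₁, hC₁⟩ := h.norm_remainder_le (K + 2)
  obtain ⟨C₂, hC₂⟩ := h'.norm_remainder_le (K + 2)
  refine ⟨‖(b - a : ℂ)‖⁻¹ * (C₂ + C₀ + ‖(1 - a : ℂ)‖ * C₁), ?_⟩
  filter_upwards [hC₀, hC₁, hC₂, eventually_gt_atTop 0] with x herror hR hR' hx N hN
  have hshift (i : ℕ) (hi : (i : ℝ) ≤ 2) : |((N + i : ℕ) : ℝ) - x| ≤ K + 2 := by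
    push_cast
    rw [abs_le] at hN ⊢
    constructor <;> linarith [i.cast_nonneg (α := ℝ)]
  have hN₁ := hshift 1 (by norm_num)
  have hN₂ := hshift 2 (by norm_num)
  have hne : (b - a : ℂ) ≠ 0 := sub_ne_zero.2 (ofReal_injective.ne hab)
  have hdecomp : (b - a : ℂ) * (remainder (a - 1 : ℝ) b N x - twoTerm (a - 1) b N x)
      = remainder a (b - 1 : ℝ) (N + 2) x
        - x * (remainder a b (N + 2) x - twoTerm a b (N + 2) x)
        + (1 - a) * remainder a b (N + 1) x := by
    rw [mul_sub, twoTerm_contiguous a b N hx, ofReal_sub, ofReal_one,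
      remainder_contiguous a b N (ofReal_ne_zero.2 hx.ne')]
    push_cast
    ring
  rw [show -(a - 1) - 1 = -a by ring, mul_assoc, ← div_eq_inv_mul, le_div_iff₀ (norm_pos_iff.2 hne),
    mul_comm, ← norm_mul, hdecomp]
  calc _ ≤ ‖remainder a (b - 1 : ℝ) (N + 2) x‖
          + ‖x * (remainder a b (N + 2) x - twoTerm a b (N + 2) x)‖
          + ‖(1 - a) * remainder a b (N + 1) x‖ :=
        (norm_add_le _ _).trans (add_le_add_left (norm_sub_le _ _) _)
    _ ≤ C₂ * x ^ (-a) + x * (C₀ * x ^ (-a - 1)) + ‖(1 - a : ℂ)‖ * (C₁ * x ^ (-a)) := by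
        rw [norm_mul, norm_mul, norm_real, Real.norm_of_nonneg hx.le]
        gcongr
        exacts [hR' _ hN₂, herror _ hN₂, hR _ hN₁]
    _ = _ := by
        rw [Real.rpow_sub_one hx.ne']
        field_simp

theorem hasTwoTermExpansion {a : ℝ} (ha : ∀ k : ℤ, a ≠ k) (b : ℝ) : HasTwoTermExpansion a b := by
  have hladder (k : ℕ) : ∀ a b : ℝ, (∀ j : ℤ, a ≠ j) → 0 < a + k → b < a + k + 1 →
      HasTwoTermExpansion a b := by
    induction k with
    | zero =>
      intro a b ha hpos hb
      rw [Nat.cast_zero, add_zero] at hpos hb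
      have := hasTwoTermExpansion_add_one_sub (μ := a + 1 - b) hpos ha (by linarith)
      rwa [show a + (1 - (a + 1 - b)) = b by ring] at this
    | succ k ih =>
      intro a b ha hpos hb
      push_cast at hpos hb
      have ha' (j : ℤ) : a + 1 ≠ j := fun h => ha (j - 1) (by push_cast; linarith)
      rcases eq_or_ne b (a + 1) with rfl | hne
      · exact hasTwoTermExpansion_add_one ha
      · simpa using (ih (a + 1) b ha' (by linarith) (by linarith)).sub_one_left
          (ih (a + 1) (b - 1) ha' (by linarith) (by linarith)) hne
  obtain ⟨k, hk⟩ := exists_nat_gt (max (-a) (b - a))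
  exact hladder k a b ha (by linarith [le_max_left (-a) (b - a)])
    (by linarith [le_max_right (-a) (b - a)])

end KummerStokes

/-- Two-term form of the subdominant algebraic contribution on the Stokes line `arg z = 0`:
with optimal truncation index `m₀(x) = ⌊x + 2a − b⌋` and `α(x) = m₀(x) − x − 2a + b`, the
remainder equals
`(x^{−a}/Γ(b−a)) [cos(πa) + (2 sin(πa)/√(2πx)) (2/3 − α(x))] + O(x^{−a−1})`. -/
theorem kummer_stokes_line_two_terms (a b : ℝ)
    (ha : ∀ n : ℤ, a ≠ (n : ℝ)) (hb : ∀ n : ℕ, b ≠ -(n : ℝ)) (hba : ∀ n : ℕ, b - a ≠ -(n : ℝ)) :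
    (fun x : ℝ =>
        ((1 / Complex.Gamma (b : ℂ)) * kummer (a : ℂ) (b : ℂ) (x : ℂ) -
            ((x : ℂ) ^ ((a : ℂ) - (b : ℂ)) * Complex.exp (x : ℂ) / Complex.Gamma (a : ℂ)) *
              ∑ j ∈ Finset.range (⌊x + 2 * a - b⌋.toNat),
                (ascPochhammer ℂ j).eval ((b : ℂ) - (a : ℂ)) *
                  (ascPochhammer ℂ j).eval (1 - (a : ℂ)) / (j.factorial * (x : ℂ) ^ j)) -
          (x : ℂ) ^ (-(a : ℂ)) / Complex.Gamma ((b : ℂ) - (a : ℂ)) *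
            ((Real.cos (Real.pi * a) +
                2 * Real.sin (Real.pi * a) / Real.sqrt (2 * Real.pi * x) *
                  (2 / 3 - ((⌊x + 2 * a - b⌋ : ℝ) - x - 2 * a + b)) : ℝ) : ℂ))
      =O[atTop] fun x : ℝ => x ^ (-a - 1) := by
  obtain ⟨C, hC⟩ := KummerStokes.hasTwoTermExpansion ha b (1 + |2 * a - b|)
  refine IsBigO.of_bound C ?_
  filter_upwards [hC, eventually_ge_atTop (b - 2 * a), eventually_ge_atTop 0]
    with x hbound hfloor hx
  have hN : ((⌊x + 2 * a - b⌋.toNat : ℕ) : ℝ) = ⌊x + 2 * a - b⌋ := by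
    exact_mod_cast Int.toNat_of_nonneg (Int.floor_nonneg.2 (by linarith))
  have hNx : |(⌊x + 2 * a - b⌋.toNat : ℝ) - x| ≤ 1 + |2 * a - b| := by
    rw [hN, abs_le]
    constructor <;> linarith [Int.floor_le (x + 2 * a - b), Int.lt_floor_add_one (x + 2 * a - b),
      neg_abs_le (2 * a - b), le_abs_self (2 * a - b)]
  rw [KummerStokes.one_div_Gamma_mul_kummer (fun k => by exact_mod_cast hb k),
    Real.norm_of_nonneg (Real.rpow_nonneg hx _), ← hN]
  exact hbound _ hNx
end

section
/- Let n be a positive integer and b ∈ ℂ with b and b − n not nonpositive integers, and let M be a positive integer. Then as x → +∞ along the positive real axis, (1/Γ(b)) · ₁F₁(n; b; x) − (x^{n−b} e^x / (n−1)!) ∑_{j=0}^{n−1} (b−n)_j (1−n)_j / (j! x^j) = ((−1)^n x^{−n} / Γ(b−n)) · [ ∑_{j=0}^{M−1} (−1)^j (n)_j (1+n−b)_j / (j! x^j) + O(x^{−M}) ]; that is, when a = n is a positive integer the exponential expansion terminates after n terms and the subdominant algebraic expansion on arg z = 0 carries the multiplier (−1)^n = cos(πn), with no half-integer-power corrections.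 -/
open Complex Filter Asymptotics

/-!
For `a = 1` the regularized Kummer function `F(a, b, x) = ₁F₁(a; b; x) / Γ(b)` is
`eˣ x^(1-b) P(b - 1, x)`, with `P(s, x) = γ(s, x) / Γ(s)` continued to all complex `s`. Since
`P(s, ·)` tends to `1` and has derivative `e⁻ˣ x^(s-1) / Γ(s)`, integrating over `(x, ∞)` bounds
`P - 1` when `Re s ≤ 1`; so `F(1, b, x)` is its exponential part up to `O(1 / x)` when `Re b ≤ 2`.

Everything else is exact recurrence. The relation `F(1, b) = 1 / Γ(b) + x F(1, b + 1)` carries this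
estimate from `b` to `b + 1`. The proposed expansion satisfies the same relation, so the error of
`M + 1` algebraic terms at `b + 1` is `x⁻¹` times the error of `M` terms at `b`. The contiguous
relation `a F(a + 1, b + 1) = (a - b) F(a, b + 1) + F(a, b)`, which raises `n`, is satisfied by each
of the two parts of the expansion separately.
-/

open Topology

lemma hasDerivAt_of_hasSum_pow {c : ℕ → ℂ} {f : ℂ → ℂ}
    (hf : ∀ z, HasSum (fun k ↦ c k * z ^ k) (f z)) {f' z : ℂ}
    (hf' : HasSum (fun k ↦ c (k + 1) * (k + 1) * z ^ k) f') : HasDerivAt f f' z := by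
  let U := Metric.ball (0 : ℂ) (‖z‖ + 1)
  have hzU : z ∈ U := by simp [U]
  have hsummable := (hf ((‖z‖ + 1 : ℝ) : ℂ)).summable.norm
  have hbound (k : ℕ) (w : ℂ) (hw : w ∈ U) :
      ‖c k * w ^ k‖ ≤ ‖c k * ((‖z‖ + 1 : ℝ) : ℂ) ^ k‖ := by
    have hw : ‖w‖ ≤ ‖z‖ + 1 := by simpa [U] using (Metric.mem_ball.1 hw).le
    rw [norm_mul, norm_mul, norm_pow, norm_pow, Complex.norm_of_nonneg (by positivity)]
    gcongr
  have hdiff : DifferentiableOn ℂ f U := by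
    simpa only [(hf _).tsum_eq] using
      differentiableOn_tsum_of_summable_norm hsummable (by fun_prop) Metric.isOpen_ball hbound
  have hderiv : HasSum (fun k ↦ c (k + 1) * (k + 1) * z ^ k) (deriv f z) := by
    have hsum := hasSum_deriv_of_summable_norm hsummable (by fun_prop) Metric.isOpen_ball hbound hzU
    simp only [(hf _).tsum_eq] at hsum
    simpa [mul_assoc] using (hasSum_nat_add_iff' 1).2 hsum
  exact hf'.unique hderiv ▸ (hdiff.differentiableAt (Metric.isOpen_ball.mem_nhds hzU)).hasDerivAt

lemma cpow_add_one_eq_mul_cpow {z : ℂ} (hz : z ≠ 0) (s : ℂ) : z ^ (s + 1) = z * z ^ s := by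
  rw [cpow_add _ _ hz, cpow_one, mul_comm]

lemma isBigO_rpow_inv_mul {f : ℝ → ℂ} {r : ℝ} (hf : f =O[atTop] fun x : ℝ ↦ x ^ r) :
    (fun x : ℝ ↦ (x : ℂ)⁻¹ * f x) =O[atTop] fun x : ℝ ↦ x ^ (r - 1) := by
  have hinv : (fun x : ℝ ↦ (x : ℂ)⁻¹) =O[atTop] fun x : ℝ ↦ x⁻¹ :=
    isBigO_of_le _ fun x ↦ by simp
  refine (hinv.mul hf).congr' .rfl ?_
  filter_upwards [eventually_ne_atTop 0] with x hx
  rw [Real.rpow_sub_one hx, inv_mul_eq_div]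

lemma ascPochhammer_succ_eval_left {S : Type*} [CommSemiring S] (k : ℕ) (a : S) :
    (ascPochhammer S (k + 1)).eval a = a * (ascPochhammer S k).eval (a + 1) := by
  simp [ascPochhammer_succ_left, Polynomial.eval_comp]

/-- The regularized Kummer function `∑ₖ (a)ₖ zᵏ / (k! Γ(b + k))`, entire in all three variables.
At the poles of `Γ` Mathlib's `(Gamma _)⁻¹` is `0`, the value of the entire function `1 / Γ`. -/
noncomputable def regularizedKummer (a b z : ℂ) : ℂ :=
  regularizedHGFun {a} {b} z

lemma hasSum_regularizedKummer (a b z : ℂ) :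
    HasSum (fun k : ℕ ↦ (ascPochhammer ℂ k).eval a / k.factorial * (Gamma (b + k))⁻¹ * z ^ k)
      (regularizedKummer a b z) := by
  have hradius : (regularizedHGFunSeries {a} {b}).radius = ⊤ :=
    radius_regularizedHGFunSeries_eq_top (by simp)
  have hsum := (regularizedHGFunSeries {a} {b}).hasSum (x := z) (by simp [hradius])
  convert! hsum using 2 with k
  simp only [regularizedHGFunSeries, FormalMultilinearSeries.apply_eq_prod_smul_coeff,
    Finset.prod_const, Finset.card_univ, Fintype.card_fin, FormalMultilinearSeries.coeff_ofScalars,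
    regularizedHGFunCoeff, Multiset.map_singleton, Multiset.prod_singleton, smul_eq_mul]
  ring

lemma one_div_Gamma_mul_kummer (a z : ℂ) {b : ℂ} (hb : ∀ m : ℕ, b ≠ -m) :
    1 / Gamma b * kummer a b z = regularizedKummer a b z := by
  rw [kummer, ← tsum_mul_left, ← (hasSum_regularizedKummer a b z).tsum_eq]
  refine tsum_congr fun k ↦ ?_
  rw [← Gamma_add_nat_div_Gamma_eq b hb]
  have := Gamma_ne_zero hb
  field_simp

lemma regularizedKummer_zero_left (b z : ℂ) : regularizedKummer 0 b z = (Gamma b)⁻¹ := by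
  rw [← (hasSum_regularizedKummer 0 b z).tsum_eq, tsum_eq_single 0 fun k hk ↦ ?_]
  · simp
  · simp [hk]

lemma mul_regularizedKummer_add_one_left (a b z : ℂ) :
    a * regularizedKummer (a + 1) (b + 1) z =
      (a - b) * regularizedKummer a (b + 1) z + regularizedKummer a b z := by
  have hsum := ((hasSum_regularizedKummer a (b + 1) z).mul_left (a - b)).add
    (hasSum_regularizedKummer a b z)
  refine ((hasSum_regularizedKummer (a + 1) (b + 1) z).mul_left a).unique
    (hsum.congr_fun fun k ↦ ?_)
  have hpoch := (ascPochhammer_succ_eval_left k a).symm.trans (ascPochhammer_succ_eval k a)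
  rw [one_div_Gamma_eq_self_mul_one_div_Gamma_add_one (b + k), add_right_comm b 1]
  linear_combination (Gamma (b + k + 1))⁻¹ * z ^ k / k.factorial * hpoch

lemma regularizedKummer_add_one_left (a b z : ℂ) :
    regularizedKummer (a + 1) b z =
      regularizedKummer a b z + z * regularizedKummer (a + 1) (b + 1) z := by
  have hsum := (hasSum_nat_add_iff' 1).2
    ((hasSum_regularizedKummer (a + 1) b z).sub (hasSum_regularizedKummer a b z))
  simp only [Nat.cast_add, Nat.cast_one, Finset.range_one, Finset.sum_sub_distrib,
    Finset.sum_singleton, ascPochhammer_zero, Polynomial.eval_one, pow_zero, sub_self,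
    sub_zero] at hsum
  rw [← sub_eq_iff_eq_add']
  refine hsum.unique
    (((hasSum_regularizedKummer (a + 1) (b + 1) z).mul_left z).congr_fun fun k ↦ ?_)
  rw [ascPochhammer_succ_eval_left k a, ascPochhammer_succ_eval, Nat.factorial_succ]
  rw [show b + ((k : ℂ) + 1) = b + 1 + k by ring]
  push_cast
  field_simp
  ring

lemma hasDerivAt_regularizedKummer (a b z : ℂ) :
    HasDerivAt (regularizedKummer a b) (a * regularizedKummer (a + 1) (b + 1) z) z := by
  refine hasDerivAt_of_hasSum_pow (hasSum_regularizedKummer a b)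
    (((hasSum_regularizedKummer (a + 1) (b + 1) z).mul_left a).congr_fun fun k ↦ ?_)
  rw [ascPochhammer_succ_eval_left k a, Nat.factorial_succ]
  push_cast
  rw [show b + ((k : ℂ) + 1) = b + 1 + k by ring]
  field_simp

lemma mul_deriv_regularizedKummer_add (a b z : ℂ) :
    z * deriv (regularizedKummer a (b + 1)) z + b * regularizedKummer a (b + 1) z =
      regularizedKummer a b z := by
  rw [(hasDerivAt_regularizedKummer a (b + 1) z).deriv]
  linear_combination mul_regularizedKummer_add_one_left a b z -
    a * regularizedKummer_add_one_left a (b + 1) z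

lemma regularizedKummer_one_left (b z : ℂ) :
    regularizedKummer 1 b z = (Gamma b)⁻¹ + z * regularizedKummer 1 (b + 1) z := by
  simpa [regularizedKummer_zero_left] using regularizedKummer_add_one_left 0 b z

lemma continuous_regularizedKummer (a b : ℂ) : Continuous (regularizedKummer a b) :=
  continuous_iff_continuousAt.2 fun z ↦ (hasDerivAt_regularizedKummer a b z).continuousAt

/-- The regularized lower incomplete gamma function `P(s, x) = γ(s, x) / Γ(s)` for `x > 0`,
continued to all `s : ℂ` by its series, that is, as a Kummer function with first parameter `1`. -/
noncomputable def regularizedLowerGamma (s : ℂ) (x : ℝ) : ℂ :=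
  cexp (-x) * x ^ s * regularizedKummer 1 (s + 1) x

lemma regularizedLowerGamma_eq_add (s : ℂ) {x : ℝ} (hx : x ≠ 0) :
    regularizedLowerGamma s x =
      cexp (-x) * x ^ s * (Gamma (s + 1))⁻¹ + regularizedLowerGamma (s + 1) x := by
  rw [regularizedLowerGamma, regularizedLowerGamma, regularizedKummer_one_left,
    cpow_add_one_eq_mul_cpow (ofReal_ne_zero.2 hx)]
  ring

lemma hasDerivAt_regularizedLowerGamma (s : ℂ) {x : ℝ} (hx : 0 < x) :
    HasDerivAt (regularizedLowerGamma s) (cexp (-x) * x ^ (s - 1) * (Gamma s)⁻¹) x := by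
  have hexp : HasDerivAt (fun z : ℂ ↦ cexp (-z)) (-cexp (-x)) x := by
    simpa using (hasDerivAt_neg (x : ℂ)).cexp
  have hpow : HasDerivAt (fun z : ℂ ↦ z ^ s) (s * x ^ (s - 1)) x := by
    simpa using (hasDerivAt_id (x : ℂ)).cpow_const (ofReal_mem_slitPlane.2 hx)
  have hkummer := (hasDerivAt_regularizedKummer 1 (s + 1) x).differentiableAt.hasDerivAt
  refine ((hexp.mul hpow).mul hkummer).comp_ofReal.congr_deriv ?_
  have hpow_succ : (x : ℂ) ^ s = x * x ^ (s - 1) := by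
    rw [← cpow_add_one_eq_mul_cpow (ofReal_ne_zero.2 hx.ne'), sub_add_cancel]
  simp only [Pi.mul_apply]
  rw [hpow_succ]
  linear_combination cexp (-x) * x ^ (s - 1) *
    (mul_deriv_regularizedKummer_add 1 s x + regularizedKummer_one_left s x)

lemma regularizedLowerGamma_eq_partialGamma_div {s : ℂ} (hs : 0 < s.re) {x : ℝ} (hx : 0 ≤ x) :
    regularizedLowerGamma s x = partialGamma s x / Gamma s := by
  have hcont : Continuous (regularizedLowerGamma s) := by
    have hpow := continuous_ofReal_cpow_const hs
    have hkummer := continuous_regularizedKummer 1 (s + 1)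
    unfold regularizedLowerGamma
    fun_prop
  have hzero : regularizedLowerGamma s 0 = 0 := by
    have hs0 : s ≠ 0 := by
      rintro rfl
      simp at hs
    simp [regularizedLowerGamma, zero_cpow hs0]
  have hint : IntervalIntegrable (fun t : ℝ ↦ ((Real.exp (-t) : ℝ) : ℂ) * t ^ (s - 1))
      MeasureTheory.volume 0 x :=
    (intervalIntegrable_iff_integrableOn_Ioc_of_le hx).2
      ((GammaIntegral_convergent hs).mono_set Set.Ioc_subset_Ioi_self)
  have hftc := intervalIntegral.integral_eq_sub_of_hasDeriv_right_of_le hx hcont.continuousOn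
    (fun t ht ↦ (hasDerivAt_regularizedLowerGamma s ht.1).hasDerivWithinAt)
    (by simpa using hint.mul_const (Gamma s)⁻¹)
  rw [hzero, sub_zero, intervalIntegral.integral_mul_const] at hftc
  simp only [← hftc, partialGamma, ofReal_exp, ofReal_neg, div_eq_mul_inv]

lemma norm_exp_neg_mul_cpow (s : ℂ) {x : ℝ} (hx : 0 < x) :
    ‖cexp (-x) * (x : ℂ) ^ s‖ = x ^ s.re * Real.exp (-x) := by
  rw [norm_mul, norm_cpow_eq_rpow_re_of_pos hx, norm_exp, mul_comm]
  simp

lemma tendsto_exp_neg_mul_cpow_atTop (s : ℂ) :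
    Tendsto (fun x : ℝ ↦ cexp (-x) * (x : ℂ) ^ s) atTop (𝓝 0) := by
  rw [tendsto_zero_iff_norm_tendsto_zero]
  refine (tendsto_rpow_mul_exp_neg_mul_atTop_nhds_zero s.re 1 one_pos).congr' ?_
  filter_upwards [eventually_gt_atTop 0] with x hx
  rw [norm_exp_neg_mul_cpow s hx, neg_one_mul]

lemma tendsto_regularizedLowerGamma_of_re_pos {s : ℂ} (hs : 0 < s.re) :
    Tendsto (regularizedLowerGamma s) atTop (𝓝 1) := by
  have hlim := (tendsto_partialGamma hs).div_const (Gamma s)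
  rw [← Gamma_eq_integral hs, div_self (Gamma_ne_zero_of_re_pos hs)] at hlim
  refine hlim.congr' ?_
  filter_upwards [eventually_ge_atTop 0] with x hx
  exact (regularizedLowerGamma_eq_partialGamma_div hs hx).symm

lemma tendsto_regularizedLowerGamma (s : ℂ) :
    Tendsto (regularizedLowerGamma s) atTop (𝓝 1) := by
  obtain ⟨N, hN⟩ := exists_nat_gt (-s.re)
  induction N generalizing s with
  | zero => exact tendsto_regularizedLowerGamma_of_re_pos (by simpa using hN)
  | succ N ih =>
    have hshift := ih (s + 1) (by push_cast at hN; rw [add_re, one_re]; linarith)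
    have hlim := ((tendsto_exp_neg_mul_cpow_atTop s).mul_const (Gamma (s + 1))⁻¹).add hshift
    rw [zero_mul, zero_add] at hlim
    refine hlim.congr' ?_
    filter_upwards [eventually_ne_atTop 0] with x hx
    exact (regularizedLowerGamma_eq_add s hx).symm

lemma norm_regularizedLowerGamma_sub_one_le {s : ℂ} (hs : s.re ≤ 1) {x : ℝ} (hx : 0 < x) :
    ‖regularizedLowerGamma s x - 1‖ ≤ x ^ (s.re - 1) * ‖(Gamma s)⁻¹‖ * Real.exp (-x) := by
  have hbound (t : ℝ) (ht : t ∈ Set.Ioi x) :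
      ‖cexp (-t) * (t : ℂ) ^ (s - 1) * (Gamma s)⁻¹‖ ≤
        x ^ (s.re - 1) * ‖(Gamma s)⁻¹‖ * Real.exp (-t) := by
    have hxt : t ^ (s.re - 1) ≤ x ^ (s.re - 1) :=
      Real.rpow_le_rpow_of_nonpos hx (le_of_lt ht) (by linarith)
    rw [norm_mul, norm_exp_neg_mul_cpow _ (hx.trans ht), sub_re, one_re, mul_right_comm]
    gcongr
  have hbound_ae := (MeasureTheory.ae_restrict_iff' measurableSet_Ioi).2
    (MeasureTheory.ae_of_all MeasureTheory.volume hbound)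
  have hbound_int := (integrableOn_exp_neg_Ioi x).const_mul (x ^ (s.re - 1) * ‖(Gamma s)⁻¹‖)
  have hftc : ∫ t in Set.Ioi x, cexp (-t) * (t : ℂ) ^ (s - 1) * (Gamma s)⁻¹ =
      1 - regularizedLowerGamma s x :=
    MeasureTheory.integral_Ioi_of_hasDerivAt_of_tendsto'
      (fun t ht ↦ hasDerivAt_regularizedLowerGamma s (hx.trans_le ht))
      (hbound_int.mono' (by fun_prop) hbound_ae) (tendsto_regularizedLowerGamma s)
  rw [norm_sub_rev, ← hftc]
  refine (MeasureTheory.norm_integral_le_of_norm_le hbound_int hbound_ae).trans_eq ?_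
  rw [MeasureTheory.integral_const_mul, integral_exp_neg_Ioi]

/-- The sum of the first `N` terms of the formal hypergeometric series `₂F₀(p, q; ; 1 / z)`, the
common shape of the exponential and the algebraic expansions of the Kummer function. -/
noncomputable def twoFZeroPartialSum (N : ℕ) (p q z : ℂ) : ℂ :=
  ∑ j ∈ Finset.range N,
    (ascPochhammer ℂ j).eval p * (ascPochhammer ℂ j).eval q / (j.factorial * z ^ j)

lemma twoFZeroPartialSum_comm (N : ℕ) (p q z : ℂ) :
    twoFZeroPartialSum N p q z = twoFZeroPartialSum N q p z := by
  simp only [twoFZeroPartialSum, mul_comm ((ascPochhammer ℂ _).eval p)]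

lemma twoFZeroPartialSum_neg (N : ℕ) (p q z : ℂ) :
    twoFZeroPartialSum N p q (-z) = ∑ j ∈ Finset.range N,
      (-1) ^ j * (ascPochhammer ℂ j).eval p * (ascPochhammer ℂ j).eval q /
        (j.factorial * z ^ j) := by
  refine Finset.sum_congr rfl fun j _ ↦ ?_
  have hsign : ((-1 : ℂ) ^ j)⁻¹ = (-1) ^ j := by rw [← inv_pow, inv_neg_one]
  rw [neg_pow, mul_left_comm, div_mul_eq_div_div_swap, div_eq_mul_inv _ ((-1 : ℂ) ^ j), hsign]
  ring

lemma twoFZeroPartialSum_succ_zero_left (N : ℕ) (q z : ℂ) :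
    twoFZeroPartialSum (N + 1) 0 q z = 1 := by
  simp [twoFZeroPartialSum, Finset.sum_range_succ']

lemma twoFZeroPartialSum_succ_neg_natCast {N m : ℕ} (hm : m < N) (p z : ℂ) :
    twoFZeroPartialSum (N + 1) p (-m) z = twoFZeroPartialSum N p (-m) z := by
  rw [twoFZeroPartialSum, Finset.sum_range_succ, ascPochhammer_eval_neg_coe_nat_of_lt hm]
  simp [twoFZeroPartialSum]

lemma twoFZeroPartialSum_add_one_right (N : ℕ) (p q z : ℂ) :
    twoFZeroPartialSum (N + 1) p (q + 1) z =
      twoFZeroPartialSum (N + 1) p q z + p / z * twoFZeroPartialSum N (p + 1) (q + 1) z := by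
  simp only [twoFZeroPartialSum, Finset.sum_range_succ', Finset.mul_sum]
  simp only [ascPochhammer_zero, Polynomial.eval_one]
  rw [add_right_comm, ← Finset.sum_add_distrib]
  congr 1
  refine Finset.sum_congr rfl fun j _ ↦ ?_
  rw [ascPochhammer_succ_eval_left j p, ascPochhammer_succ_eval_left j q, ascPochhammer_succ_eval,
    Nat.factorial_succ]
  push_cast
  field_simp
  ring

/-- The terminating exponential expansion of the regularized Kummer function at first parameter `n`.
It is meaningful for `0 < n` only, `n - 1` being a truncated subtraction in the factorial. -/
noncomputable def kummerExponentialPart (n : ℕ) (b z : ℂ) : ℂ :=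
  z ^ (n - b) * cexp z / (n - 1).factorial * twoFZeroPartialSum n (b - n) (1 - n) z

/-- The first `M` terms of the algebraic expansion of the regularized Kummer function at first
parameter `n`; the series is a `₂F₀` in `-1 / z`. -/
noncomputable def kummerAlgebraicPart (n : ℕ) (b : ℂ) (M : ℕ) (z : ℂ) : ℂ :=
  (-1) ^ n * z ^ (-n : ℂ) / Gamma (b - n) * twoFZeroPartialSum M n (1 + n - b) (-z)

/-- The error of the full expansion of the regularized Kummer function: the terminating exponential
part and `M` terms of the algebraic part are subtracted. -/
noncomputable def kummerRemainder (n : ℕ) (b : ℂ) (M : ℕ) (z : ℂ) : ℂ :=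
  regularizedKummer n b z - kummerExponentialPart n b z - kummerAlgebraicPart n b M z

lemma kummerExponentialPart_one (b z : ℂ) :
    kummerExponentialPart 1 b z = z ^ (1 - b) * cexp z := by
  simp [kummerExponentialPart, twoFZeroPartialSum]

lemma natCast_mul_kummerExponentialPart_succ {n : ℕ} (hn : 0 < n) (b : ℂ) {z : ℂ} (hz : z ≠ 0) :
    n * kummerExponentialPart (n + 1) (b + 1) z =
      (n - b) * kummerExponentialPart n (b + 1) z + kummerExponentialPart n b z := by
  have hn0 : (n : ℂ) ≠ 0 := Nat.cast_ne_zero.2 hn.ne'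
  have hpow : z ^ (n - b) = z * z ^ (n - (b + 1)) := by
    rw [← cpow_add_one_eq_mul_cpow hz, ← sub_sub, sub_add_cancel]
  have hterminates : twoFZeroPartialSum (n + 1) (b - n) (1 - n) z =
      twoFZeroPartialSum n (b - n) (1 - n) z := by
    simpa only [Nat.cast_pred hn, neg_sub] using
      twoFZeroPartialSum_succ_neg_natCast (Nat.sub_lt hn one_pos) (b - n) z
  have hsum := twoFZeroPartialSum_add_one_right n (b - n) (-n) z
  rw [neg_add_eq_sub, hterminates, sub_add_eq_add_sub] at hsum
  simp only [kummerExponentialPart, Nat.add_sub_cancel, ← Nat.mul_factorial_pred hn.ne',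
    Nat.cast_add, Nat.cast_mul, Nat.cast_one, add_sub_add_right_eq_sub, sub_add_cancel_right]
  rw [hsum, hpow]
  field_simp
  ring

lemma natCast_mul_kummerAlgebraicPart_succ (n : ℕ) (b : ℂ) (M : ℕ) {z : ℂ} (hz : z ≠ 0) :
    n * kummerAlgebraicPart (n + 1) (b + 1) M z =
      (n - b) * kummerAlgebraicPart n (b + 1) (M + 1) z + kummerAlgebraicPart n b (M + 1) z := by
  have hpow : z ^ (-n : ℂ) = z * z ^ (-(n + 1) : ℂ) := by
    rw [← cpow_add_one_eq_mul_cpow hz, neg_add, neg_add_cancel_right]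
  have hGamma := one_div_Gamma_eq_self_mul_one_div_Gamma_add_one (b - n)
  have hsum := twoFZeroPartialSum_add_one_right M n (n - b) (-z)
  simp only [kummerAlgebraicPart, Nat.cast_add, Nat.cast_one, div_eq_mul_inv,
    add_sub_add_right_eq_sub]
  rw [show 1 + (n + 1 : ℂ) - (b + 1) = n - b + 1 by ring, show 1 + n - (b + 1) = n - b by ring,
    show 1 + n - b = n - b + 1 by ring, show b + 1 - n = b - n + 1 by ring, hGamma, hsum, hpow]
  field_simp
  ring

lemma kummerExponentialPart_one_add_one (b : ℂ) {z : ℂ} (hz : z ≠ 0) :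
    kummerExponentialPart 1 (b + 1) z = z⁻¹ * kummerExponentialPart 1 b z := by
  have hpow : z ^ (1 - b) = z * z ^ (1 - (b + 1)) := by
    rw [← cpow_add_one_eq_mul_cpow hz, ← sub_sub, sub_add_cancel]
  rw [kummerExponentialPart_one, kummerExponentialPart_one, hpow]
  field_simp

lemma kummerAlgebraicPart_one_add_one (b : ℂ) (M : ℕ) {z : ℂ} (hz : z ≠ 0) :
    kummerAlgebraicPart 1 (b + 1) (M + 1) z =
      z⁻¹ * (kummerAlgebraicPart 1 b M z - (Gamma b)⁻¹) := by
  have hGamma := one_div_Gamma_eq_self_mul_one_div_Gamma_add_one (b - 1)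
  have hsum := twoFZeroPartialSum_add_one_right M (1 - b) 0 (-z)
  rw [twoFZeroPartialSum_comm _ _ 0, twoFZeroPartialSum_succ_zero_left, zero_add] at hsum
  rw [sub_add_cancel] at hGamma
  simp only [kummerAlgebraicPart, Nat.cast_one, cpow_neg_one, twoFZeroPartialSum_comm _ 1,
    div_eq_mul_inv, add_sub_cancel_right]
  rw [show (1 : ℂ) + 1 - (b + 1) = 1 - b by ring, show (1 : ℂ) + 1 - b = 1 - b + 1 by ring,
    hGamma, hsum]
  field_simp
  ring

lemma kummerRemainder_one_add_one_succ (b : ℂ) (M : ℕ) {z : ℂ} (hz : z ≠ 0) :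
    kummerRemainder 1 (b + 1) (M + 1) z = z⁻¹ * kummerRemainder 1 b M z := by
  simp only [kummerRemainder, Nat.cast_one, regularizedKummer_one_left b z,
    kummerExponentialPart_one_add_one b hz, kummerAlgebraicPart_one_add_one b M hz]
  field_simp
  ring

lemma kummerRemainder_one_add_one_zero (b : ℂ) {z : ℂ} (hz : z ≠ 0) :
    kummerRemainder 1 (b + 1) 0 z = z⁻¹ * (kummerRemainder 1 b 0 z - (Gamma b)⁻¹) := by
  simp only [kummerRemainder, kummerAlgebraicPart, twoFZeroPartialSum, Finset.range_zero,
    Finset.sum_empty, Nat.cast_one, regularizedKummer_one_left b z,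
    kummerExponentialPart_one_add_one b hz]
  field_simp
  ring

lemma natCast_mul_kummerRemainder_succ {n : ℕ} (hn : 0 < n) (b : ℂ) (M : ℕ) {z : ℂ}
    (hz : z ≠ 0) :
    n * kummerRemainder (n + 1) (b + 1) M z =
      (n - b) * kummerRemainder n (b + 1) (M + 1) z + kummerRemainder n b (M + 1) z := by
  simp only [kummerRemainder, Nat.cast_add, Nat.cast_one]
  linear_combination mul_regularizedKummer_add_one_left n b z -
    natCast_mul_kummerExponentialPart_succ hn b hz - natCast_mul_kummerAlgebraicPart_succ n b M hz

lemma kummerRemainder_one_zero (b : ℂ) {x : ℝ} (hx : x ≠ 0) :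
    kummerRemainder 1 b 0 x =
      x ^ (1 - b) * cexp x * (regularizedLowerGamma (b - 1) x - 1) := by
  have hx0 := ofReal_ne_zero.2 hx
  have hpow : (x : ℂ) ^ (1 - b) * x ^ (b - 1) = 1 := by
    rw [← cpow_add _ _ hx0, sub_add_sub_cancel, sub_self, cpow_zero]
  have hexp : cexp x * cexp (-x) = 1 := by rw [← exp_add, add_neg_cancel, exp_zero]
  simp only [kummerRemainder, kummerAlgebraicPart, twoFZeroPartialSum, Finset.range_zero,
    Finset.sum_empty, kummerExponentialPart_one, regularizedLowerGamma, sub_add_cancel,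
    Nat.cast_one]
  linear_combination -(regularizedKummer 1 b x * cexp x * cexp (-x) * hpow +
    regularizedKummer 1 b x * hexp)

lemma norm_kummerRemainder_one_zero_le {b : ℂ} (hb : b.re ≤ 2) {x : ℝ} (hx : 0 < x) :
    ‖kummerRemainder 1 b 0 x‖ ≤ ‖(Gamma (b - 1))⁻¹‖ * x ^ (-1 : ℝ) := by
  have htail := norm_regularizedLowerGamma_sub_one_le (s := b - 1)
    (by rw [sub_re, one_re]; linarith) hx
  have hpow : x ^ (1 - b.re) * x ^ (b.re - 1 - 1) = x ^ (-1 : ℝ) := by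
    rw [← Real.rpow_add hx]
    ring_nf
  have hexp : Real.exp x * Real.exp (-x) = 1 := by
    rw [← Real.exp_add, add_neg_cancel, Real.exp_zero]
  calc ‖kummerRemainder 1 b 0 x‖
      = x ^ (1 - b.re) * Real.exp x * ‖regularizedLowerGamma (b - 1) x - 1‖ := by
        rw [kummerRemainder_one_zero b hx.ne', norm_mul, norm_mul, norm_cpow_eq_rpow_re_of_pos hx,
          norm_exp, sub_re, one_re, ofReal_re]
    _ ≤ x ^ (1 - b.re) * Real.exp x *
        (x ^ (b.re - 1 - 1) * ‖(Gamma (b - 1))⁻¹‖ * Real.exp (-x)) := by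
        gcongr
        simpa using htail
    _ = ‖(Gamma (b - 1))⁻¹‖ * x ^ (-1 : ℝ) := by
        rw [← hpow]
        linear_combination ‖(Gamma (b - 1))⁻¹‖ * x ^ (1 - b.re) * x ^ (b.re - 1 - 1) * hexp

lemma kummerRemainder_one_zero_isBigO (b : ℂ) :
    (fun x : ℝ ↦ kummerRemainder 1 b 0 x) =O[atTop] fun x : ℝ ↦ x ^ (-1 : ℝ) := by
  obtain ⟨k, hk⟩ := exists_nat_ge (b.re - 2)
  induction k generalizing b with
  | zero =>
    refine .of_bound ‖(Gamma (b - 1))⁻¹‖ ?_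
    filter_upwards [eventually_gt_atTop 0] with x hx
    rw [Real.norm_of_nonneg (by positivity)]
    exact norm_kummerRemainder_one_zero_le (by simpa using hk) hx
  | succ k ih =>
    have hprev := ih (b - 1) (by push_cast at hk; rw [sub_re, one_re]; linarith)
    have hbounded := (hprev.trans_tendsto (tendsto_rpow_neg_atTop one_pos)).isBigO_one ℝ
    have hconst := isBigO_const_one ℝ (Gamma (b - 1))⁻¹ (atTop : Filter ℝ)
    have hstep := isBigO_rpow_inv_mul (r := 0) (by simpa using hbounded.sub hconst)
    rw [zero_sub] at hstep
    refine hstep.congr' ?_ .rfl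
    filter_upwards [eventually_ne_atTop 0] with x hx
    simpa using (kummerRemainder_one_add_one_zero (b - 1) (ofReal_ne_zero.2 hx)).symm

lemma kummerRemainder_one_isBigO (b : ℂ) (M : ℕ) :
    (fun x : ℝ ↦ kummerRemainder 1 b M x) =O[atTop] fun x : ℝ ↦ x ^ (-1 - M : ℝ) := by
  induction M generalizing b with
  | zero => simpa using kummerRemainder_one_zero_isBigO b
  | succ M ih =>
    have hstep := isBigO_rpow_inv_mul (ih (b - 1))
    rw [sub_sub, ← Nat.cast_add_one] at hstep
    refine hstep.congr' ?_ .rfl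
    filter_upwards [eventually_ne_atTop 0] with x hx
    simpa using (kummerRemainder_one_add_one_succ (b - 1) M (ofReal_ne_zero.2 hx)).symm

theorem kummer_positive_integer_a_general (n : ℕ) (hn : 0 < n) (b : ℂ) (M : ℕ) :
    (fun x : ℝ ↦ kummerRemainder n b M x) =O[atTop] fun x : ℝ ↦ x ^ (-(n : ℝ) - M) := by
  induction n, hn using Nat.le_induction generalizing b M with
  | base => simpa using kummerRemainder_one_isBigO b M
  | succ n hn ih =>
    have hn0 : (n : ℂ) ≠ 0 := Nat.cast_ne_zero.2 (Nat.pos_iff_ne_zero.1 hn)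
    have hexponent : -(n : ℝ) - (M + 1 : ℕ) = -(n + 1 : ℕ) - M := by push_cast; ring
    have hstep := (((ih b (M + 1)).const_mul_left (n - (b - 1))).add
      (ih (b - 1) (M + 1))).const_mul_left (n : ℂ)⁻¹
    rw [hexponent] at hstep
    refine hstep.congr' ?_ .rfl
    filter_upwards [eventually_ne_atTop 0] with x hx
    have hcontig := natCast_mul_kummerRemainder_succ hn (b - 1) M (ofReal_ne_zero.2 hx)
    rw [sub_add_cancel] at hcontig
    rw [← hcontig, inv_mul_cancel_left₀ hn0]

/-- For a positive integer first parameter `a = n`, the exponential expansion of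
`₁F₁(n; b; x)` terminates after `n` terms, and the subdominant algebraic expansion on the
Stokes line `arg z = 0` carries the multiplier `(−1)ⁿ = cos(πn)` with no half-integer-power
corrections:
`(1/Γ(b)) ₁F₁(n;b;x) − (x^{n−b} eˣ/(n−1)!) ∑_{j<n} (b−n)_j (1−n)_j/(j! xʲ)
  − ((−1)ⁿ x^{−n}/Γ(b−n)) ∑_{j<M} (−1)ʲ (n)_j (1+n−b)_j/(j! xʲ) = O(x^{−n−M})`. -/
theorem kummer_positive_integer_a (n : ℕ) (hn : 0 < n) (b : ℂ)
    (hb : ∀ m : ℕ, b ≠ -(m : ℂ)) (hbn : ∀ m : ℕ, b - n ≠ -(m : ℂ)) (M : ℕ) (hM : 0 < M) :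
    (fun x : ℝ =>
        (1 / Complex.Gamma b) * kummer (n : ℂ) b (x : ℂ) -
          ((x : ℂ) ^ ((n : ℂ) - b) * Complex.exp (x : ℂ) / (n - 1).factorial) *
            ∑ j ∈ Finset.range n,
              (ascPochhammer ℂ j).eval (b - (n : ℂ)) * (ascPochhammer ℂ j).eval (1 - (n : ℂ)) /
                (j.factorial * (x : ℂ) ^ j) -
          ((-1) ^ n * (x : ℂ) ^ (-(n : ℂ)) / Complex.Gamma (b - n)) *
            ∑ j ∈ Finset.range M,
              (-1) ^ j * (ascPochhammer ℂ j).eval (n : ℂ) *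
                (ascPochhammer ℂ j).eval (1 + (n : ℂ) - b) / (j.factorial * (x : ℂ) ^ j))
      =O[atTop] fun x : ℝ => x ^ (-(n : ℝ) - M) := by
  simp only [one_div_Gamma_mul_kummer _ _ hb, ← twoFZeroPartialSum_neg]
  exact kummer_positive_integer_a_general n hn b M
end
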